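/- For every n ≥ 1 and r ≥ 1, the second homotopy group of the character variety X_r(SU(n)) is trivial: π₂(X_r(SU(n))) = 0. -/

import Mathlib

/-!
The proof covers `X_r(SU(n))` by open sets to which a nerve-type criterion applies.

**The criterion** (`subsingleton_pi_two_of_cover`). Let a space have an open cover whose members are
`2`-connected, whose double intersections are `1`-connected and whose quadruple intersections are
`0`-connected, with a point `y` common to all members. Then `π₂` vanishes: subdivide a map of a
square finely enough that each small square goes into a member of the cover, and construct a
homotopy to the constant map `y` over the vertices, then the edges, then the squares of the grid.
Near the boundary the homotopy is prescribed by a path to `y`, so that the free homotopy becomes one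
relative to the boundary after a reparametrization.

**The cover of `SU(n)`.** For `0 ≤ k < n` let `logSet n k` be the set of `exp (2πiH)`, for Hermitian
`H` of trace `k` with spectrum in an open interval of length `1`. Such an `H` is unique and depends
continuously on the matrix; these sets are open, invariant under conjugation, cover `SU(n)`, and
each contracts equivariantly, `H` being contracted linearly to the scalar matrix `k / n`. For a
matrix in `logSet n k ∩ logSet n l`, `k ≤ l`, the two logarithms differ by a projection of rank
`l - k`, and this makes the intersection homotopy equivalent to a Grassmannian, which is simply
connected (`isSimplyConnected_logSet_inter`, `simplyConnectedSpace_Gr`). All nonempty intersections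
are path connected (`isPathConnected_iInter_logSet`), and a matrix whose eigenvalues are equally
spaced on the circle lies in all the sets.

**The cover of `X_r(SU(n))`** (`chart`). It consists of the images of the products of `r` of the sets
`logSet n k`. Since these products are invariant, intersections of images are images of
intersections. Equivariant contractions descend, and so does path connectedness. Simple connectedness
descends to the quotient (`isSimplyConnected_image_qm`) because orbits are path connected and each
orbit has an invariant neighbourhood with an equivariant deformation onto the orbit (`exists_tube`),
so that loops in the quotient lift up to homotopy. The deformation retraction of the tube moves
a tuple to the nearest point of the orbit; that this point is unique near the orbit comes from the
expansion of conjugates to second order (`unique_nearest`).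
-/

/-- The special unitary group `SU(n)`, as the subgroup of the unitary group `U(n)`
consisting of the unitary matrices of determinant `1`. -/
def SUsubgroup (n : ℕ) : Subgroup ↥(Matrix.unitaryGroup (Fin n) ℂ) :=
  MonoidHom.ker (Matrix.detMonoidHom.comp (Matrix.unitaryGroup (Fin n) ℂ).subtype)

/-- The special unitary group `SU(n)` of `n × n` complex unitary matrices of determinant `1`. -/
abbrev SUn (n : ℕ) : Type := ↥(SUsubgroup n)

/-- The character variety `X_r(SU(n))`: the quotient topological space of `SU(n)^r`
by the diagonal conjugation action `g • (A₁, …, A_r) = (g A₁ g⁻¹, …, g A_r g⁻¹)`. -/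
abbrev CharVarSU (n r : ℕ) : Type :=
  Quotient (MulAction.orbitRel (ConjAct (SUn n)) (Fin r → SUn n))

open Topology unitInterval Set Metric

/-! ### Extending maps from spheres to balls -/

/-- `FillsBall E V`: every map from the unit sphere of `E` into `V` extends to a map from the closed
unit ball into `V`. As product spaces carry the sup norm, for `E = ℝ`, `ℝ × ℝ`, `ℝ × ℝ × ℝ` the ball
is a cube of dimension `1`, `2`, `3`, so that this is a form of `0`-, `1`-, `2`-connectedness. -/
def FillsBall (E : Type*) [NormedAddCommGroup E] {X : Type*} [TopologicalSpace X]
    (V : Set X) : Prop :=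
  ∀ g : E → X, ContinuousOn g (sphere 0 1) → MapsTo g (sphere 0 1) V →
    ∃ G : E → X, ContinuousOn G (closedBall 0 1) ∧ MapsTo G (closedBall 0 1) V ∧
      EqOn G g (sphere 0 1)

section Fill
variable {X : Type*} [TopologicalSpace X] {V : Set X}

/-- A map on the sphere is coned off, by following a contraction along radii. -/
theorem fillsBall_of_contractible {E : Type*} [NormedAddCommGroup E] [NormedSpace ℝ E]
    [ContractibleSpace V] : FillsBall E V := by
  intro g hg hgV
  obtain ⟨v0, ⟨H⟩⟩ := id_nullhomotopic V
  -- the cone construction: the inner half of the ball is sent to the end of the contraction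
  let g' : sphere (0 : E) 1 → V := fun z => ⟨g z, hgV z.2⟩
  have hg' : Continuous g' := by
    refine Continuous.subtype_mk ?_ _
    exact continuousOn_iff_continuous_domRestrict.1 hg
  classical
  let nz : {z : E // z ∈ closedBall (0 : E) 1 ∧ 1 / 2 ≤ ‖z‖} → sphere (0 : E) 1 := fun z =>
    ⟨‖z.1‖⁻¹ • z.1, by
      have : (0 : ℝ) < ‖z.1‖ := by linarith [z.2.2]
      rw [mem_sphere_zero_iff_norm, norm_smul, norm_inv, norm_norm, inv_mul_cancel₀ this.ne']⟩
  have hnz : Continuous nz := by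
    refine Continuous.subtype_mk ?_ _
    refine Continuous.smul (Continuous.inv₀ (by fun_prop) ?_) (by fun_prop)
    intro z
    have : (0 : ℝ) < ‖z.1‖ := by linarith [z.2.2]
    exact this.ne'
  let Gout : {z : E // z ∈ closedBall (0 : E) 1 ∧ 1 / 2 ≤ ‖z‖} → V := fun z =>
    H (projIcc 0 1 zero_le_one (2 - 2 * ‖z.1‖), g' (nz z))
  have hGout : Continuous Gout := by
    refine H.continuous.comp (Continuous.prodMk (continuous_projIcc.comp (by fun_prop)) ?_)
    exact hg'.comp hnz
  let G : E → X := fun z =>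
    if h : z ∈ closedBall (0 : E) 1 ∧ 1 / 2 ≤ ‖z‖ then (Gout ⟨z, h⟩ : X) else v0
  have hB : ContinuousOn G {z : E | z ∈ closedBall (0 : E) 1 ∧ 1 / 2 ≤ ‖z‖} := by
    rw [continuousOn_iff_continuous_domRestrict]
    have : Set.domRestrict {z : E | z ∈ closedBall (0 : E) 1 ∧ 1 / 2 ≤ ‖z‖} G
        = fun z => ((Gout z : V) : X) := by
      funext z
      exact dif_pos z.2
    rw [this]
    exact continuous_subtype_val.comp hGout
  have hGin : ∀ z : E, ‖z‖ ≤ 1 / 2 → G z = v0 := by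
    intro z hz
    simp only [G]
    split_ifs with h
    · have : projIcc (0 : ℝ) 1 zero_le_one (2 - 2 * ‖z‖) = 1 := by
        have : (2 - 2 * ‖z‖) = 1 := by linarith [h.2]
        rw [this]; exact projIcc_right _
      simp only [Gout, this]
      simp
    · rfl
  have hA : ContinuousOn G {z : E | ‖z‖ ≤ 1 / 2} :=
    (continuousOn_const (c := (v0 : X))).congr fun z hz => hGin z hz
  refine ⟨G, ?_, ?_, ?_⟩
  · refine (hA.union_of_isClosed hB ?_ ?_).mono ?_
    · exact isClosed_le continuous_norm continuous_const
    · exact isClosed_closedBall.inter (isClosed_le continuous_const continuous_norm)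
    · intro z hz
      rcases le_total ‖z‖ (1 / 2) with h | h
      · exact Or.inl h
      · exact Or.inr ⟨hz, h⟩
  · intro z hz
    simp only [G]
    split_ifs with h
    · exact Subtype.coe_prop _
    · exact v0.2
  · intro z hz
    have hz1 : ‖z‖ = 1 := by simpa using hz
    have h : z ∈ closedBall (0 : E) 1 ∧ 1 / 2 ≤ ‖z‖ :=
      ⟨sphere_subset_closedBall hz, by rw [hz1]; norm_num⟩
    simp only [G]
    rw [dif_pos h]
    simp [Gout, g', nz, hz1]

theorem fillsBall_real_of_isPathConnected (hV : IsPathConnected V) : FillsBall ℝ V := by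
  intro g _ hgV
  have h1 : g (-1) ∈ V := hgV (by simp)
  have h2 : g 1 ∈ V := hgV (by simp)
  obtain ⟨γ, hγ⟩ := hV.joinedIn _ h1 _ h2
  refine ⟨fun t => γ.extend ((t + 1) / 2), ?_, ?_, ?_⟩
  · exact (γ.continuous_extend.comp (by fun_prop)).continuousOn
  · intro t _
    exact hγ _
  · intro t ht
    have : t = 1 ∨ t = -1 := by
      have : |t| = 1 := by simpa using ht
      exact eq_or_eq_neg_of_abs_eq this
    rcases this with rfl | rfl <;> simp

/-- The loop running around the unit circle of the sup norm on `ℝ × ℝ`. -/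
noncomputable def squareLoop (t : ℝ) : ℝ × ℝ :=
  ‖(Real.cos (2 * Real.pi * t), Real.sin (2 * Real.pi * t))‖⁻¹ •
    (Real.cos (2 * Real.pi * t), Real.sin (2 * Real.pi * t))

theorem cos_sin_norm_pos (t : ℝ) : 0 < ‖(Real.cos t, Real.sin t)‖ := by
  rw [norm_pos_iff]
  intro h
  have h1 := congrArg Prod.fst h
  have h2 := congrArg Prod.snd h
  have := Real.cos_sq_add_sin_sq t
  simp at h1 h2
  rw [h1, h2] at this
  norm_num at this

theorem continuous_squareLoop : Continuous squareLoop := by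
  unfold squareLoop
  refine Continuous.smul (Continuous.inv₀ (by fun_prop) fun t => (cos_sin_norm_pos _).ne')
    (by fun_prop)

theorem norm_squareLoop (t : ℝ) : ‖squareLoop t‖ = 1 := by
  unfold squareLoop
  rw [norm_smul, norm_inv, norm_norm, inv_mul_cancel₀ (cos_sin_norm_pos _).ne']

theorem squareLoop_zero_one : squareLoop 0 = squareLoop 1 := by
  simp [squareLoop]

theorem squareLoop_surj (z : ℝ × ℝ) (hz : ‖z‖ = 1) : ∃ t ∈ Icc (0 : ℝ) 1, squareLoop t = z := by
  set w : ℂ := ⟨z.1, z.2⟩ with hw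
  have hw0 : w ≠ 0 := by
    intro h
    have h1 := congrArg Complex.re h
    have h2 := congrArg Complex.im h
    have : z = 0 := Prod.ext h1 h2
    simp [this] at hz
  obtain ⟨θ, hθ, hre, him⟩ : ∃ θ : ℝ, (0 ≤ θ ∧ θ ≤ 2 * Real.pi) ∧
      z.1 = ‖w‖ * Real.cos θ ∧ z.2 = ‖w‖ * Real.sin θ := by
    have hc : z.1 = ‖w‖ * Real.cos w.arg := by
      rw [Complex.cos_arg hw0]; field_simp [norm_ne_zero_iff.2 hw0]; rfl
    have hs : z.2 = ‖w‖ * Real.sin w.arg := by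
      rw [Complex.sin_arg]; field_simp [norm_ne_zero_iff.2 hw0]; rfl
    have h1 := Complex.neg_pi_lt_arg w
    have h2 := Complex.arg_le_pi w
    rcases le_total 0 w.arg with h | h
    · exact ⟨w.arg, ⟨h, by linarith [Real.pi_pos]⟩, hc, hs⟩
    · refine ⟨w.arg + 2 * Real.pi, ⟨by linarith, by linarith⟩, ?_, ?_⟩
      · rw [Real.cos_add_two_pi]; exact hc
      · rw [Real.sin_add_two_pi]; exact hs
  refine ⟨θ / (2 * Real.pi), ⟨by have := Real.pi_pos; exact div_nonneg hθ.1 (by linarith), ?_⟩, ?_⟩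
  · rw [div_le_one (by linarith [Real.pi_pos])]; exact hθ.2
  · unfold squareLoop
    have : 2 * Real.pi * (θ / (2 * Real.pi)) = θ := by field_simp
    rw [this]
    have hzz : z = ‖w‖ • ((Real.cos θ, Real.sin θ) : ℝ × ℝ) := Prod.ext (by simpa using hre) (by simpa using him)
    have hn : ‖w‖ * ‖((Real.cos θ, Real.sin θ) : ℝ × ℝ)‖ = 1 := by
      rw [← hz]; conv_rhs => rw [hzz, norm_smul, norm_norm]
    rw [hzz]
    congr 1
    exact (eq_inv_of_mul_eq_one_left hn).symm

theorem squareLoop_inj {s t : ℝ} (hs : s ∈ Icc (0 : ℝ) 1) (ht : t ∈ Icc (0 : ℝ) 1)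
    (h : squareLoop s = squareLoop t) : s = t ∨ (s = 0 ∧ t = 1) ∨ (s = 1 ∧ t = 0) := by
  have hpi := Real.pi_pos
  unfold squareLoop at h
  set a := ‖(Real.cos (2 * Real.pi * s), Real.sin (2 * Real.pi * s))‖ with ha
  set b := ‖(Real.cos (2 * Real.pi * t), Real.sin (2 * Real.pi * t))‖ with hb
  have ha0 : 0 < a⁻¹ := inv_pos.2 (cos_sin_norm_pos _)
  have hb0 : 0 < b⁻¹ := inv_pos.2 (cos_sin_norm_pos _)
  have h1 := congrArg Prod.fst h
  have h2 := congrArg Prod.snd h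
  simp only [Prod.smul_fst, Prod.smul_snd, smul_eq_mul] at h1 h2
  have hab : a⁻¹ = b⁻¹ := by
    have e1 := Real.cos_sq_add_sin_sq (2 * Real.pi * s)
    have e2 := Real.cos_sq_add_sin_sq (2 * Real.pi * t)
    have : a⁻¹ ^ 2 = b⁻¹ ^ 2 := by
      calc a⁻¹ ^ 2 = a⁻¹ ^ 2 * (Real.cos (2 * Real.pi * s) ^ 2 + Real.sin (2 * Real.pi * s) ^ 2) := by
            rw [e1, mul_one]
        _ = (a⁻¹ * Real.cos (2 * Real.pi * s)) ^ 2 + (a⁻¹ * Real.sin (2 * Real.pi * s)) ^ 2 := by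
            ring
        _ = b⁻¹ ^ 2 * (Real.cos (2 * Real.pi * t) ^ 2 + Real.sin (2 * Real.pi * t) ^ 2) := by
            rw [h1, h2]; ring
        _ = b⁻¹ ^ 2 := by rw [e2, mul_one]
    exact (pow_left_inj₀ ha0.le hb0.le two_ne_zero).1 this
  rw [hab] at h1 h2
  have hc := mul_left_cancel₀ hb0.ne' h1
  have hsn := mul_left_cancel₀ hb0.ne' h2
  have hang : ((2 * Real.pi * s : ℝ) : Real.Angle) = ((2 * Real.pi * t : ℝ) : Real.Angle) :=
    Real.Angle.cos_sin_inj hc hsn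
  rw [Real.Angle.angle_eq_iff_two_pi_dvd_sub] at hang
  obtain ⟨k, hk⟩ := hang
  have hk' : s - t = k := by
    have : 2 * Real.pi * (s - t) = 2 * Real.pi * k := by linarith
    exact mul_left_cancel₀ (by positivity) this
  have hk1 : (k : ℝ) ≤ 1 := by rw [← hk']; linarith [hs.2, ht.1]
  have hk2 : (-1 : ℝ) ≤ k := by rw [← hk']; linarith [hs.1, ht.2]
  have hk1' : k ≤ 1 := by exact_mod_cast hk1
  have hk2' : -1 ≤ k := by exact_mod_cast hk2
  have : k = -1 ∨ k = 0 ∨ k = 1 := by omega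
  rcases this with rfl | rfl | rfl
  · right; left
    push_cast at hk'
    constructor <;> linarith [hs.1, hs.2, ht.1, ht.2]
  · left; push_cast at hk'; linarith
  · right; right
    push_cast at hk'
    constructor <;> linarith [hs.1, hs.2, ht.1, ht.2]

/-- A map on the unit circle of the sup norm is a loop, and a contraction of that loop, followed along
radii, gives a filling. -/
theorem fillsBall_plane_of_simplyConnected (hV : IsSimplyConnected V) : FillsBall (ℝ × ℝ) V := by
  intro g hg hgV
  have := hV.simplyConnectedSpace
  have hmem : ∀ t, squareLoop t ∈ sphere (0 : ℝ × ℝ) 1 := fun t => by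
    rw [mem_sphere_zero_iff_norm]; exact norm_squareLoop t
  let x0 : V := ⟨g (squareLoop 0), hgV (hmem _)⟩
  let ℓ : Path x0 x0 :=
    { toFun := fun t => ⟨g (squareLoop t), hgV (hmem _)⟩
      continuous_toFun := by
        refine Continuous.subtype_mk ?_ _
        exact hg.comp_continuous (continuous_squareLoop.comp continuous_subtype_val) fun t => hmem _
      source' := by simp [x0]
      target' := by simp [x0, squareLoop_zero_one] }
  obtain ⟨H⟩ := SimplyConnectedSpace.paths_homotopic ℓ (Path.refl x0)
  -- polar coordinates exhibit the square as a quotient of `I × I`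
  let Φ : C(I × I, closedBall (0 : ℝ × ℝ) 1) :=
    { toFun := fun p => ⟨(1 - (p.1 : ℝ)) • squareLoop p.2, by
        have := p.1.2
        rw [mem_closedBall_zero_iff, norm_smul, norm_squareLoop, mul_one, Real.norm_eq_abs, abs_le]
        constructor <;> linarith [this.1, this.2]⟩
      continuous_toFun := by
        refine Continuous.subtype_mk ?_ _
        have := continuous_squareLoop
        fun_prop }
  have hΦn : ∀ p, ‖(Φ p : ℝ × ℝ)‖ = 1 - p.1 := by
    intro p
    change ‖(1 - (p.1 : ℝ)) • squareLoop p.2‖ = _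
    rw [norm_smul, norm_squareLoop, mul_one, Real.norm_eq_abs, abs_of_nonneg]
    linarith [p.1.2.2]
  have hsurj : Function.Surjective Φ := by
    rintro ⟨z, hz⟩
    rw [mem_closedBall_zero_iff] at hz
    by_cases h0 : z = 0
    · refine ⟨(1, 0), Subtype.ext ?_⟩
      simp [Φ, h0]
    · have hn : 0 < ‖z‖ := norm_pos_iff.2 h0
      obtain ⟨t, ht, hzt⟩ := squareLoop_surj (‖z‖⁻¹ • z)
        (by rw [norm_smul, norm_inv, norm_norm, inv_mul_cancel₀ hn.ne'])
      refine ⟨(⟨1 - ‖z‖, ⟨by linarith, by linarith⟩⟩, ⟨t, ht⟩), Subtype.ext ?_⟩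
      change (1 - (1 - ‖z‖)) • squareLoop t = z
      rw [hzt, sub_sub_cancel, smul_smul, mul_inv_cancel₀ hn.ne', one_smul]
  have hq : IsQuotientMap Φ := Φ.continuous.isClosedMap.isQuotientMap Φ.continuous hsurj
  let Hc : C(I × I, V) := ⟨fun p => H p, H.continuous⟩
  have hfac : Function.FactorsThrough Hc Φ := by
    rintro ⟨s, t⟩ ⟨s', t'⟩ h
    have hs : s = s' := by
      have := congrArg (fun z : closedBall (0 : ℝ × ℝ) 1 => ‖(z : ℝ × ℝ)‖) h
      simp only [hΦn] at this
      exact Subtype.ext (by linarith)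
    subst hs
    change H (s, t) = H (s, t')
    by_cases h1 : s = 1
    · subst h1; simp
    · have hne : (1 - (s : ℝ)) ≠ 0 := fun h => h1 (Subtype.ext (by simpa using (by linarith : (s : ℝ) = 1)))
      have h2 : (1 - (s : ℝ)) • squareLoop t = (1 - (s : ℝ)) • squareLoop t' := congrArg Subtype.val h
      have h3 := smul_right_injective (ℝ × ℝ) hne h2
      rcases squareLoop_inj t.2 t'.2 h3 with h | ⟨h, h'⟩ | ⟨h, h'⟩
      · rw [Subtype.ext h]
      · have e1 : t = 0 := Subtype.ext h
        have e2 : t' = 1 := Subtype.ext h'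
        subst e1 e2; simp
      · have e1 : t = 1 := Subtype.ext h
        have e2 : t' = 0 := Subtype.ext h'
        subst e1 e2; simp
  let L := hq.lift Hc hfac
  have hL : ∀ p, L (Φ p) = H p := fun p => DFunLike.congr_fun (hq.lift_comp Hc hfac) p
  classical
  refine ⟨fun z => if h : z ∈ closedBall (0 : ℝ × ℝ) 1 then (L ⟨z, h⟩ : X) else x0, ?_, ?_, ?_⟩
  · rw [continuousOn_iff_continuous_domRestrict]
    have : Set.domRestrict (closedBall (0 : ℝ × ℝ) 1)
        (fun z => if h : z ∈ closedBall (0 : ℝ × ℝ) 1 then (L ⟨z, h⟩ : X) else x0)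
        = fun z => ((L z : V) : X) := by
      funext z
      simp only [Set.domRestrict_apply]
      rw [dif_pos z.2]
    rw [this]
    exact continuous_subtype_val.comp L.continuous
  · intro z hz
    simp only [dif_pos hz]
    exact Subtype.coe_prop _
  · intro z hz
    have hz' := sphere_subset_closedBall hz
    simp only [dif_pos hz']
    obtain ⟨t, ht, hzt⟩ := squareLoop_surj z (by simpa using hz)
    have : (⟨z, hz'⟩ : closedBall (0 : ℝ × ℝ) 1) = Φ (0, ⟨t, ht⟩) :=
      Subtype.ext (by simp [Φ, hzt])
    rw [this, hL]
    simp [ℓ, hzt]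

end Fill

/-! ### Gluing along slabs -/

section Slab
variable {X : Type*} [TopologicalSpace X]

/-- Maps on the slabs `[a, a + 1] × S` that agree on the common faces glue. -/
theorem exists_glue_slabs {T : Type*} [TopologicalSpace T] {S : Set T} (hS : IsClosed S)
    (G : ℤ → ℝ × T → X)
    (hG : ∀ a : ℤ, ContinuousOn (G a) (Icc (a : ℝ) (a + 1) ×ˢ S))
    (hface : ∀ (a : ℤ), ∀ z ∈ S, G a ((a : ℝ) + 1, z) = G (a + 1) ((a : ℝ) + 1, z)) :
    ∃ F : ℝ × T → X, ContinuousOn F (univ ×ˢ S) ∧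
      ∀ a : ℤ, EqOn F (G a) (Icc (a : ℝ) (a + 1) ×ˢ S) := by
  have key : ∀ a : ℤ, EqOn (fun p : ℝ × T => G ⌊p.1⌋ p) (G a) (Icc (a : ℝ) (a + 1) ×ˢ S) := by
    rintro a ⟨u, z⟩ ⟨⟨h1, h2⟩, hz⟩
    simp only at h1 h2 hz ⊢
    rcases h2.lt_or_eq with h | h
    · rw [Int.floor_eq_iff.2 ⟨h1, h⟩]
    · subst h
      have : ⌊(a : ℝ) + 1⌋ = a + 1 := by
        rw [Int.floor_eq_iff]; push_cast; constructor <;> linarith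
      rw [this]
      exact (hface a z hz).symm
  refine ⟨fun p => G ⌊p.1⌋ p, ?_, key⟩
  have hlf : LocallyFinite fun a : ℤ => Icc (a : ℝ) (a + 1) ×ˢ S := by
    intro p
    refine ⟨Ioo (p.1 - 1) (p.1 + 1) ×ˢ univ, prod_mem_nhds (Ioo_mem_nhds (by linarith) (by linarith))
      Filter.univ_mem, (Set.finite_Icc (⌊p.1⌋ - 3) (⌊p.1⌋ + 3)).subset ?_⟩
    rintro a ⟨q, ⟨⟨h1, h2⟩, _⟩, ⟨h3, h4⟩, _⟩
    have h5 := Int.floor_le p.1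
    have h6 := Int.lt_floor_add_one p.1
    constructor
    · have : (⌊p.1⌋ : ℝ) - 3 ≤ a := by linarith
      exact_mod_cast this
    · have : (a : ℝ) ≤ ⌊p.1⌋ + 3 := by linarith
      exact_mod_cast this
  have := hlf.continuousOn_iUnion (g := fun p : ℝ × T => G ⌊p.1⌋ p)
    (fun a => isClosed_Icc.prod hS) fun a => (hG a).congr (key a)
  refine this.mono ?_
  rintro ⟨u, z⟩ ⟨_, hz⟩
  exact mem_iUnion.2 ⟨⌊u⌋, ⟨⟨Int.floor_le u, (Int.lt_floor_add_one u).le⟩, hz⟩⟩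

/-- The inductive step of the grid argument: a map on `ℝ × ∂B` that sends `[a, a + 1] × ∂B` to
`V a` extends over `ℝ × B`, first over the walls `{a} × B` and then over the cells
`[a, a + 1] × B`; outside `(0, N)` the extension can be prescribed by a map `P` on `B`. -/
theorem exists_extend_slabs {E : Type*} [NormedAddCommGroup E] [NormedSpace ℝ E]
    (V : ℤ → Set X) (N : ℤ)
    (h1 : ∀ a, FillsBall E (V (a - 1) ∩ V a)) (h2 : ∀ a, FillsBall (ℝ × E) (V a))
    (G : ℝ × E → X) (hG : ContinuousOn G (univ ×ˢ sphere 0 1))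
    (hGV : ∀ a : ℤ, MapsTo G (Icc (a : ℝ) (a + 1) ×ˢ sphere 0 1) (V a))
    (P : E → X) (hP : ContinuousOn P (closedBall 0 1))
    (hPG : ∀ u : ℝ, u ≤ 0 ∨ N ≤ u → ∀ z ∈ sphere (0 : E) 1, G (u, z) = P z)
    (hPV : ∀ a : ℤ, a ≤ 0 ∨ N - 1 ≤ a → MapsTo P (closedBall 0 1) (V a)) :
    ∃ G' : ℝ × E → X, ContinuousOn G' (univ ×ˢ closedBall 0 1) ∧
      (∀ a : ℤ, MapsTo G' (Icc (a : ℝ) (a + 1) ×ˢ closedBall 0 1) (V a)) ∧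
      EqOn G' G (univ ×ˢ sphere 0 1) ∧
      ∀ u : ℝ, u ≤ 0 ∨ N ≤ u → ∀ z ∈ closedBall (0 : E) 1, G' (u, z) = P z := by
  have hlines : ∀ a : ℤ, ∃ L : E → X, ContinuousOn L (closedBall 0 1) ∧
      MapsTo L (closedBall 0 1) (V (a - 1) ∩ V a) ∧
      (∀ z ∈ sphere (0 : E) 1, L z = G (a, z)) ∧
      (a ≤ 0 ∨ N ≤ a → EqOn L P (closedBall 0 1)) := by
    intro a
    by_cases ha : a ≤ 0 ∨ N ≤ a
    · refine ⟨P, hP, fun z hz => ⟨hPV _ (by omega) hz, hPV _ (by omega) hz⟩, fun z hz => ?_,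
        fun _ => eqOn_refl _ _⟩
      refine (hPG _ ?_ z hz).symm
      rcases ha with h | h
      · left; exact_mod_cast h
      · right; exact_mod_cast h
    · obtain ⟨L, hL1, hL2, hL3⟩ := h1 a (fun z => G (a, z))
        (hG.comp (by fun_prop) fun z hz => ⟨mem_univ _, hz⟩)
        (fun z hz => by
          refine ⟨hGV (a - 1) ⟨⟨?_, ?_⟩, hz⟩, hGV a ⟨⟨?_, ?_⟩, hz⟩⟩ <;> push_cast <;> linarith)
      exact ⟨L, hL1, hL2, hL3, fun h => absurd h ha⟩
  choose L hLc hLV hLG hLP using hlines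
  have hcubes : ∀ a : ℤ, ∃ C : ℝ × E → X, ContinuousOn C (closedBall 0 1) ∧
      MapsTo C (closedBall 0 1) (V a) ∧
      (∀ t ∈ Icc (-1 : ℝ) 1, ∀ z ∈ sphere (0 : E) 1, C (t, z) = G (a + (t + 1) / 2, z)) ∧
      (∀ z ∈ closedBall (0 : E) 1, C (-1, z) = L a z) ∧
      (∀ z ∈ closedBall (0 : E) 1, C (1, z) = L (a + 1) z) ∧
      (a < 0 ∨ N ≤ a → ∀ t, ∀ z ∈ closedBall (0 : E) 1, C (t, z) = P z) := by
    intro a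
    by_cases ha : a < 0 ∨ N ≤ a
    · refine ⟨fun p => P p.2, ?_, ?_, ?_, ?_, ?_, ?_⟩
      · refine hP.comp continuousOn_snd ?_
        intro p hp
        rw [mem_closedBall_zero_iff] at hp ⊢
        exact (norm_snd_le p).trans hp
      · intro p hp
        refine hPV a (by omega) ?_
        rw [mem_closedBall_zero_iff] at hp ⊢
        exact (norm_snd_le p).trans hp
      · intro t ht z hz
        refine (hPG _ ?_ z hz).symm
        rcases ha with h | h
        · left
          have : (a : ℝ) + 1 ≤ 0 := by exact_mod_cast h
          linarith [ht.2]
        · right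
          have : (N : ℝ) ≤ a := by exact_mod_cast h
          linarith [ht.1]
      · intro z hz
        exact (hLP a (by omega) hz).symm
      · intro z hz
        exact (hLP (a + 1) (by omega) hz).symm
      · intro _ t z _; rfl
    · classical
      let g : ℝ × E → X := fun p => if ‖p.2‖ = 1 then G (a + (p.1 + 1) / 2, p.2)
        else if p.1 < 0 then L a p.2 else L (a + 1) p.2
      have g1 : ∀ p : ℝ × E, ‖p.2‖ = 1 → g p = G (a + (p.1 + 1) / 2, p.2) := fun p hp => if_pos hp
      have g2 : ∀ z ∈ closedBall (0 : E) 1, g (-1, z) = L a z := by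
        intro z hz
        by_cases h : ‖z‖ = 1
        · rw [g1 _ h, hLG a z (by simpa using h)]
          congr 2; norm_num
        · simp only [g]; rw [if_neg h, if_pos (by norm_num)]
      have g3 : ∀ z ∈ closedBall (0 : E) 1, g (1, z) = L (a + 1) z := by
        intro z hz
        by_cases h : ‖z‖ = 1
        · rw [g1 _ h, hLG (a + 1) z (by simpa using h)]
          congr 2; push_cast; norm_num
        · simp only [g]; rw [if_neg h, if_neg (by norm_num)]
      have hsph : sphere (0 : ℝ × E) 1 ⊆ Icc (-1 : ℝ) 1 ×ˢ sphere (0 : E) 1 ∪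
          ({-1} ×ˢ closedBall (0 : E) 1 ∪ {1} ×ˢ closedBall (0 : E) 1) := by
        rintro ⟨t, z⟩ h
        rw [mem_sphere_zero_iff_norm, Prod.norm_def] at h
        simp only at h
        have ht : |t| ≤ 1 := by rw [← h, ← Real.norm_eq_abs]; exact le_max_left _ _
        have hz : ‖z‖ ≤ 1 := by rw [← h]; exact le_max_right _ _
        rcases max_choice ‖t‖ ‖z‖ with h' | h'
        · rw [h', Real.norm_eq_abs] at h
          rcases eq_or_eq_neg_of_abs_eq h with h | h
          · right; right; exact ⟨h, by simpa using hz⟩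
          · right; left; exact ⟨h, by simpa using hz⟩
        · rw [h'] at h
          left; exact ⟨abs_le.1 ht, by simpa using h⟩
      have hslab : ∀ t ∈ Icc (-1 : ℝ) 1, (a : ℝ) + (t + 1) / 2 ∈ Icc (a : ℝ) (a + 1) := by
        intro t ht
        constructor <;> linarith [ht.1, ht.2]
      obtain ⟨C, hC1, hC2, hC3⟩ := h2 a g
        (by
          refine ContinuousOn.mono ?_ hsph
          refine ContinuousOn.union_of_isClosed ?_ (ContinuousOn.union_of_isClosed ?_ ?_
            (isClosed_singleton.prod isClosed_closedBall)
            (isClosed_singleton.prod isClosed_closedBall)) (isClosed_Icc.prod isClosed_sphere)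
            ((isClosed_singleton.prod isClosed_closedBall).union
            (isClosed_singleton.prod isClosed_closedBall))
          · refine ContinuousOn.congr (f := fun p : ℝ × E => G (a + (p.1 + 1) / 2, p.2)) ?_
              fun p hp => g1 p (by simpa using hp.2)
            exact hG.comp (by fun_prop) fun p hp => ⟨mem_univ _, hp.2⟩
          · refine ContinuousOn.congr (f := fun p : ℝ × E => L a p.2) ?_ ?_
            · exact (hLc a).comp continuousOn_snd fun p hp => hp.2
            · rintro ⟨t, z⟩ ⟨ht, hz⟩
              obtain rfl : t = -1 := ht
              exact g2 z hz
          · refine ContinuousOn.congr (f := fun p : ℝ × E => L (a + 1) p.2) ?_ ?_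
            · exact (hLc (a + 1)).comp continuousOn_snd fun p hp => hp.2
            · rintro ⟨t, z⟩ ⟨ht, hz⟩
              obtain rfl : t = 1 := ht
              exact g3 z hz)
        (by
          rintro ⟨t, z⟩ hp
          rcases hsph hp with ⟨ht, hz⟩ | ⟨ht, hz⟩ | ⟨ht, hz⟩
          · rw [g1 _ (by simpa using hz)]
            exact hGV a ⟨hslab t ht, hz⟩
          · obtain rfl : t = -1 := ht
            rw [g2 z hz]
            exact (hLV a hz).2
          · obtain rfl : t = 1 := ht
            rw [g3 z hz]
            have := (hLV (a + 1) hz).1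
            rwa [add_sub_cancel_right] at this)
      have hmem : ∀ t : ℝ, ∀ z : E, |t| ≤ 1 → ‖z‖ ≤ 1 → (|t| = 1 ∨ ‖z‖ = 1) →
          (t, z) ∈ sphere (0 : ℝ × E) 1 := by
        intro t z ht hz h
        rw [mem_sphere_zero_iff_norm, Prod.norm_def]
        simp only [Real.norm_eq_abs]
        rcases h with h | h <;> rw [h]
        · exact max_eq_left hz
        · exact max_eq_right ht
      refine ⟨C, hC1, hC2, ?_, ?_, ?_, fun h => absurd h ha⟩
      · intro t ht z hz
        have hz1 : ‖z‖ = 1 := by simpa using hz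
        rw [hC3 (hmem t z (abs_le.2 ht) hz1.le (Or.inr hz1)), g1 _ hz1]
      · intro z hz
        rw [hC3 (hmem _ z (by simp) (by simpa using hz) (by simp)), g2 z hz]
      · intro z hz
        rw [hC3 (hmem _ z (by simp) (by simpa using hz) (by simp)), g3 z hz]
  choose C hCc hCV hCG hC0 hC1 hCP using hcubes
  have hball : ∀ a : ℤ, MapsTo (fun p : ℝ × E => (2 * (p.1 - a) - 1, p.2))
      (Icc (a : ℝ) (a + 1) ×ˢ closedBall 0 1) (closedBall 0 1) := by
    rintro a ⟨u, z⟩ ⟨hu, hz⟩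
    rw [mem_closedBall_zero_iff, Prod.norm_def]
    simp only [Real.norm_eq_abs]
    refine max_le (abs_le.2 ⟨?_, ?_⟩) (by simpa using hz) <;> linarith [hu.1, hu.2]
  obtain ⟨G', hG'c, hG'⟩ := exists_glue_slabs (isClosed_closedBall (x := (0 : E)) (ε := 1))
    (fun a p => C a (2 * (p.1 - a) - 1, p.2))
    (fun a => (hCc a).comp (by fun_prop) (hball a))
    (by
      intro a z hz
      simp only
      have e1 : 2 * ((a : ℝ) + 1 - a) - 1 = 1 := by ring
      have e2 : 2 * ((a : ℝ) + 1 - ((a + 1 : ℤ) : ℝ)) - 1 = -1 := by push_cast; ring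
      rw [e1, e2, hC1 a z hz, hC0 (a + 1) z hz])
  have hfl : ∀ u : ℝ, u ∈ Icc (⌊u⌋ : ℝ) (⌊u⌋ + 1) := fun u =>
    ⟨Int.floor_le u, (Int.lt_floor_add_one u).le⟩
  refine ⟨G', hG'c, ?_, ?_, ?_⟩
  · intro a p hp
    rw [hG' a hp]
    exact hCV a (hball a hp)
  · rintro ⟨u, z⟩ ⟨_, hz⟩
    rw [hG' ⌊u⌋ ⟨hfl u, sphere_subset_closedBall hz⟩]
    simp only
    rw [hCG _ _ ⟨by linarith [(hfl u).1], by linarith [(hfl u).2]⟩ z hz]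
    congr 2; ring
  · intro u hu z hz
    -- at `u = 0` the cell to the left is used
    rcases hu with h | h
    · rcases h.lt_or_eq with h | h
      · rw [hG' ⌊u⌋ ⟨hfl u, hz⟩]
        exact hCP _ (Or.inl (Int.floor_lt.2 (by simpa using h))) _ z hz
      · subst h
        rw [hG' (-1) ⟨by norm_num, hz⟩]
        exact hCP _ (Or.inl (by norm_num)) _ z hz
    · rw [hG' ⌊u⌋ ⟨hfl u, hz⟩]
      exact hCP _ (Or.inr (Int.le_floor.2 h)) _ z hz

end Slab

/-! ### The grid argument in the plane -/

section Grid
variable {X : Type*} [TopologicalSpace X]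

theorem mem_sphere_prod_iff {E F : Type*} [NormedAddCommGroup E] [NormedAddCommGroup F]
    (t : E) (z : F) : (t, z) ∈ sphere (0 : E × F) 1 ↔
      (‖t‖ ≤ 1 ∧ ‖z‖ ≤ 1) ∧ (‖t‖ = 1 ∨ ‖z‖ = 1) := by
  rw [mem_sphere_zero_iff_norm, Prod.norm_def]
  simp only
  constructor
  · intro h
    refine ⟨max_le_iff.1 h.le, ?_⟩
    rcases max_choice ‖t‖ ‖z‖ with h' | h' <;> rw [h'] at h
    · exact Or.inl h
    · exact Or.inr h
  · rintro ⟨⟨h1, h2⟩, h | h⟩ <;> rw [h]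
    · exact max_eq_left h2
    · exact max_eq_right h1

theorem mem_closedBall_prod_iff {E F : Type*} [NormedAddCommGroup E] [NormedAddCommGroup F]
    (t : E) (z : F) : (t, z) ∈ closedBall (0 : E × F) 1 ↔ ‖t‖ ≤ 1 ∧ ‖z‖ ≤ 1 := by
  rw [mem_closedBall_zero_iff, Prod.norm_def, max_le_iff]

theorem real_norm_eq_one_iff (t : ℝ) : ‖t‖ = 1 ↔ t = -1 ∨ t = 1 := by
  rw [Real.norm_eq_abs, abs_eq zero_le_one, or_comm]

/-- If a map `F` of the plane sends the unit square with corner `(a, b)` to `W a b` and is constant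
outside a large square, then it is homotopic to the constant map at a common point `y` of
all `W a b`, by a homotopy which is given by a fixed path outside the large square. -/
theorem exists_grid_homotopy (W : ℤ → ℤ → Set X) (N : ℤ)
    (h0 : ∀ a b, FillsBall ℝ ((W (a - 1) (b - 1) ∩ W (a - 1) b) ∩ (W a (b - 1) ∩ W a b)))
    (h1 : ∀ a b, FillsBall (ℝ × ℝ) (W a (b - 1) ∩ W a b))
    (h1' : ∀ a b, FillsBall (ℝ × ℝ) (W (a - 1) b ∩ W a b))
    (h2 : ∀ a b, FillsBall (ℝ × ℝ × ℝ) (W a b))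
    (F : ℝ × ℝ → X) (hF : Continuous F)
    (hFW : ∀ a b : ℤ, MapsTo F (Icc (a : ℝ) (a + 1) ×ˢ Icc (b : ℝ) (b + 1)) (W a b))
    (x y : X) (hy : ∀ a b, y ∈ W a b)
    (P : ℝ → X) (hP : Continuous P) (hPx : P (-1) = x) (hPy : P 1 = y)
    (hPW : ∀ a b : ℤ, (a ≤ 0 ∨ N - 1 ≤ a ∨ b ≤ 0 ∨ N - 1 ≤ b) → ∀ s, P s ∈ W a b)
    (hFx : ∀ u v : ℝ, (u ≤ 0 ∨ N ≤ u ∨ v ≤ 0 ∨ N ≤ v) → F (u, v) = x) :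
    ∃ H : ℝ × ℝ × ℝ → X, ContinuousOn H (univ ×ˢ (univ ×ˢ closedBall (0 : ℝ) 1)) ∧
      (∀ u v, H (v, u, -1) = F (u, v)) ∧ (∀ u v, H (v, u, 1) = y) ∧
      ∀ u v : ℝ, (u ≤ 0 ∨ N ≤ u ∨ v ≤ 0 ∨ N ≤ v) → ∀ s ∈ closedBall (0 : ℝ) 1,
        H (v, u, s) = P s := by
  classical
  have hsub : sphere (0 : ℝ) 1 = {-1} ∪ {1} := by
    ext t; simp only [mem_sphere_zero_iff_norm, real_norm_eq_one_iff]; rfl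
  -- the homotopy over the horizontal lines
  have hlines : ∀ b : ℤ, ∃ L : ℝ × ℝ → X, ContinuousOn L (univ ×ˢ closedBall 0 1) ∧
      (∀ a : ℤ, MapsTo L (Icc (a : ℝ) (a + 1) ×ˢ closedBall 0 1) (W a (b - 1) ∩ W a b)) ∧
      (∀ u, L (u, -1) = F (u, b)) ∧ (∀ u, L (u, 1) = y) ∧
      (∀ u : ℝ, (u ≤ 0 ∨ N ≤ u ∨ b ≤ 0 ∨ N ≤ b) → ∀ z ∈ closedBall (0 : ℝ) 1, L (u, z) = P z) := by
    intro b
    by_cases hb : b ≤ 0 ∨ N ≤ b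
    · refine ⟨fun p => P p.2, by fun_prop, fun a p _ => ⟨hPW _ _ (by omega) _, hPW _ _ (by omega) _⟩,
        fun u => ?_, fun u => hPy, fun u _ z _ => rfl⟩
      simp only
      rw [hPx, hFx]
      right; right; exact_mod_cast hb
    · obtain ⟨L, hL1, hL2, hL3, hL4⟩ := exists_extend_slabs
        (fun a => W a (b - 1) ∩ W a b) N (fun a => h0 a b) (fun a => h1 a b)
        (fun p : ℝ × ℝ => if p.2 < 0 then F (p.1, b) else y)
        (by
          rw [hsub, prod_union]
          refine ContinuousOn.union_of_isClosed ?_ ?_ (isClosed_univ.prod isClosed_singleton)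
            (isClosed_univ.prod isClosed_singleton)
          · refine ContinuousOn.congr (f := fun p : ℝ × ℝ => F (p.1, b)) (by fun_prop) ?_
            rintro ⟨u, z⟩ ⟨_, hz⟩
            obtain rfl : z = -1 := hz
            simp
          · refine ContinuousOn.congr (f := fun p : ℝ × ℝ => y) (by fun_prop) ?_
            rintro ⟨u, z⟩ ⟨_, hz⟩
            obtain rfl : z = 1 := hz
            simp)
        (by
          rintro a ⟨u, z⟩ ⟨hu, hz⟩
          simp only
          split_ifs
          · refine ⟨hFW a (b - 1) ⟨hu, ?_⟩, hFW a b ⟨hu, ?_⟩⟩ <;> simp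
          · exact ⟨hy _ _, hy _ _⟩)
        P hP.continuousOn
        (by
          intro u hu z hz
          rw [hsub] at hz
          rcases hz with hz | hz
          · obtain rfl : z = -1 := hz
            simp only [Left.neg_neg_iff, zero_lt_one, if_true]
            rw [hPx, hFx]
            tauto
          · obtain rfl : z = 1 := hz
            simp [hPy])
        (fun a ha s _ => ⟨hPW _ _ (by omega) _, hPW _ _ (by omega) _⟩)
      refine ⟨L, hL1, hL2, fun u => ?_, fun u => ?_, fun u hu => hL4 u ?_⟩
      · rw [hL3 ⟨mem_univ _, by simp⟩]; simp
      · rw [hL3 ⟨mem_univ _, by simp⟩]; simp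
      · tauto
  choose L hLc hLW hL0 hL1 hLP using hlines
  -- the homotopy over the horizontal strips
  have hstrips : ∀ b : ℤ, ∃ D : ℝ × ℝ × ℝ → X, ContinuousOn D (univ ×ˢ closedBall 0 1) ∧
      (∀ u, ∀ t ∈ closedBall (0 : ℝ) 1, D (u, t, -1) = F (u, b + (t + 1) / 2)) ∧
      (∀ u, ∀ t ∈ closedBall (0 : ℝ) 1, D (u, t, 1) = y) ∧
      (∀ u, ∀ s ∈ closedBall (0 : ℝ) 1, D (u, -1, s) = L b (u, s)) ∧
      (∀ u, ∀ s ∈ closedBall (0 : ℝ) 1, D (u, 1, s) = L (b + 1) (u, s)) ∧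
      (∀ u : ℝ, (u ≤ 0 ∨ N ≤ u ∨ b < 0 ∨ N ≤ b) → ∀ t ∈ closedBall (0 : ℝ) 1,
        ∀ s ∈ closedBall (0 : ℝ) 1, D (u, t, s) = P s) := by
    intro b
    have hst : ∀ t ∈ closedBall (0 : ℝ) 1, (b : ℝ) + (t + 1) / 2 ∈ Icc (b : ℝ) (b + 1) := by
      intro t ht
      rw [mem_closedBall_zero_iff, Real.norm_eq_abs, abs_le] at ht
      constructor <;> linarith [ht.1, ht.2]
    by_cases hb : b < 0 ∨ N ≤ b
    · refine ⟨fun p => P p.2.2, by fun_prop, fun u t ht => ?_, fun u t ht => hPy,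
        fun u s hs => ?_, fun u s hs => ?_, fun u _ t _ s _ => rfl⟩
      · simp only
        rw [hPx, hFx]
        rcases hb with hb | hb
        · right; right; left
          have : (b : ℝ) + 1 ≤ 0 := by exact_mod_cast hb
          linarith [(hst t ht).2]
        · right; right; right
          have : (N : ℝ) ≤ b := by exact_mod_cast hb
          linarith [(hst t ht).1]
      · exact (hLP b u (by omega) s hs).symm
      · exact (hLP (b + 1) u (by omega) s hs).symm
    · let g : ℝ × ℝ × ℝ → X := fun p => if p.2.2 = -1 then F (p.1, b + (p.2.1 + 1) / 2) else
        if p.2.2 = 1 then y else if p.2.1 < 0 then L b (p.1, p.2.2) else L (b + 1) (p.1, p.2.2)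
      have g1 : ∀ u t, g (u, t, -1) = F (u, b + (t + 1) / 2) := fun u t => if_pos rfl
      have g2 : ∀ u t, g (u, t, 1) = y := fun u t => by simp only [g]; norm_num
      have g3 : ∀ u s, g (u, -1, s) = L b (u, s) := by
        intro u s
        by_cases hs : s = -1
        · subst hs; rw [g1, hL0]; norm_num
        by_cases hs' : s = 1
        · subst hs'; rw [g2, hL1]
        simp only [g]; rw [if_neg hs, if_neg hs', if_pos (by norm_num)]
      have g4 : ∀ u s, g (u, 1, s) = L (b + 1) (u, s) := by
        intro u s
        by_cases hs : s = -1
        · subst hs; rw [g1, hL0]; push_cast; norm_num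
        by_cases hs' : s = 1
        · subst hs'; rw [g2, hL1]
        simp only [g]; rw [if_neg hs, if_neg hs', if_neg (by norm_num)]
      have hsph : sphere (0 : ℝ × ℝ) 1 ⊆ (closedBall 0 1 ×ˢ {-1} ∪ closedBall 0 1 ×ˢ {1}) ∪
          ({-1} ×ˢ closedBall 0 1 ∪ {1} ×ˢ closedBall 0 1) := by
        rintro ⟨t, s⟩ h
        rw [mem_sphere_prod_iff, real_norm_eq_one_iff, real_norm_eq_one_iff] at h
        simp only [mem_union, mem_prod, mem_singleton_iff, mem_closedBall_zero_iff]
        tauto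
      have c1 : IsClosed (closedBall (0 : ℝ) 1) := isClosed_closedBall
      have cA := ((isClosed_univ (X := ℝ)).prod (c1.prod (isClosed_singleton (x := (-1 : ℝ)))))
      have cB := ((isClosed_univ (X := ℝ)).prod (c1.prod (isClosed_singleton (x := (1 : ℝ)))))
      have cC := ((isClosed_univ (X := ℝ)).prod ((isClosed_singleton (x := (-1 : ℝ))).prod c1))
      have cD := ((isClosed_univ (X := ℝ)).prod ((isClosed_singleton (x := (1 : ℝ))).prod c1))
      obtain ⟨D, hD1, -, hD3, hD4⟩ := exists_extend_slabs
        (fun a => W a b) N (fun a => h1' a b) (fun a => h2 a b) g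
        (by
          refine ContinuousOn.mono ?_ (prod_mono_right hsph)
          rw [prod_union, prod_union, prod_union]
          refine ContinuousOn.union_of_isClosed
            (ContinuousOn.union_of_isClosed ?_ ?_ cA cB)
            (ContinuousOn.union_of_isClosed ?_ ?_ cC cD) (cA.union cB) (cC.union cD)
          · refine ContinuousOn.congr
              (f := fun p : ℝ × ℝ × ℝ => F (p.1, b + (p.2.1 + 1) / 2)) (by fun_prop) ?_
            rintro ⟨u, t, s⟩ ⟨_, _, hs⟩
            obtain rfl : s = -1 := hs
            exact g1 u t
          · refine ContinuousOn.congr (f := fun p : ℝ × ℝ × ℝ => y) (by fun_prop) ?_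
            rintro ⟨u, t, s⟩ ⟨_, _, hs⟩
            obtain rfl : s = 1 := hs
            exact g2 u t
          · refine ContinuousOn.congr (f := fun p : ℝ × ℝ × ℝ => L b (p.1, p.2.2))
              ((hLc b).comp (by fun_prop) fun p hp => ⟨mem_univ _, hp.2.2⟩) ?_
            rintro ⟨u, t, s⟩ ⟨_, ht, _⟩
            obtain rfl : t = -1 := ht
            exact g3 u s
          · refine ContinuousOn.congr (f := fun p : ℝ × ℝ × ℝ => L (b + 1) (p.1, p.2.2))
              ((hLc (b + 1)).comp (by fun_prop) fun p hp => ⟨mem_univ _, hp.2.2⟩) ?_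
            rintro ⟨u, t, s⟩ ⟨_, ht, _⟩
            obtain rfl : t = 1 := ht
            exact g4 u s)
        (by
          rintro a ⟨u, t, s⟩ ⟨hu, h⟩
          rcases hsph h with (⟨ht, hs⟩ | ⟨ht, hs⟩) | ⟨ht, hs⟩ | ⟨ht, hs⟩
          · obtain rfl : s = -1 := hs
            rw [g1]
            exact hFW a b ⟨hu, hst t ht⟩
          · obtain rfl : s = 1 := hs
            rw [g2]; exact hy _ _
          · obtain rfl : t = -1 := ht
            have h' : L b (u, s) ∈ _ := hLW b a ⟨hu, hs⟩
            rw [g3]; exact h'.2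
          · obtain rfl : t = 1 := ht
            have h' : L (b + 1) (u, s) ∈ _ := hLW (b + 1) a ⟨hu, hs⟩
            rw [g4]
            have := h'.1
            rwa [add_sub_cancel_right] at this)
        (fun q => P q.2) (by fun_prop)
        (by
          rintro u hu ⟨t, s⟩ h
          rcases hsph h with (⟨ht, hs⟩ | ⟨ht, hs⟩) | ⟨ht, hs⟩ | ⟨ht, hs⟩
          · obtain rfl : s = -1 := hs
            rw [g1, hFx _ _ (by tauto), hPx]
          · obtain rfl : s = 1 := hs
            rw [g2, hPy]
          · obtain rfl : t = -1 := ht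
            rw [g3, hLP b u (by tauto) s hs]
          · obtain rfl : t = 1 := ht
            rw [g4, hLP (b + 1) u (by tauto) s hs])
        (fun a ha q _ => hPW _ _ (by omega) _)
      have hn1 : (-1 : ℝ) ∈ closedBall (0 : ℝ) 1 := by simp
      have hp1 : (1 : ℝ) ∈ closedBall (0 : ℝ) 1 := by simp
      have hmem : ∀ t ∈ closedBall (0 : ℝ) 1, ∀ s ∈ closedBall (0 : ℝ) 1,
          ((t = -1 ∨ t = 1) ∨ (s = -1 ∨ s = 1)) → (t, s) ∈ sphere (0 : ℝ × ℝ) 1 := by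
        intro t ht s hs h
        rw [mem_sphere_prod_iff, real_norm_eq_one_iff, real_norm_eq_one_iff]
        rw [mem_closedBall_zero_iff] at ht hs
        exact ⟨⟨ht, hs⟩, h⟩
      refine ⟨D, hD1, fun u t ht => ?_, fun u t ht => ?_, fun u s hs => ?_, fun u s hs => ?_,
        fun u hu t ht s hs => ?_⟩
      · rw [hD3 ⟨mem_univ _, hmem t ht _ hn1 (by simp)⟩, g1]
      · rw [hD3 ⟨mem_univ _, hmem t ht _ hp1 (by simp)⟩, g2]
      · rw [hD3 ⟨mem_univ _, hmem _ hn1 s hs (by simp)⟩, g3]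
      · rw [hD3 ⟨mem_univ _, hmem _ hp1 s hs (by simp)⟩, g4]
      · refine hD4 u (by tauto) (t, s) ?_
        rw [mem_closedBall_prod_iff]
        rw [mem_closedBall_zero_iff] at ht hs
        exact ⟨ht, hs⟩
  choose D hDc hD0 hD1 hDL hDL' hDP using hstrips
  have hball : ∀ b : ℤ, ∀ v ∈ Icc (b : ℝ) (b + 1), 2 * (v - b) - 1 ∈ closedBall (0 : ℝ) 1 := by
    intro b v hv
    rw [mem_closedBall_zero_iff, Real.norm_eq_abs, abs_le]
    constructor <;> linarith [hv.1, hv.2]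
  obtain ⟨H, hHc, hH⟩ := exists_glue_slabs
    ((isClosed_univ (X := ℝ)).prod (isClosed_closedBall (x := (0 : ℝ)) (ε := 1)))
    (fun b p => D b (p.2.1, 2 * (p.1 - b) - 1, p.2.2))
    (fun b => (hDc b).comp (by fun_prop) (by
      rintro ⟨v, u, s⟩ ⟨hv, _, hs⟩
      refine ⟨mem_univ _, ?_⟩
      rw [mem_closedBall_prod_iff]
      have := hball b v hv
      rw [mem_closedBall_zero_iff] at this hs
      exact ⟨this, hs⟩))
    (by
      rintro b ⟨u, s⟩ ⟨_, hs⟩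
      have e1 : 2 * ((b : ℝ) + 1 - b) - 1 = 1 := by ring
      have e2 : 2 * ((b : ℝ) + 1 - ((b + 1 : ℤ) : ℝ)) - 1 = -1 := by push_cast; ring
      simp only
      rw [e1, e2, hDL' b u s hs, hDL (b + 1) u s hs])
  have hfl : ∀ u : ℝ, u ∈ Icc (⌊u⌋ : ℝ) (⌊u⌋ + 1) := fun u =>
    ⟨Int.floor_le u, (Int.lt_floor_add_one u).le⟩
  have hn1 : (-1 : ℝ) ∈ closedBall (0 : ℝ) 1 := by simp
  have hp1 : (1 : ℝ) ∈ closedBall (0 : ℝ) 1 := by simp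
  refine ⟨H, hHc, fun u v => ?_, fun u v => ?_, fun u v h s hs => ?_⟩
  · rw [hH ⌊v⌋ ⟨hfl v, mem_univ _, hn1⟩]
    simp only
    rw [hD0 _ _ _ (hball _ _ (hfl v))]
    congr 2; ring
  · rw [hH ⌊v⌋ ⟨hfl v, mem_univ _, hp1⟩]
    exact hD1 _ _ _ (hball _ _ (hfl v))
  · rcases (by tauto : (u ≤ 0 ∨ N ≤ u) ∨ v < 0 ∨ v = 0 ∨ N ≤ v ∨ v ≤ 0) with h | h | h | h | h
    · rw [hH ⌊v⌋ ⟨hfl v, mem_univ _, hs⟩]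
      exact hDP _ _ (by tauto) _ (hball _ _ (hfl v)) s hs
    · rw [hH ⌊v⌋ ⟨hfl v, mem_univ _, hs⟩]
      exact hDP _ _ (Or.inr (Or.inr (Or.inl (Int.floor_lt.2 (by simpa using h))))) _
        (hball _ _ (hfl v)) s hs
    · subst h
      rw [hH (-1) ⟨by norm_num, mem_univ _, hs⟩]
      exact hDP _ _ (by norm_num) _ (hball _ _ (by norm_num)) s hs
    · rw [hH ⌊v⌋ ⟨hfl v, mem_univ _, hs⟩]
      exact hDP _ _ (Or.inr (Or.inr (Or.inr (Int.le_floor.2 h)))) _ (hball _ _ (hfl v)) s hs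
    · rcases h.lt_or_eq with h | h
      · rw [hH ⌊v⌋ ⟨hfl v, mem_univ _, hs⟩]
        exact hDP _ _ (Or.inr (Or.inr (Or.inl (Int.floor_lt.2 (by simpa using h))))) _
          (hball _ _ (hfl v)) s hs
      · subst h
        rw [hH (-1) ⟨by norm_num, mem_univ _, hs⟩]
        exact hDP _ _ (by norm_num) _ (hball _ _ (by norm_num)) s hs

end Grid

/-! ### A criterion for the vanishing of the second homotopy group -/

section PiTwo
variable {X : Type*} [TopologicalSpace X]

/-- For `M` large, the map `(u, v) ↦ γ ((u - 1) / M, (v - 1) / M)`, extended to the plane by clamping,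
sends every square of side `2` into a member of the cover (Lebesgue number lemma). -/
theorem exists_grid_of_cover {ι : Type*} (V : ι → Set X) (hVo : ∀ i, IsOpen (V i))
    (hVcov : ∀ x, ∃ i, x ∈ V i) (γ : C(Fin 2 → I, X)) :
    ∃ M : ℕ, 0 < M ∧ ∀ u v : ℝ, ∃ i, ∀ u' v' : ℝ, |u' - u| ≤ 1 → |v' - v| ≤ 1 →
      γ ![projIcc 0 1 zero_le_one ((u' - 1) / M), projIcc 0 1 zero_le_one ((v' - 1) / M)] ∈ V i := by
  obtain ⟨δ, hδ, hδV⟩ := lebesgue_number_lemma_of_metric (s := (univ : Set (Fin 2 → I)))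
    (c := fun i => γ ⁻¹' V i) isCompact_univ (fun i => (hVo i).preimage γ.continuous)
    (fun z _ => mem_iUnion.2 (hVcov (γ z)))
  obtain ⟨M, hM⟩ := exists_nat_gt (1 / δ)
  have hM0 : (0 : ℝ) < M := lt_trans (by positivity) hM
  have hMδ : 1 / (M : ℝ) < δ := by
    rw [div_lt_iff₀ hM0]
    rw [div_lt_iff₀ hδ] at hM
    linarith
  refine ⟨M, by exact_mod_cast hM0, fun u v => ?_⟩
  obtain ⟨i, hi⟩ := hδV ![projIcc 0 1 zero_le_one ((u - 1) / M), projIcc 0 1 zero_le_one ((v - 1) / M)]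
    (mem_univ _)
  have aux : ∀ w w' : ℝ, |w' - w| ≤ 1 → dist (projIcc (0 : ℝ) 1 zero_le_one ((w' - 1) / M))
      (projIcc 0 1 zero_le_one ((w - 1) / M)) < δ := by
    intro w w' h
    refine lt_of_le_of_lt ?_ hMδ
    rw [Subtype.dist_eq, Real.dist_eq]
    refine (abs_projIcc_sub_projIcc zero_le_one).trans ?_
    rw [← sub_div, sub_sub_sub_cancel_right, abs_div, abs_of_pos hM0]
    gcongr
  refine ⟨i, fun u' v' hu hv => hi ?_⟩
  rw [mem_ball, dist_pi_lt_iff hδ]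
  intro k
  fin_cases k
  · exact aux u u' hu
  · exact aux v v' hv

/-- A nerve-type criterion: if `X` has an open cover with `2`-connected members (in the sense of
filling boundaries of cubes), `1`-connected double intersections and `0`-connected quadruple
intersections, all containing a common point, then `π₂(X)` vanishes. -/
theorem subsingleton_pi_two_of_cover {ι : Type*} (V : ι → Set X) (hVo : ∀ i, IsOpen (V i))
    (hVcov : ∀ x, ∃ i, x ∈ V i) (y : X) (hy : ∀ i, y ∈ V i)
    (h2 : ∀ i, FillsBall (ℝ × ℝ × ℝ) (V i))
    (h1 : ∀ i j, FillsBall (ℝ × ℝ) (V i ∩ V j))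
    (h0 : ∀ i j k l, FillsBall ℝ ((V i ∩ V j) ∩ (V k ∩ V l)))
    (hpc : ∀ i, ∀ x ∈ V i, JoinedIn (V i) x y) (x : X) :
    Subsingleton (HomotopyGroup (Fin 2) X x) := by
  classical
  suffices hmain : ∀ γ : GenLoop (Fin 2) X x, GenLoop.Homotopic γ GenLoop.const by
    refine ⟨fun a b => ?_⟩
    induction a using Quotient.inductionOn with | _ a => ?_
    induction b using Quotient.inductionOn with | _ b => ?_
    exact Quotient.sound ((hmain a).trans (hmain b).symm)
  intro γ
  obtain ⟨M, hM, hMV⟩ := exists_grid_of_cover V hVo hVcov γ.1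
  have hM0 : (0 : ℝ) < M := by exact_mod_cast hM
  obtain ⟨i0, hi0⟩ := hVcov x
  obtain ⟨p, hp⟩ := hpc i0 x hi0
  let N : ℤ := M + 2
  have hN : (N : ℝ) = M + 2 := by simp [N]
  let ψ : ℝ → I := fun u => projIcc 0 1 zero_le_one ((u - 1) / M)
  have hψc : Continuous ψ := continuous_projIcc.comp (by fun_prop)
  have hψ0 : ∀ u ≤ 1, ψ u = 0 := fun u hu =>
    projIcc_of_le_left _ (div_nonpos_of_nonpos_of_nonneg (by linarith) hM0.le)
  have hψ1 : ∀ u : ℝ, M + 1 ≤ u → ψ u = 1 := fun u hu =>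
    projIcc_of_right_le _ ((one_le_div hM0).2 (by linarith))
  let F : ℝ × ℝ → X := fun q => γ ![ψ q.1, ψ q.2]
  have hFc : Continuous F := by
    refine γ.1.continuous.comp ?_
    refine continuous_pi fun k => ?_
    fin_cases k
    · exact hψc.comp continuous_fst
    · exact hψc.comp continuous_snd
  have hFx : ∀ u v : ℝ, (u ≤ 1 ∨ M + 1 ≤ u ∨ v ≤ 1 ∨ M + 1 ≤ v) → F (u, v) = x := by
    intro u v h
    refine γ.2 _ ?_
    rcases h with h | h | h | h
    · exact ⟨0, Or.inl (hψ0 u h)⟩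
    · exact ⟨0, Or.inr (hψ1 u h)⟩
    · exact ⟨1, Or.inl (hψ0 v h)⟩
    · exact ⟨1, Or.inr (hψ1 v h)⟩
  choose K' hK' using fun a b : ℤ => hMV a b
  let K : ℤ → ℤ → ι := fun a b => if a ≤ 0 ∨ N - 1 ≤ a ∨ b ≤ 0 ∨ N - 1 ≤ b then i0 else K' a b
  have hKo : ∀ a b : ℤ, (a ≤ 0 ∨ N - 1 ≤ a ∨ b ≤ 0 ∨ N - 1 ≤ b) → K a b = i0 :=
    fun a b h => if_pos h
  obtain ⟨H, hHc, hH0, hH1, hHP⟩ := exists_grid_homotopy (fun a b => V (K a b)) N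
    (fun a b => h0 _ _ _ _) (fun a b => h1 _ _) (fun a b => h1 _ _) (fun a b => h2 _) F hFc
    (by
      rintro a b ⟨u, v⟩ ⟨hu, hv⟩
      simp only [mem_Icc] at hu hv
      by_cases h : a ≤ 0 ∨ N - 1 ≤ a ∨ b ≤ 0 ∨ N - 1 ≤ b
      · rw [hKo a b h, hFx u v]
        · exact hi0
        · rcases h with h | h | h | h
          · have : (a : ℝ) ≤ 0 := by exact_mod_cast h
            left; linarith
          · have : (N : ℝ) - 1 ≤ a := by exact_mod_cast h
            right; left; linarith
          · have : (b : ℝ) ≤ 0 := by exact_mod_cast h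
            right; right; left; linarith
          · have : (N : ℝ) - 1 ≤ b := by exact_mod_cast h
            right; right; right; linarith
      · have : K a b = K' a b := if_neg h
        rw [this]
        refine hK' a b u v ?_ ?_ <;> rw [abs_le] <;> constructor <;> linarith)
    x y (fun a b => hy _) (fun s => p.extend ((s + 1) / 2))
    (p.continuous_extend.comp (by fun_prop)) (by simp) (by norm_num)
    (fun a b h s => by rw [hKo a b h]; exact hp _)
    (fun u v h => hFx u v (by
      rcases h with h | h | h | h
      · left; linarith
      · right; left; linarith
      · right; right; left; linarith
      · right; right; right; linarith))
  -- the cube is mapped to the square `[-1, N + 1]²`, which leaves a collar around `[0, N]²`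
  let j : I → ℝ := fun t => (N + 2) * t - 1
  have hjc : Continuous j := by fun_prop
  have hj0 : j 0 = -1 := by simp [j]
  have hj1 : j 1 = N + 1 := by simp [j]; ring
  have hjmem : ∀ t, -1 ≤ j t ∧ j t ≤ N + 1 := by
    intro t
    have h1 := t.2.1
    have h2 := t.2.2
    have : (0 : ℝ) ≤ N + 2 := by linarith
    constructor
    · simp only [j]; nlinarith
    · simp only [j]; nlinarith
  let d : ℝ → ℝ := fun u => min (u + 1) (N + 1 - u)
  let φ : (Fin 2 → I) → ℝ := fun z => min 1 (min (d (j (z 0))) (d (j (z 1))))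
  have hφc : Continuous φ := by fun_prop
  have hφ : ∀ z, φ z ∈ Icc (0 : ℝ) 1 := by
    intro z
    refine ⟨le_min zero_le_one (le_min ?_ ?_), min_le_left _ _⟩ <;>
    · refine le_min ?_ ?_ <;> linarith [(hjmem (z 0)).1, (hjmem (z 0)).2, (hjmem (z 1)).1,
        (hjmem (z 1)).2]
  have hφ0 : ∀ z ∈ Cube.boundary (Fin 2), φ z = 0 := by
    rintro z ⟨k, hk⟩
    refine le_antisymm ?_ (hφ z).1
    have hd : d (j (z k)) ≤ 0 := by
      rcases hk with hk | hk <;> rw [hk]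
      · rw [hj0]; exact (min_le_left _ _).trans (by norm_num)
      · rw [hj1]; exact (min_le_right _ _).trans (by norm_num)
    refine (min_le_right _ _).trans ?_
    fin_cases k
    · exact (min_le_left _ _).trans hd
    · exact (min_le_right _ _).trans hd
  have hφlt : ∀ z, φ z < 1 → (j (z 0) ≤ 0 ∨ N ≤ j (z 0) ∨ j (z 1) ≤ 0 ∨ N ≤ j (z 1)) := by
    intro z hz
    by_contra! hcon
    refine absurd hz (not_lt.2 (le_min le_rfl (le_min ?_ ?_))) <;>
    · refine le_min ?_ ?_ <;> linarith [hcon.1, hcon.2.1, hcon.2.2.1, hcon.2.2.2]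
  let f1 : C(Fin 2 → I, X) := ⟨fun z => F (j (z 0), j (z 1)), by fun_prop⟩
  let f2 : C(Fin 2 → I, X) := ⟨fun z => p.extend (φ z), p.continuous_extend.comp hφc⟩
  have hom1 : γ.1.HomotopicRel f1 (Cube.boundary (Fin 2)) := by
    let c : I × (Fin 2 → I) → Fin 2 → I := fun q k =>
      projIcc 0 1 zero_le_one ((1 - (q.1 : ℝ)) * q.2 k + q.1 * ψ (j (q.2 k)))
    have hc : Continuous c := by
      refine continuous_pi fun k => continuous_projIcc.comp ?_
      fun_prop
    have hψj0 : ψ (j 0) = 0 := hψ0 _ (by rw [hj0]; norm_num)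
    have hψj1 : ψ (j 1) = 1 := hψ1 _ (by rw [hj1]; linarith)
    refine ⟨⟨⟨⟨fun q => γ (c q), γ.1.continuous.comp hc⟩, fun z => ?_, fun z => ?_⟩, ?_⟩⟩
    · change γ (c (0, z)) = γ z
      congr 1
      funext k
      simp [c]
    · change γ (c (1, z)) = γ ![ψ (j (z 0)), ψ (j (z 1))]
      congr 1
      funext k
      fin_cases k <;> simp [c]
    · rintro t z ⟨k, hk⟩
      change γ (c (t, z)) = γ z
      refine Eq.trans (γ.2 _ ⟨k, ?_⟩) (γ.2 z ⟨k, hk⟩).symm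
      rcases hk with hk | hk
      · left; simp only [c, hk, hψj0]; simp
      · right; simp only [c, hk, hψj1]; simp
  have hom2 : f1.HomotopicRel f2 (Cube.boundary (Fin 2)) := by
    refine ⟨⟨⟨⟨fun q => H (j (q.2 1), j (q.2 0), -1 + 2 * (q.1 * φ q.2)), ?_⟩,
      fun z => ?_, fun z => ?_⟩, ?_⟩⟩
    · refine hHc.comp_continuous (by fun_prop) ?_
      rintro ⟨t, z⟩
      refine ⟨mem_univ _, mem_univ _, ?_⟩
      rw [mem_closedBall_zero_iff, Real.norm_eq_abs, abs_le]
      have h1 := hφ z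
      have h2 := t.2
      have h3 : 0 ≤ (t : ℝ) * φ z := mul_nonneg h2.1 h1.1
      have h4 : (t : ℝ) * φ z ≤ 1 := mul_le_one₀ h2.2 h1.1 h1.2
      simp only
      constructor <;> linarith
    · change H (j (z 1), j (z 0), -1 + 2 * ((0 : I) * φ z)) = F (j (z 0), j (z 1))
      rw [← hH0]; simp
    · change H (j (z 1), j (z 0), -1 + 2 * ((1 : I) * φ z)) = p.extend (φ z)
      have e : (-1 : ℝ) + 2 * (((1 : I) : ℝ) * φ z) = 2 * φ z - 1 := by simp; ring
      rw [e]
      rcases (hφ z).2.lt_or_eq with h | h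
      · rw [hHP _ _ (hφlt z h)]
        · congr 1; ring
        · rw [mem_closedBall_zero_iff, Real.norm_eq_abs, abs_le]
          constructor <;> linarith [(hφ z).1]
      · rw [h]
        have : (2 : ℝ) * 1 - 1 = 1 := by norm_num
        rw [this, hH1]; simp
    · intro t z hz
      change H (j (z 1), j (z 0), -1 + 2 * (t * φ z)) = F (j (z 0), j (z 1))
      rw [hφ0 z hz, ← hH0]; simp
  have hom3 : f2.HomotopicRel (ContinuousMap.const _ x) (Cube.boundary (Fin 2)) := by
    refine ⟨⟨⟨⟨fun q => p.extend ((1 - (q.1 : ℝ)) * φ q.2), p.continuous_extend.comp (by fun_prop)⟩,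
      fun z => ?_, fun z => ?_⟩, ?_⟩⟩
    · change p.extend ((1 - ((0 : I) : ℝ)) * φ z) = p.extend (φ z)
      simp
    · change p.extend ((1 - ((1 : I) : ℝ)) * φ z) = x
      simp
    · intro t z hz
      change p.extend ((1 - (t : ℝ)) * φ z) = p.extend (φ z)
      rw [hφ0 z hz]; simp
  exact (hom1.trans hom2).trans hom3

end PiTwo

/-! ### Simply connected spaces: covers and quotients -/

section OneConnected
variable {X : Type*} [TopologicalSpace X]

theorem IsSimplyConnected.homotopic_of_forall_mem {U : Set X} (hU : IsSimplyConnected U) {x y : X}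
    (p q : Path x y) (hp : ∀ t, p t ∈ U) (hq : ∀ t, q t ∈ U) : p.Homotopic q := by
  have := hU.simplyConnectedSpace
  have hx : x ∈ U := by simpa using hp 0
  have hy : y ∈ U := by simpa using hp 1
  let lift : (r : Path x y) → (∀ t, r t ∈ U) → Path (⟨x, hx⟩ : U) ⟨y, hy⟩ := fun r hr =>
    { toFun := fun t => ⟨r t, hr t⟩
      continuous_toFun := by fun_prop
      source' := by simp
      target' := by simp }
  have h := (SimplyConnectedSpace.paths_homotopic (lift p hp) (lift q hq)).map
    (⟨Subtype.val, continuous_subtype_val⟩ : C(U, X))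
  exact h

instance : ContractibleSpace I :=
  (convex_Icc (0 : ℝ) 1).contractibleSpace ⟨0, by simp⟩

/-- A map of the square that is constant on the top side exhibits the left side as homotopic to the
bottom side followed by the right side. -/
theorem homotopic_of_square {w w' v : X} (f : Path w w') (l : Path w v) (r : Path w' v)
    (K : I × I → X) (hK : Continuous K) (h0 : ∀ t, K (t, 0) = f t) (h1 : ∀ t, K (t, 1) = v)
    (hl : ∀ s, K (0, s) = l s) (hr : ∀ s, K (1, s) = r s) : (f.trans r).Homotopic l := by
  let a1 : Path ((0, 0) : I × I) (1, 0) := ⟨⟨fun t => (t, 0), by fun_prop⟩, rfl, rfl⟩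
  let a2 : Path ((1, 0) : I × I) (1, 1) := ⟨⟨fun t => (1, t), by fun_prop⟩, rfl, rfl⟩
  let b1 : Path ((0, 0) : I × I) (0, 1) := ⟨⟨fun t => (0, t), by fun_prop⟩, rfl, rfl⟩
  let b2 : Path ((0, 1) : I × I) (1, 1) := ⟨⟨fun t => (t, 1), by fun_prop⟩, rfl, rfl⟩
  have e1 : w = K (0, 0) := by rw [h0, f.source]
  have e2 : v = K (1, 1) := (h1 1).symm
  have h := ((SimplyConnectedSpace.paths_homotopic (a1.trans a2) (b1.trans b2)).map
    (⟨K, hK⟩ : C(I × I, X))).pathCast e1 e2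
  have hA : ((a1.trans a2).map hK).cast e1 e2 = f.trans r := by
    ext t
    simp only [Path.cast_coe, Path.map_coe, Function.comp_apply, Path.trans_apply]
    split_ifs
    · exact h0 _
    · exact hr _
  have hB : ((b1.trans b2).map hK).cast e1 e2 = l.trans (Path.refl v) := by
    ext t
    simp only [Path.cast_coe, Path.map_coe, Function.comp_apply, Path.trans_apply]
    split_ifs
    · exact hl _
    · exact h1 _
  have h' : (f.trans r).Homotopic (l.trans (Path.refl v)) := by
    rw [← hA, ← hB]; exact h
  exact h'.trans ⟨Path.Homotopy.transRefl l⟩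

/-- It is enough to contract the loops at one base point. -/
theorem simplyConnectedSpace_of_loops (b : X) (hJ : ∀ x, Joined b x)
    (hloop : ∀ f : Path b b, f.Homotopic (Path.refl b)) : SimplyConnectedSpace X := by
  have hpath : PathConnectedSpace X := ⟨⟨b⟩, fun x y => (hJ x).symm.trans (hJ y)⟩
  rw [simply_connected_iff_paths_homotopic']
  refine ⟨hpath, fun {x y} p q => ?_⟩
  obtain ⟨c⟩ := hJ x
  have h1 := hloop ((c.trans (p.trans q.symm)).trans c.symm)
  rw [← Path.Homotopic.Quotient.eq] at h1 ⊢
  simp only [Path.Homotopic.Quotient.mk_trans, Path.Homotopic.Quotient.mk_symm,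
    Path.Homotopic.Quotient.mk_refl] at h1
  generalize Path.Homotopic.Quotient.mk c = C at h1
  generalize Path.Homotopic.Quotient.mk p = P at h1 ⊢
  generalize Path.Homotopic.Quotient.mk q = Q at h1 ⊢
  calc P = C.symm.trans ((((C.trans (P.trans Q.symm)).trans C.symm).trans C).trans Q) := by
        simp only [Path.Homotopic.Quotient.trans_assoc, Path.Homotopic.Quotient.symm_trans,
          Path.Homotopic.Quotient.trans_refl]
        rw [← Path.Homotopic.Quotient.trans_assoc C.symm]; simp
    _ = Q := by
        rw [h1]
        simp only [Path.Homotopic.Quotient.refl_trans]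
        rw [← Path.Homotopic.Quotient.trans_assoc]; simp

/-- A version of the theorem of Seifert and van Kampen: a space is simply connected if it has an
open cover by simply connected sets with path connected pairwise intersections and a common
point. -/
theorem simplyConnectedSpace_of_cover {ι : Type*} (U : ι → Set X) (hUo : ∀ i, IsOpen (U i))
    (hUcov : ∀ x, ∃ i, x ∈ U i) (b : X) (hb : ∀ i, b ∈ U i)
    (hsc : ∀ i, IsSimplyConnected (U i)) (hpc : ∀ i j, IsPathConnected (U i ∩ U j)) :
    SimplyConnectedSpace X := by
  have hJ : ∀ x, Joined b x := by
    intro x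
    obtain ⟨i, hi⟩ := hUcov x
    exact ((hsc i).isPathConnected.joinedIn _ (hb i) _ hi).joined
  have key : ∀ {y : X} (f : Path b y) (j : ι) (p : Path y b), (∀ t, p t ∈ U j) →
      (f.trans p).Homotopic (Path.refl b) := by
    intro y f j p hp
    obtain ⟨t, ht0, htm, ⟨m, hm⟩, ht⟩ := exists_monotone_Icc_subset_open_cover_unitInterval
      (c := fun i => f ⁻¹' U i) (fun i => (hUo i).preimage f.continuous)
      (fun s _ => mem_iUnion.2 (hUcov (f s)))
    have claim : ∀ (n : ℕ) (j : ι) (p : Path (f (t n)) (f 0)), (∀ s, p s ∈ U j) →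
        ((f.subpath 0 (t n)).trans p).Homotopic (Path.refl (f 0)) := by
      intro n
      induction n with
      | zero =>
        intro j p hp
        refine (hsc j).homotopic_of_forall_mem _ _ (fun s => ?_) (fun s => ?_)
        · rw [Path.trans_apply]
          split_ifs
          · have : ∀ s, f.subpath 0 (t 0) s = f 0 := by
              rw [ht0]; intro s; simp
            rw [this, f.source]; exact hb j
          · exact hp _
        · simpa using hb j
      | succ n ih =>
        intro j p hp
        obtain ⟨i, hi⟩ := ht n
        have hmem : f (t (n + 1)) ∈ U i ∩ U j := by
          refine ⟨hi (right_mem_Icc.2 (htm n.le_succ)), ?_⟩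
          simpa using hp 0
        have hmem' : f 0 ∈ U i ∩ U j := by rw [f.source]; exact ⟨hb i, hb j⟩
        obtain ⟨q, hq⟩ := (hpc i j).joinedIn _ hmem _ hmem'
        have h1 : p.Homotopic q := (hsc j).homotopic_of_forall_mem _ _ hp fun s => (hq s).2
        have hsub : ∀ s, f.subpath (t n) (t (n + 1)) s ∈ U i := by
          intro s
          have : f.subpath (t n) (t (n + 1)) s ∈ f '' Icc (t n) (t (n + 1)) := by
            rw [← Path.range_subpath_of_le _ _ _ (htm n.le_succ)]; exact mem_range_self s
          obtain ⟨s', hs', e⟩ := this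
          rw [← e]; exact hi hs'
        have h2 := ih i ((f.subpath (t n) (t (n + 1))).trans q) (by
          intro s
          rw [Path.trans_apply]
          split_ifs
          · exact hsub _
          · exact (hq _).1)
        have h3 : (f.subpath 0 (t (n + 1))).Homotopic
            ((f.subpath 0 (t n)).trans (f.subpath (t n) (t (n + 1)))) :=
          Path.Homotopic.symm ⟨Path.Homotopy.subpathTransSubpath f 0 (t n) (t (n + 1))⟩
        exact ((h3.hcomp h1).trans (Path.Homotopic.trans_assoc _ _ _)).trans h2
    have htm1 : t m = 1 := hm m le_rfl
    have := claim m j (p.cast (by rw [htm1, f.target]) f.source) hp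
    have h2 := this.pathCast f.source.symm f.source.symm
    have e1 : ((f.subpath 0 (t m)).trans
        (p.cast (by rw [htm1, f.target]) f.source)).cast f.source.symm f.source.symm
        = f.trans p := by
      ext s
      simp only [Path.cast_coe, Path.trans_apply]
      split_ifs
      · have : ∀ s, f.subpath 0 (t m) s = f s := by
          rw [htm1]; intro s; simp
        exact this _
      · rfl
    have e2 : (Path.refl (f 0)).cast f.source.symm f.source.symm = Path.refl b := by
      ext s; simp
    rwa [e1, e2] at h2
  refine simplyConnectedSpace_of_loops b hJ fun f => ?_
  obtain ⟨i, hi⟩ := hUcov b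
  exact Path.Homotopic.trans (Path.Homotopic.symm ⟨Path.Homotopy.transRefl f⟩)
    (key f i (Path.refl b) fun _ => by simpa using hi)

/-- `f` is homotopic to the image of a path under `q`, up to moving the endpoints of the latter
within the fibres. -/
def LiftsUpToHomotopy {Z : Type*} [TopologicalSpace Z] {q : Z → X} (hq : Continuous q)
    {w w' : X} (f : Path w w') : Prop :=
  ∃ (z z' : Z) (g : Path z z') (h : w = q z) (h' : w' = q z'),
    f.Homotopic ((g.map hq).cast h h')

section Lift
variable {Z : Type*} [TopologicalSpace Z] {q : Z → X} {hq : Continuous q}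

theorem LiftsUpToHomotopy.congr {w w' : X} {f f' : Path w w'} (hf : LiftsUpToHomotopy hq f)
    (h : f'.Homotopic f) : LiftsUpToHomotopy hq f' := by
  obtain ⟨z, z', g, h1, h2, h3⟩ := hf
  exact ⟨z, z', g, h1, h2, h.trans h3⟩

theorem LiftsUpToHomotopy.symm {w w' : X} {f : Path w w'} (hf : LiftsUpToHomotopy hq f) :
    LiftsUpToHomotopy hq f.symm := by
  obtain ⟨z, z', g, h1, h2, h3⟩ := hf
  exact ⟨z', z, g.symm, h2, h1, h3.symm₂⟩

theorem homotopic_const_trans {a b c : X} (p : Path a b) (hp : ∀ t, p t = a) (g : Path b c) :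
    (p.trans g).Homotopic (g.cast (by rw [← p.target, hp]) rfl) := by
  obtain rfl : a = b := by rw [← p.target, hp]
  obtain rfl : p = Path.refl a := by ext t; simpa using hp t
  exact ⟨Path.Homotopy.reflTrans g⟩

theorem LiftsUpToHomotopy.trans {w w' w'' : X} {f : Path w w'} {f' : Path w' w''}
    (hfib : ∀ x, IsPathConnected (q ⁻¹' {x}))
    (hf : LiftsUpToHomotopy hq f) (hf' : LiftsUpToHomotopy hq f') :
    LiftsUpToHomotopy hq (f.trans f') := by
  obtain ⟨z, z', g, rfl, rfl, h3⟩ := hf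
  obtain ⟨y, y', k, h1, rfl, h4⟩ := hf'
  obtain ⟨c, hc⟩ := (hfib (q z')).joinedIn z' rfl y h1.symm
  refine ⟨z, y', g.trans (c.trans k), rfl, rfl, ?_⟩
  rw [Path.map_trans, Path.map_trans]
  exact h3.hcomp (h4.trans (homotopic_const_trans (c.map hq) hc (k.map hq)).symm)

/-- A weak form of path lifting transfers simple connectedness along a surjection with path
connected fibres: it is enough that each point `v` of the target has a neighbourhood contracting to
`v` within the target along tracks that lift. -/
theorem simplyConnectedSpace_of_liftable_tracks [SimplyConnectedSpace Z] (hq : Continuous q)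
    (hfib : ∀ x, IsPathConnected (q ⁻¹' {x}))
    (hloc : ∀ v : X, ∃ U : Set X, IsOpen U ∧ v ∈ U ∧ ∃ c : X × I → X, ContinuousOn c (U ×ˢ univ) ∧
      (∀ w ∈ U, c (w, 0) = w) ∧ (∀ w ∈ U, c (w, 1) = v) ∧
      ∀ w ∈ U, ∃ g : C(I, Z), ∀ s, q (g s) = c (w, s)) :
    SimplyConnectedSpace X := by
  obtain ⟨z0⟩ : Nonempty Z := inferInstance
  have hsmall : ∀ v : X, ∃ U : Set X, IsOpen U ∧ v ∈ U ∧ ∀ {w w' : X} (f : Path w w'),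
      (∀ t, f t ∈ U) → LiftsUpToHomotopy hq f := by
    intro v
    obtain ⟨U, hUo, hvU, c, hc, hc0, hc1, hlift⟩ := hloc v
    refine ⟨U, hUo, hvU, fun {w w'} f hf => ?_⟩
    have hw : w ∈ U := by simpa using hf 0
    have hw' : w' ∈ U := by simpa using hf 1
    have track : ∀ w ∈ U, ∃ l : Path w v, (∀ s, l s = c (w, s)) ∧ LiftsUpToHomotopy hq l := by
      intro w hw
      obtain ⟨g, hg⟩ := hlift w hw
      have e1 : w = q (g 0) := by rw [hg, hc0 w hw]
      have e2 : v = q (g 1) := by rw [hg, hc1 w hw]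
      let g' : Path (g 0) (g 1) := ⟨g, rfl, rfl⟩
      exact ⟨(g'.map hq).cast e1 e2, hg, _, _, g', e1, e2, Path.Homotopic.refl _⟩
    obtain ⟨l, hl, hlL⟩ := track w hw
    obtain ⟨r, hr, hrL⟩ := track w' hw'
    have hsq : (f.trans r).Homotopic l := homotopic_of_square f l r (fun p => c (f p.1, p.2))
      (hc.comp_continuous (by fun_prop) fun p => ⟨hf _, mem_univ _⟩)
      (fun t => hc0 _ (hf t)) (fun t => hc1 _ (hf t))
      (fun s => by rw [hl, f.source]) (fun s => by rw [hr, f.target])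
    refine (hlL.trans hfib hrL.symm).congr ?_
    rw [← Path.Homotopic.Quotient.eq] at hsq ⊢
    simp only [Path.Homotopic.Quotient.mk_trans, Path.Homotopic.Quotient.mk_symm] at hsq ⊢
    rw [← hsq]; simp
  choose U hUo hvU hU using hsmall
  -- The unit interval is subdivided so that each piece lifts; the lifts are concatenated,
  -- joining consecutive endpoints within fibres.
  have hall : ∀ {w w' : X} (f : Path w w'), LiftsUpToHomotopy hq f := by
    intro w w' f
    obtain ⟨t, ht0, htm, ⟨m, hm⟩, ht⟩ := exists_monotone_Icc_subset_open_cover_unitInterval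
      (c := fun v => f ⁻¹' U v) (fun i => (hUo i).preimage f.continuous)
      (fun s _ => mem_iUnion.2 ⟨f s, hvU _⟩)
    have claim : ∀ n : ℕ, LiftsUpToHomotopy hq (f.subpath 0 (t n)) := by
      intro n
      induction n with
      | zero =>
        rw [ht0]
        exact hU (f 0) _ fun s => by simpa using hvU (f 0)
      | succ n ih =>
        obtain ⟨v, hv⟩ := ht n
        have hsub : ∀ s, f.subpath (t n) (t (n + 1)) s ∈ U v := by
          intro s
          have : f.subpath (t n) (t (n + 1)) s ∈ f '' Icc (t n) (t (n + 1)) := by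
            rw [← Path.range_subpath_of_le _ _ _ (htm n.le_succ)]; exact mem_range_self s
          obtain ⟨s', hs', e⟩ := this
          rw [← e]; exact hv hs'
        exact (ih.trans hfib (hU v _ hsub)).congr
          (Path.Homotopic.symm ⟨Path.Homotopy.subpathTransSubpath f 0 (t n) (t (n + 1))⟩)
    have h := claim m
    rw [hm m le_rfl, Path.subpath_zero_one] at h
    obtain ⟨z, z', g, h1, h2, h3⟩ := h
    exact ⟨z, z', g, f.source.symm.trans h1, f.target.symm.trans h2,
      h3.pathCast f.source.symm f.target.symm⟩
  refine simplyConnectedSpace_of_loops (q z0) (fun x => ?_) fun f => ?_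
  · obtain ⟨z, hz⟩ := (hfib x).nonempty
    obtain rfl : q z = x := hz
    exact ⟨(PathConnectedSpace.somePath z0 z).map hq⟩
  · obtain ⟨z, z', g, h1, h2, h3⟩ := hall f
    obtain ⟨c, hc⟩ := (hfib (q z0)).joinedIn z' h2.symm z h1.symm
    have h4 := ((SimplyConnectedSpace.paths_homotopic (g.trans c) (Path.refl z)).map
      (⟨q, hq⟩ : C(Z, X))).pathCast h1 h1
    have h5 : (f.trans (Path.refl _)).Homotopic
        (((g.map hq).cast h1 h2).trans ((c.map hq).cast h2 h1)) := by
      refine h3.hcomp ?_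
      have : (c.map hq).cast h2 h1 = Path.refl (q z0) := by ext s; exact hc s
      rw [this]
    have h6 : ((g.map hq).cast h1 h2).trans ((c.map hq).cast h2 h1)
        = ((g.trans c).map hq).cast h1 h1 := by
      rw [Path.map_trans]; rfl
    rw [h6] at h5
    have h7 : ((Path.refl z).map hq).cast h1 h1 = Path.refl (q z0) := by ext s; exact h1.symm
    refine (Path.Homotopic.symm ⟨Path.Homotopy.transRefl f⟩).trans (h5.trans ?_)
    rw [← h7]
    exact h4

end Lift

end OneConnected

/-- A map that is constant on the fibres of an open quotient map descends, with a parameter, on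
a saturated open set. -/
theorem exists_descend {X Y T W : Type*} [TopologicalSpace X] [TopologicalSpace Y]
    [TopologicalSpace T] [TopologicalSpace W] {q : Y → X} (hq : IsOpenMap q) (hqs : q.Surjective)
    {Z : Set Y} (hZ : IsOpen Z) (f : Y × T → W) (hf : ContinuousOn f (Z ×ˢ univ))
    (hfq : ∀ z ∈ Z, ∀ z' ∈ Z, q z = q z' → ∀ t, f (z, t) = f (z', t)) :
    ∃ F : X × T → W, ContinuousOn F ((q '' Z) ×ˢ univ) ∧ ∀ z ∈ Z, ∀ t, F (q z, t) = f (z, t) := by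
  classical
  let sec : X → Y := fun x => if h : ∃ z ∈ Z, q z = x then h.choose else (hqs x).choose
  have hsec : ∀ z ∈ Z, sec (q z) ∈ Z ∧ q (sec (q z)) = q z := by
    intro z hz
    have h : ∃ z' ∈ Z, q z' = q z := ⟨z, hz, rfl⟩
    simp only [sec, dif_pos h]
    exact h.choose_spec
  have hF : ∀ z ∈ Z, ∀ t, f (sec (q z), t) = f (z, t) := fun z hz t =>
    hfq _ (hsec z hz).1 _ hz (hsec z hz).2 t
  refine ⟨fun p => f (sec p.1, p.2), ?_, hF⟩
  rintro ⟨_, t⟩ ⟨⟨z, hz, rfl⟩, _⟩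
  refine ContinuousAt.continuousWithinAt ?_
  have h1 : 𝓝 (q z, t) ≤ Filter.map (Prod.map q id) (𝓝 (z, t)) :=
    (hq.prodMap IsOpenMap.id).nhds_le (z, t)
  refine Filter.Tendsto.mono_left ?_ h1
  rw [Filter.tendsto_map'_iff]
  have h2 : Filter.Tendsto f (𝓝 (z, t)) (𝓝 (f (z, t))) :=
    hf.continuousAt ((hZ.prod isOpen_univ).mem_nhds ⟨hz, mem_univ _⟩)
  change Filter.Tendsto _ _ (𝓝 (f (sec (q z), t)))
  rw [hF z hz]
  refine h2.congr' ?_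
  filter_upwards [(hZ.prod isOpen_univ).mem_nhds (⟨hz, mem_univ _⟩ : (z, t) ∈ Z ×ˢ univ)]
  rintro ⟨z', t'⟩ ⟨hz', _⟩
  exact (hF z' hz' t').symm

/-! ### Diagonal forms and logarithms of unitary matrices -/

/-- Square complex matrices of size `n`. -/
abbrev CMat (n : ℕ) := Matrix (Fin n) (Fin n) ℂ

/-- The unitary group `U(n)`. -/
abbrev UGrp (n : ℕ) := ↥(Matrix.unitaryGroup (Fin n) ℂ)

/-- The number `exp (2πit)` of the unit circle. -/
noncomputable def circ (t : ℝ) : ℂ := Complex.exp (2 * Real.pi * Complex.I * t)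

/-- The Hermitian matrix with eigenvectors the columns of `V` and eigenvalues `h`. -/
noncomputable def hDiag {n : ℕ} (V : UGrp n) (h : Fin n → ℝ) : CMat n :=
  (V : CMat n) * Matrix.diagonal (fun j => (h j : ℂ)) * star (V : CMat n)

/-- The normalized exponential `H ↦ exp (2πiH)`. -/
noncomputable def ex {n : ℕ} (H : CMat n) : CMat n :=
  NormedSpace.exp ((2 * Real.pi * Complex.I : ℂ) • H)

section diag
variable {n : ℕ}

lemma circ_add (s t : ℝ) : circ (s + t) = circ s * circ t := by
  simp [circ, mul_add, Complex.exp_add]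

lemma continuous_circ : Continuous circ := by unfold circ; fun_prop

lemma circ_eq_circ_iff {s t : ℝ} : circ s = circ t ↔ ∃ m : ℤ, s = t + m := by
  unfold circ
  rw [Complex.exp_eq_exp_iff_exists_int]
  have h2 : (2 * Real.pi * Complex.I : ℂ) ≠ 0 := Complex.two_pi_I_ne_zero
  refine exists_congr fun m => ?_
  rw [show (2 * Real.pi * Complex.I * t + m * (2 * Real.pi * Complex.I) : ℂ)
    = 2 * Real.pi * Complex.I * ((t + m : ℝ) : ℂ) by push_cast; ring]
  rw [mul_right_inj' h2]
  norm_cast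

lemma circ_zero : circ 0 = 1 := by simp [circ]

lemma circ_int (m : ℤ) : circ m = 1 := by
  rw [← circ_zero, circ_eq_circ_iff]; exact ⟨m, by simp⟩

lemma circ_eq_one_iff {s : ℝ} : circ s = 1 ↔ ∃ m : ℤ, s = m := by
  rw [← circ_zero, circ_eq_circ_iff]; simp

lemma star_circ (t : ℝ) : star (circ t) = circ (-t) := by
  simp only [circ, Complex.star_def, ← Complex.exp_conj]
  congr 1
  simp [Complex.conj_ofNat]

lemma circ_mul_star (t : ℝ) : circ t * star (circ t) = 1 := by
  rw [star_circ, ← circ_add]; simp [circ_zero]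

lemma exists_circ_eq {z : ℂ} (hz : ‖z‖ = 1) : ∃ t : ℝ, circ t = z := by
  obtain ⟨t, ht⟩ := (Complex.norm_eq_one_iff z).1 hz
  refine ⟨t / (2 * Real.pi), ?_⟩
  rw [← ht, circ]
  congr 1
  have : (Real.pi : ℂ) ≠ 0 := by exact_mod_cast Real.pi_ne_zero
  push_cast
  field_simp

lemma UGrp.mul_star (V : UGrp n) : (V : CMat n) * star (V : CMat n) = 1 :=
  Unitary.coe_mul_star_self V
lemma UGrp.star_mul (V : UGrp n) : star (V : CMat n) * (V : CMat n) = 1 :=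
  Unitary.coe_star_mul_self V

lemma hDiag_add (V : UGrp n) (h h' : Fin n → ℝ) :
    hDiag V (fun j => h j + h' j) = hDiag V h + hDiag V h' := by
  simp only [hDiag, ← mul_add, ← add_mul, Matrix.diagonal_add, Complex.ofReal_add]

lemma hDiag_smul (V : UGrp n) (c : ℝ) (h : Fin n → ℝ) :
    hDiag V (fun j => c * h j) = (c : ℂ) • hDiag V h := by
  simp only [hDiag]
  rw [← Matrix.smul_mul, ← Matrix.mul_smul]
  congr 2
  ext i j
  by_cases h : i = j <;> simp [h, Matrix.diagonal]

lemma hDiag_const (V : UGrp n) (c : ℝ) : hDiag V (fun _ => c) = (c : ℂ) • (1 : CMat n) := by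
  have : (Matrix.diagonal (fun _ => (c : ℂ)) : CMat n) = (c : ℂ) • 1 := by
    rw [Matrix.smul_one_eq_diagonal]
  rw [hDiag, this, Matrix.mul_smul, Matrix.smul_mul, mul_one, UGrp.mul_star]

lemma hDiag_sub (V : UGrp n) (h h' : Fin n → ℝ) :
    hDiag V (fun j => h j - h' j) = hDiag V h - hDiag V h' := by
  rw [eq_sub_iff_add_eq, ← hDiag_add]; simp

lemma trace_hDiag (V : UGrp n) (h : Fin n → ℝ) :
    (hDiag V h).trace = ((∑ j, h j : ℝ) : ℂ) := by
  rw [hDiag, Matrix.trace_mul_cycle, UGrp.star_mul, one_mul, Matrix.trace_diagonal]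
  push_cast; rfl

lemma hDiag_conj (U V : UGrp n) (h : Fin n → ℝ) :
    hDiag (U * V) h = (U : CMat n) * hDiag V h * star (U : CMat n) := by
  simp [hDiag, mul_assoc]

lemma isHermitian_hDiag (V : UGrp n) (h : Fin n → ℝ) : (hDiag V h).IsHermitian := by
  unfold hDiag
  rw [Matrix.star_eq_conjTranspose]
  apply Matrix.isHermitian_mul_mul_conjTranspose
  rw [Matrix.IsHermitian, Matrix.diagonal_conjTranspose]
  congr 1
  ext j; simp

lemma continuous_hDiag : Continuous (fun p : UGrp n × (Fin n → ℝ) => hDiag p.1 p.2) := by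
  unfold hDiag
  have h1 : Continuous fun p : UGrp n × (Fin n → ℝ) => (p.1 : CMat n) :=
    continuous_subtype_val.comp continuous_fst
  refine (h1.mul ?_).mul h1.star
  apply Continuous.matrix_diagonal
  fun_prop

lemma isUnit_coe (V : UGrp n) : IsUnit (V : CMat n) :=
  IsUnit.of_mul_eq_one _ (UGrp.mul_star V)

lemma inv_coe (V : UGrp n) : (V : CMat n)⁻¹ = star (V : CMat n) :=
  Matrix.inv_eq_right_inv (UGrp.mul_star V)

lemma ex_conj (U : UGrp n) (H : CMat n) :
    ex ((U : CMat n) * H * star (U : CMat n)) = (U : CMat n) * ex H * star (U : CMat n) := by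
  unfold ex
  rw [← Matrix.smul_mul, ← Matrix.mul_smul, ← inv_coe, Matrix.exp_conj _ _ (isUnit_coe U)]

lemma ex_hDiag (V : UGrp n) (h : Fin n → ℝ) :
    ex (hDiag V h) = (V : CMat n) * Matrix.diagonal (fun j => circ (h j)) * star (V : CMat n) := by
  rw [hDiag, ex_conj]
  congr 2
  unfold ex
  rw [← Matrix.diagonal_smul, Matrix.exp_diagonal]
  congr 1
  ext j
  rw [Pi.coe_exp]
  simp [circ, Complex.exp_eq_exp_ℂ]

open scoped Matrix.Norms.L2Operator in
lemma continuous_ex : Continuous (ex : CMat n → CMat n) := by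
  unfold ex
  let _ : NormedAlgebra ℚ (CMat n) :=
    { (inferInstance : Algebra ℚ (CMat n)) with
      norm_smul_le := fun q x => by
        rw [← Rat.cast_smul_eq_qsmul ℝ, norm_smul]; simp }
  exact NormedSpace.exp_continuous.comp (continuous_const_smul _)

lemma exists_hDiag {H : CMat n} (hH : H.IsHermitian) : ∃ V h, H = hDiag V h :=
  ⟨hH.eigenvectorUnitary, hH.eigenvalues, hH.spectral_theorem⟩

lemma ex_hDiag_mem_unitary (V : UGrp n) (h : Fin n → ℝ) :
    ex (hDiag V h) ∈ Matrix.unitaryGroup (Fin n) ℂ := by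
  rw [ex_hDiag]
  have hd : Matrix.diagonal (fun j => circ (h j)) ∈ Matrix.unitaryGroup (Fin n) ℂ := by
    rw [Matrix.mem_unitaryGroup_iff, Matrix.star_eq_conjTranspose, Matrix.diagonal_conjTranspose,
      Matrix.diagonal_mul_diagonal, ← Matrix.diagonal_one]
    congr 1; ext j; exact circ_mul_star _
  exact mul_mem (mul_mem V.2 hd) (Unitary.star_mem V.2)

lemma prod_circ (h : Fin n → ℝ) : ∏ j, circ (h j) = circ (∑ j, h j) := by
  simp [circ, Complex.exp_sum, Finset.mul_sum]

lemma det_ex_hDiag (V : UGrp n) (h : Fin n → ℝ) : (ex (hDiag V h)).det = circ (∑ j, h j) := by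
  rw [ex_hDiag, Matrix.det_mul_right_comm, UGrp.mul_star, one_mul, Matrix.det_diagonal, prod_circ]

/-- Every unitary matrix is the exponential of a skew-Hermitian one. -/
lemma exists_ex_hDiag_eq (A : UGrp n) : ∃ V h, ex (hDiag V h) = (A : CMat n) := by
  open scoped Matrix.Norms.L2Operator in
  have hfin : (spectrum ℂ (A : CMat n)).Finite := by
    exact Matrix.finite_spectrum _
  have hsub := spectrum_subset_unitary_of_mem_unitary A.2
  set a : CMat n := cfc (Complex.ofReal ∘ Complex.arg : ℂ → ℂ) (A : CMat n) with ha
  have hsa : IsSelfAdjoint a := IsSelfAdjoint.cfc_arg _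
  have hnorm : IsStarNormal (A : CMat n) := by
    constructor
    exact (UGrp.star_mul A).trans (UGrp.mul_star A).symm
  have hexp : NormedSpace.exp (Complex.I • a) = (A : CMat n) := by
    have hc : ContinuousOn (Complex.ofReal ∘ Complex.arg : ℂ → ℂ) (spectrum ℂ (A : CMat n)) :=
      hfin.continuousOn _
    rw [← CFC.exp_eq_normedSpace_exp (𝕜 := ℂ), ha, ← cfc_comp_smul .., ← cfc_comp' ..]
    conv_rhs => rw [← cfc_id' ℂ (A : CMat n)]
    refine cfc_congr fun y hy ↦ ?_
    have hy1 : ‖y‖ = 1 := by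
      have := hsub hy
      rw [SetLike.mem_coe, Unitary.mem_iff] at this
      have h2 : ((‖y‖ ^ 2 : ℝ) : ℂ) = 1 := by
        rw [← this.1]; simp [Complex.conj_mul']
      have h3 : ‖y‖ ^ 2 = 1 := by exact_mod_cast h2
      nlinarith [norm_nonneg y]
    obtain ⟨θ, rfl⟩ := (Complex.norm_eq_one_iff y).1 hy1
    simp only [Function.comp, smul_eq_mul, ← Complex.exp_eq_exp_ℂ]
    have := Complex.norm_mul_exp_arg_mul_I (Complex.exp (θ * Complex.I))
    rwa [hy1, Complex.ofReal_one, one_mul, mul_comm] at this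
  obtain ⟨V, h, hVh⟩ := exists_hDiag (H := a) hsa
  refine ⟨V, fun j => (2 * Real.pi)⁻¹ * h j, ?_⟩
  rw [hDiag_smul, ← hVh, ← hexp, ex, smul_smul]
  congr 2
  have : (Real.pi : ℂ) ≠ 0 := by exact_mod_cast Real.pi_ne_zero
  push_cast
  field_simp

/-- A diagonal Hermitian form `hDiag V h'` whose exponential agrees with that of `hDiag V₀ h₀`
is diagonal in the basis `V₀` too, because no two of its eigenvalues differ by a nonzero
integer. -/
lemma joint_diag {V V' : UGrp n} {h h' : Fin n → ℝ}
    (hw : ∀ i j, circ (h' i) = circ (h' j) → h' i = h' j)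
    (he : ex (hDiag V h) = ex (hDiag V' h')) :
    ∃ h'' : Fin n → ℝ, hDiag V' h' = hDiag V h'' ∧ (∀ i, circ (h'' i) = circ (h i)) ∧
      ∀ i, ∃ j, h'' i = h' j := by
  -- `N` is the change of basis; its entry `(i, j)` vanishes unless `circ (h i) = circ (h' j)`.
  set N : CMat n := star (V : CMat n) * (V' : CMat n) with hN
  have hNN : N * star N = 1 := by
    simp only [hN, StarMul.star_mul, star_star]
    rw [mul_assoc, ← mul_assoc (V' : CMat n), UGrp.mul_star, one_mul, UGrp.star_mul]
  have hVN : (V : CMat n) * N = V' := by rw [hN, ← mul_assoc, UGrp.mul_star, one_mul]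
  have hcomm : Matrix.diagonal (fun j => circ (h j)) * N
      = N * Matrix.diagonal (fun j => circ (h' j)) := by
    rw [ex_hDiag, ex_hDiag] at he
    have := congrArg (fun X => star (V : CMat n) * X * (V' : CMat n)) he
    simp only [mul_assoc, UGrp.star_mul, mul_one] at this
    rw [← mul_assoc (star (V : CMat n)) (V : CMat n), UGrp.star_mul, one_mul,
      ← mul_assoc (star (V : CMat n)) (V' : CMat n)] at this
    exact this
  have hentry : ∀ i j, N i j ≠ 0 → circ (h i) = circ (h' j) := by
    intro i j hij
    have := congrFun (congrFun hcomm i) j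
    rw [Matrix.diagonal_mul, Matrix.mul_diagonal, mul_comm] at this
    exact mul_left_cancel₀ hij this
  have hrow : ∀ i, ∃ j, N i j ≠ 0 := by
    intro i
    by_contra! hcon
    have := congrFun (congrFun hNN i) i
    rw [Matrix.mul_apply] at this
    simp [hcon] at this
  choose t ht using hrow
  refine ⟨fun i => h' (t i), ?_, fun i => (hentry i _ (ht i)).symm, fun i => ⟨_, rfl⟩⟩
  have key : Matrix.diagonal (fun j => (h' (t j) : ℂ)) * N
      = N * Matrix.diagonal (fun j => (h' j : ℂ)) := by
    ext i j
    rw [Matrix.diagonal_mul, Matrix.mul_diagonal, mul_comm]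
    by_cases hij : N i j = 0
    · simp [hij]
    · rw [hw (t i) j ((hentry i _ (ht i)).symm.trans (hentry i j hij))]
  unfold hDiag
  have e1 : star (V' : CMat n) = star N * star (V : CMat n) := by
    rw [← hVN, StarMul.star_mul]
  rw [e1, ← hVN, mul_assoc (V : CMat n) N, ← key]
  simp only [mul_assoc]
  rw [← mul_assoc N (star N), hNN, one_mul]

/-- Hermitian matrices of trace `k` whose eigenvalues lie in an open interval of length `1`. -/
def logDom (n : ℕ) (k : ℤ) : Set (CMat n) :=
  {H | ∃ (V : UGrp n) (h : Fin n → ℝ), (∀ i j, h i - h j < 1) ∧ ∑ j, h j = k ∧ H = hDiag V h}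

lemma eq_of_circ_eq_of_lt {s t : ℝ} (h : circ s = circ t) (h1 : s - t < 1) (h2 : t - s < 1) :
    s = t := by
  obtain ⟨m, rfl⟩ := circ_eq_circ_iff.1 h
  have h3 : (m : ℝ) < 1 := by linarith
  have h4 : (-1 : ℝ) < m := by linarith
  have h5 : m < 1 := by exact_mod_cast h3
  have h6 : -1 < m := by exact_mod_cast h4
  have : m = 0 := by omega
  simp [this]

/-- Two logarithms of the same matrix, of traces `k ≤ l < k + n` and each with spectrum in an open
interval of length `1`, are simultaneously diagonal and differ by a projection. -/
lemma logDom_pair {k l : ℤ} (hkl : k ≤ l) (hln : l < k + n) {V : UGrp n} {h : Fin n → ℝ}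
    (hw : ∀ i j, h i - h j < 1) (hs : ∑ j, h j = k) {H' : CMat n}
    (hH' : H' ∈ logDom n l) (he : ex (hDiag V h) = ex H') :
    ∃ ε : Fin n → ℝ, (∀ j, ε j = 0 ∨ ε j = 1) ∧
      (∀ i j, (h i + ε i) - (h j + ε j) < 1) ∧
      ∑ j, ε j = ((l - k : ℤ) : ℝ) ∧ H' = hDiag V (fun j => h j + ε j) := by
  obtain ⟨V', h', hw', hs', rfl⟩ := hH'
  obtain ⟨h'', e1, e2, e3⟩ := joint_diag
    (fun i j hij => eq_of_circ_eq_of_lt hij (hw' i j) (hw' j i)) he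
  have hw'' : ∀ i j, h'' i - h'' j < 1 := by
    intro i j
    obtain ⟨i', hi⟩ := e3 i
    obtain ⟨j', hj⟩ := e3 j
    rw [hi, hj]; exact hw' _ _
  have hs'' : ∑ j, h'' j = l := by
    have := congrArg Matrix.trace e1
    rw [trace_hDiag, trace_hDiag, hs'] at this
    exact_mod_cast this.symm
  -- The two logarithms have eigenvalues differing by integers `d i`; by the window condition
  -- these vary by at most one.
  choose d hd using fun i => circ_eq_circ_iff.1 (e2 i)
  have hdd : ∀ i j, d i ≤ d j + 1 := by
    intro i j
    by_contra! hcon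
    have h1 : (d j : ℝ) + 2 ≤ d i := by exact_mod_cast (by omega : d j + 2 ≤ d i)
    have := hw'' i j
    rw [hd, hd] at this
    linarith [hw j i]
  have hsum : ∑ j, d j = l - k := by
    have : ∑ j, h'' j = ∑ j, h j + ∑ j, (d j : ℝ) := by
      rw [← Finset.sum_add_distrib]; exact Finset.sum_congr rfl fun j _ => hd j
    rw [hs, hs''] at this
    have h3 : ((∑ j, d j : ℤ) : ℝ) = ((l - k : ℤ) : ℝ) := by push_cast; linarith
    exact_mod_cast h3
  have hle : ∀ i, d i ≤ 1 := by
    intro i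
    by_contra! hcon
    have : ∀ j ∈ Finset.univ, (1 : ℤ) ≤ d j := fun j _ => by have := hdd i j; omega
    have := Finset.sum_le_sum this
    simp at this
    omega
  have hge : ∀ i, 0 ≤ d i := by
    intro i
    by_contra! hcon
    have h0 : ∀ j ∈ Finset.univ, d j ≤ 0 := fun j _ => by have := hdd j i; omega
    have := Finset.sum_lt_sum h0 ⟨i, Finset.mem_univ i, hcon⟩
    simp at this
    omega
  have hh : h'' = fun j => h j + (d j : ℝ) := funext hd
  refine ⟨fun j => d j, ?_, ?_, ?_, ?_⟩
  · intro j
    have h1 := hle j; have h2 := hge j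
    have : d j = 0 ∨ d j = 1 := by omega
    rcases this with h | h <;> simp [h]
  · intro i j; rw [← hd, ← hd]; exact hw'' i j
  · rw [← hsum]; push_cast; rfl
  · rw [e1, hh]

/-- Logarithms in `logDom n k` are unique. -/
lemma logDom_inj {k : ℤ} {H H' : CMat n} (hn : 0 < n)
    (hH : H ∈ logDom n k) (hH' : H' ∈ logDom n k) (he : ex H = ex H') : H = H' := by
  obtain ⟨V, h, hw, hs, rfl⟩ := hH
  obtain ⟨ε, h1, -, h2, rfl⟩ := logDom_pair le_rfl (by omega) hw hs hH' he
  have h3 : ∑ j, ε j = 0 := by rw [h2]; simp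
  have h4 : ∀ j ∈ Finset.univ, 0 ≤ ε j := fun j _ => by rcases h1 j with h | h <;> simp [h]
  have h5 := (Finset.sum_eq_zero_iff_of_nonneg h4).1 h3
  congr 1
  funext j
  simp [h5 j (Finset.mem_univ j)]

attribute [irreducible] hDiag ex circ

end diag

/-! ### Windows of logarithms on the special unitary group -/

section logs
variable {n : ℕ}

/-- The underlying matrix of an element of `SU(n)`. -/
def mat (A : SUn n) : CMat n := ((A : UGrp n) : CMat n)

lemma isEmbedding_mat : IsEmbedding (mat : SUn n → CMat n) :=
  IsEmbedding.subtypeVal.comp IsEmbedding.subtypeVal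

lemma continuous_mat : Continuous (mat : SUn n → CMat n) := isEmbedding_mat.continuous

lemma mat_mul (A B : SUn n) : mat (A * B) = mat A * mat B := rfl

lemma mat_inv (A : SUn n) : mat A⁻¹ = star (mat A) := rfl

lemma mat_one : mat (1 : SUn n) = 1 := rfl

lemma det_mat (A : SUn n) : (mat A).det = 1 := A.2

lemma mat_mem_unitary (A : SUn n) : mat A ∈ Matrix.unitaryGroup (Fin n) ℂ := A.1.2

lemma exists_mat_eq {B : CMat n} (hB : B ∈ Matrix.unitaryGroup (Fin n) ℂ) (hd : B.det = 1) :
    ∃ A : SUn n, mat A = B :=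
  ⟨⟨⟨B, hB⟩, hd⟩, rfl⟩

open scoped Matrix.Norms.Operator in
instance : CompactSpace (UGrp n) := by
  refine isCompact_iff_compactSpace.1 ?_
  have hc : IsClosed (Matrix.unitaryGroup (Fin n) ℂ : Set (CMat n)) := isClosed_unitary
  refine IsCompact.of_isClosed_subset
    (isCompact_univ_pi fun _ => isCompact_univ_pi fun _ => isCompact_closedBall (0 : ℂ) 1) hc ?_
  intro U hU i _ j _
  simpa using entry_norm_bound_of_unitary hU i j

lemma continuous_det_mat : Continuous (fun A : UGrp n => (A : CMat n).det) :=
  continuous_subtype_val.matrix_det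

instance : CompactSpace (SUn n) := by
  refine isCompact_iff_compactSpace.1 ?_
  apply IsClosed.isCompact
  exact isClosed_eq continuous_det_mat continuous_const

/-- Elements of `SU(n)` having a logarithm in `logDom n k`. -/
def logSet (n : ℕ) (k : ℤ) : Set (SUn n) := {A | ∃ H ∈ logDom n k, ex H = mat A}

open Classical in
/-- The logarithm in `logDom n k` of an element of `logSet n k` (and `0` outside `logSet n k`). -/
noncomputable def lg (n : ℕ) (k : ℤ) (A : SUn n) : CMat n :=
  if h : A ∈ logSet n k then h.choose else 0

lemma lg_mem {k : ℤ} {A : SUn n} (h : A ∈ logSet n k) : lg n k A ∈ logDom n k := by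
  rw [lg, dif_pos h]; exact h.choose_spec.1

lemma ex_lg {k : ℤ} {A : SUn n} (h : A ∈ logSet n k) : ex (lg n k A) = mat A := by
  rw [lg, dif_pos h]; exact h.choose_spec.2

lemma lg_eq (hn : 0 < n) {k : ℤ} {A : SUn n} {H : CMat n} (hH : H ∈ logDom n k)
    (he : ex H = mat A) : lg n k A = H :=
  logDom_inj hn (lg_mem ⟨H, hH, he⟩) hH ((ex_lg ⟨H, hH, he⟩).trans he.symm)

lemma exists_window (hn : 0 < n) {h : Fin n → ℝ} (hw : ∀ i j, h i - h j < 1) :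
    ∃ θ : ℝ, ∀ i, θ < h i ∧ h i < θ + 1 := by
  have : Nonempty (Fin n) := ⟨⟨0, hn⟩⟩
  obtain ⟨i, hi⟩ := Finite.exists_max h
  obtain ⟨j, hj⟩ := Finite.exists_min h
  refine ⟨(h i + h j - 1) / 2, fun k => ?_⟩
  have := hi k; have := hj k; have := hw i j
  constructor <;> linarith

/-- Near `A = ex H` with `H ∈ logDom n k`, every matrix has a logarithm in `logDom n k` close to
`H`. -/
lemma eventually_exists_log (hn : 0 < n) {k : ℤ} {H : CMat n} (hH : H ∈ logDom n k) {A : SUn n}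
    (hA : ex H = mat A) {N : Set (CMat n)} (hN : N ∈ 𝓝 H) :
    ∀ᶠ A' in 𝓝 A, ∃ H' ∈ logDom n k, H' ∈ N ∧ ex H' = mat A' := by
  obtain ⟨V, h, hw, hs, rfl⟩ := hH
  obtain ⟨θ, hθ⟩ := exists_window hn hw
  set K : Set (CMat n) :=
    (fun p : UGrp n × (Fin n → ℝ) => hDiag p.1 p.2) '' (univ ×ˢ (univ.pi fun _ => Icc θ (θ + 1)))
    with hK
  have hKc : IsCompact K :=
    (isCompact_univ.prod (isCompact_univ_pi fun _ => isCompact_Icc)).image continuous_hDiag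
  have hex : ∀ A' : SUn n, ∃ H' ∈ K, ex H' = mat A' := by
    intro A'
    obtain ⟨V', h', he⟩ := exists_ex_hDiag_eq (A' : UGrp n)
    refine ⟨hDiag V' (fun j => θ + Int.fract (h' j - θ)), ⟨(V', _), ⟨mem_univ _, ?_⟩, rfl⟩, ?_⟩
    · intro j _
      exact ⟨by linarith [Int.fract_nonneg (h' j - θ)],
        by linarith [(Int.fract_lt_one (h' j - θ)).le]⟩
    · refine Eq.trans ?_ he
      rw [ex_hDiag, ex_hDiag]
      congr 3
      funext j
      rw [circ_eq_circ_iff]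
      refine ⟨-⌊h' j - θ⌋, ?_⟩
      rw [Int.fract]; push_cast; ring
  choose ℓ hℓK hℓe using hex
  -- the only logarithm of `A` in the compact set `K` is the given one
  have huniq : ∀ H' ∈ K, ex H' = mat A → H' = hDiag V h := by
    rintro _ ⟨⟨V', h'⟩, ⟨-, hh'⟩, rfl⟩ he
    simp only at he ⊢
    obtain ⟨h'', e1, e2, e3⟩ := joint_diag
      (fun i j hij => eq_of_circ_eq_of_lt hij (hw i j) (hw j i)) (he.trans hA.symm)
    rw [e1]
    congr 1
    funext i
    obtain ⟨j, hj⟩ := e3 i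
    have h1 := hh' i (mem_univ i)
    have h2 := hθ j
    refine eq_of_circ_eq_of_lt (e2 i).symm ?_ ?_ <;> rw [hj] <;> linarith [h1.1, h1.2, h2.1, h2.2]
  have hlim : Filter.Tendsto ℓ (𝓝 A) (𝓝 (hDiag V h)) := by
    refine hKc.le_nhds_of_unique_clusterPt (Filter.mem_map.2 (Filter.univ_mem' hℓK)) ?_
    intro H' hH' hcl
    refine huniq H' hH' ?_
    have h1 : MapClusterPt (ex H') (𝓝 A) (fun A' => ex (ℓ A')) := by
      exact MapClusterPt.continuousAt_comp continuous_ex.continuousAt hcl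
    simp only [hℓe] at h1
    exact eq_of_nhds_neBot (Filter.NeBot.mono h1 (inf_le_inf_left _ (continuous_mat.tendsto A)))
  have hdet : ∀ t : ℝ, (∀ j, h j ≠ t) → ∀ᶠ A' in 𝓝 A, (ℓ A' - (t : ℂ) • 1).det ≠ 0 := by
    intro t ht
    have hc : Continuous fun X : CMat n => (X - (t : ℂ) • 1).det := by fun_prop
    refine (hc.tendsto _).comp hlim |>.eventually_ne ?_
    rw [← hDiag_const V, ← hDiag_sub, hDiag, Matrix.det_mul_right_comm, UGrp.mul_star, one_mul,
      Matrix.det_diagonal, Finset.prod_ne_zero_iff]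
    intro j _
    have := ht j
    rw [← sub_ne_zero] at this
    exact_mod_cast this
  have htr : ∀ᶠ A' in 𝓝 A, ‖(ℓ A').trace - (hDiag V h).trace‖ < 1 := by
    have hc : Continuous fun X : CMat n => ‖X.trace - (hDiag V h).trace‖ := by fun_prop
    refine ((hc.tendsto _).comp hlim).eventually_lt_const ?_
    simp
  filter_upwards [hdet θ (fun j => (hθ j).1.ne'), hdet (θ + 1) (fun j => (hθ j).2.ne), htr,
    hlim hN] with A' h1 h2 h3 h4
  refine ⟨ℓ A', ?_, h4, hℓe A'⟩
  obtain ⟨⟨V', h'⟩, ⟨-, hh'⟩, hq⟩ := hℓK A'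
  simp only at hq
  have hdet' : ∀ t : ℝ, (ℓ A' - (t : ℂ) • 1).det ≠ 0 → ∀ j, h' j ≠ t := by
    intro t ht j hj
    apply ht
    rw [← hq, ← hDiag_const V', ← hDiag_sub, hDiag, Matrix.det_mul_right_comm, UGrp.mul_star,
      one_mul, Matrix.det_diagonal, Finset.prod_eq_zero_iff]
    exact ⟨j, Finset.mem_univ j, by simp [hj]⟩
  refine ⟨V', h', ?_, ?_, hq.symm⟩
  · intro i j
    have a1 := lt_of_le_of_ne (hh' j (mem_univ j)).1 (hdet' _ h1 j).symm
    have a2 := lt_of_le_of_ne (hh' i (mem_univ i)).2 (hdet' _ h2 i)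
    linarith
  · have hd1 : circ (∑ j, h' j) = 1 := by
      rw [← det_ex_hDiag V', hq, hℓe, det_mat]
    obtain ⟨m, hm⟩ := circ_eq_one_iff.1 hd1
    rw [← hq, trace_hDiag, trace_hDiag, hs, hm, ← Complex.ofReal_sub, Complex.norm_real] at h3
    have h5 : |((m - k : ℤ) : ℝ)| < 1 := by push_cast; exact h3
    have h6 : |m - k| < 1 := by exact_mod_cast h5
    rw [Int.abs_lt_one_iff] at h6
    rw [hm, sub_eq_zero.1 h6]

lemma isOpen_logSet (hn : 0 < n) (k : ℤ) : IsOpen (logSet n k) := by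
  rw [isOpen_iff_mem_nhds]
  rintro A ⟨H, hH, hA⟩
  filter_upwards [eventually_exists_log hn hH hA Filter.univ_mem] with A' hA'
  obtain ⟨H', h1, -, h2⟩ := hA'
  exact ⟨H', h1, h2⟩

lemma continuousOn_lg (hn : 0 < n) (k : ℤ) : ContinuousOn (lg n k) (logSet n k) := by
  intro A hA
  apply ContinuousAt.continuousWithinAt
  intro N hN
  rw [Filter.mem_map]
  filter_upwards [eventually_exists_log hn (lg_mem hA) (ex_lg hA) hN] with A' hA'
  obtain ⟨H', h1, h2, h3⟩ := hA'
  rw [mem_preimage, lg_eq hn h1 h3]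
  exact h2

attribute [irreducible] lg

end logs

/-! ### The open cover of the special unitary group -/

section cover
variable {n : ℕ}

lemma joinedIn_of_continuous {X : Type*} [TopologicalSpace X] {S : Set X} {x y : X} (f : I → X)
    (hf : Continuous f) (hS : ∀ t, f t ∈ S) (h0 : f 0 = x) (h1 : f 1 = y) : JoinedIn S x y :=
  ⟨⟨⟨f, hf⟩, h0, h1⟩, hS⟩

/-- Conjugation of `SU(n)` by an element of `U(n)`. -/
def conjU (U : UGrp n) (A : SUn n) : SUn n :=
  ⟨U * A.1 * U⁻¹, (MonoidHom.normal_ker _).conj_mem A.1 A.2 U⟩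

lemma mat_conjU (U : UGrp n) (A : SUn n) :
    mat (conjU U A) = (U : CMat n) * mat A * star (U : CMat n) := rfl

attribute [irreducible] conjU

lemma mat_injective : Function.Injective (mat : SUn n → CMat n) := isEmbedding_mat.injective

lemma conjU_mul (U V : UGrp n) (A : SUn n) : conjU (U * V) A = conjU U (conjU V A) := by
  apply mat_injective; simp [mat_conjU, mul_assoc]

lemma conjU_one (A : SUn n) : conjU 1 A = A := by
  apply mat_injective; simp [mat_conjU]

lemma continuous_conjU : Continuous (fun p : UGrp n × SUn n => conjU p.1 p.2) := by
  rw [isEmbedding_mat.continuous_iff]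
  have h1 : Continuous fun p : UGrp n × SUn n => (p.1 : CMat n) :=
    continuous_subtype_val.comp continuous_fst
  have h2 : Continuous fun p : UGrp n × SUn n =>
      (p.1 : CMat n) * mat p.2 * star (p.1 : CMat n) :=
    (h1.mul (continuous_mat.comp continuous_snd)).mul h1.star
  refine h2.congr fun p => ?_
  exact (mat_conjU p.1 p.2).symm

lemma conj_mem_logDom {k : ℤ} (U : UGrp n) {H : CMat n} (hH : H ∈ logDom n k) :
    (U : CMat n) * H * star (U : CMat n) ∈ logDom n k := by
  obtain ⟨V, h, hw, hs, rfl⟩ := hH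
  exact ⟨U * V, h, hw, hs, (hDiag_conj U V h).symm⟩

lemma conjU_mem_logSet {k : ℤ} (U : UGrp n) {A : SUn n} (hA : A ∈ logSet n k) :
    conjU U A ∈ logSet n k := by
  obtain ⟨H, hH, he⟩ := hA
  exact ⟨_, conj_mem_logDom U hH, by rw [ex_conj, he, mat_conjU]⟩

lemma lg_conjU (hn : 0 < n) {k : ℤ} (U : UGrp n) {A : SUn n} (hA : A ∈ logSet n k) :
    lg n k (conjU U A) = (U : CMat n) * lg n k A * star (U : CMat n) :=
  lg_eq hn (conj_mem_logDom U (lg_mem hA)) (by rw [ex_conj, ex_lg hA, mat_conjU])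

open Classical in
/-- The element `exp (2πiH)` of `SU(n)`, when that matrix lies in `SU(n)` (and `1` otherwise). -/
noncomputable def sx (H : CMat n) : SUn n := if h : ∃ A : SUn n, mat A = ex H then h.choose else 1

lemma mat_sx {H : CMat n} (h : ∃ A : SUn n, mat A = ex H) : mat (sx H) = ex H := by
  rw [sx, dif_pos h]; exact h.choose_spec

attribute [irreducible] sx

lemma sx_eq {H : CMat n} {A : SUn n} (h : ex H = mat A) : sx H = A :=
  mat_injective ((mat_sx ⟨A, h.symm⟩).trans h)

lemma exists_mat_ex (V : UGrp n) (h : Fin n → ℝ) {m : ℤ} (hm : ∑ j, h j = m) :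
    ∃ A : SUn n, mat A = ex (hDiag V h) :=
  exists_mat_eq (ex_hDiag_mem_unitary V h) (by rw [det_ex_hDiag, hm, circ_int])

lemma exists_mat_ex_of_mem {k : ℤ} {H : CMat n} (hH : H ∈ logDom n k) :
    ∃ A : SUn n, mat A = ex H := by
  obtain ⟨V, h, -, hs, rfl⟩ := hH
  exact exists_mat_ex V h hs

lemma continuousOn_sx_comp {T : Type*} [TopologicalSpace T] {S : Set T} {f : T → CMat n}
    (hf : ContinuousOn f S) (h : ∀ t ∈ S, ∃ A : SUn n, mat A = ex (f t)) :
    ContinuousOn (fun t => sx (f t)) S := by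
  rw [isEmbedding_mat.continuousOn_iff]
  refine (continuous_ex.comp_continuousOn hf).congr fun t ht => ?_
  exact mat_sx (h t ht)

lemma sx_mem {k : ℤ} {H : CMat n} (hH : H ∈ logDom n k) : sx H ∈ logSet n k :=
  ⟨H, hH, (mat_sx (exists_mat_ex_of_mem hH)).symm⟩

lemma conjU_sx {H : CMat n} (U : UGrp n) (h : ∃ A : SUn n, mat A = ex H) :
    conjU U (sx H) = sx ((U : CMat n) * H * star (U : CMat n)) := by
  symm
  apply sx_eq
  rw [ex_conj, mat_conjU, mat_sx h]

/-- Choosing the eigenvalues of a logarithm in `[0, 1)`, the trace becomes an integer `0 ≤ k < n`, so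
these sets cover `SU(n)`. -/
lemma exists_mem_logSet (hn : 0 < n) (A : SUn n) : ∃ k : Fin n, A ∈ logSet n k := by
  obtain ⟨V, h, he⟩ := exists_ex_hDiag_eq (A : UGrp n)
  set g : Fin n → ℝ := fun j => Int.fract (h j) with hg
  have he' : ex (hDiag V g) = mat A := by
    refine Eq.trans ?_ he
    rw [ex_hDiag, ex_hDiag]
    congr 3
    funext j
    rw [circ_eq_circ_iff]
    refine ⟨-⌊h j⌋, ?_⟩
    simp only [hg, Int.fract]; push_cast; ring
  obtain ⟨m, hm⟩ := circ_eq_one_iff.1 (by rw [← det_ex_hDiag V, he', det_mat] :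
    circ (∑ j, g j) = 1)
  have h0 : 0 ≤ ∑ j, g j := Finset.sum_nonneg fun j _ => Int.fract_nonneg _
  have h1 : ∑ j, g j < n := by
    have : Nonempty (Fin n) := ⟨⟨0, hn⟩⟩
    calc ∑ j, g j < ∑ _j : Fin n, (1 : ℝ) :=
          Finset.sum_lt_sum_of_nonempty Finset.univ_nonempty fun j _ => Int.fract_lt_one _
      _ = n := by simp
  rw [hm] at h0 h1
  have h0' : 0 ≤ m := by exact_mod_cast h0
  have h1' : m < n := by exact_mod_cast h1
  refine ⟨⟨m.toNat, by omega⟩, hDiag V g, ⟨V, g, ?_, ?_, rfl⟩, he'⟩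
  · intro i j
    linarith [Int.fract_lt_one (h i), Int.fract_nonneg (h j)]
  · rw [hm]; simp [Int.toNat_of_nonneg h0']

/-- The straight-line contraction of `logSet n k`, in logarithmic coordinates. -/
noncomputable def lgContr (n : ℕ) (k : ℤ) (p : SUn n × I) : SUn n :=
  sx (((1 - p.2 : ℝ) : ℂ) • lg n k p.1 + ((p.2 * (k / n) : ℝ) : ℂ) • (1 : CMat n))

lemma lgContr_aux (hn : 0 < n) {k : ℤ} {H : CMat n} (hH : H ∈ logDom n k) (s : I) :
    ((1 - s : ℝ) : ℂ) • H + ((s * (k / n) : ℝ) : ℂ) • (1 : CMat n) ∈ logDom n k := by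
  obtain ⟨V, h, hw, hs, rfl⟩ := hH
  refine ⟨V, fun j => (1 - s) * h j + s * (k / n), ?_, ?_, ?_⟩
  · intro i j
    have h1 := hw i j
    have h2 := s.2.1
    have h3 := s.2.2
    by_cases h4 : h i - h j ≤ 0
    · nlinarith
    · nlinarith
  · rw [Finset.sum_add_distrib, ← Finset.mul_sum, hs]
    have : (n : ℝ) ≠ 0 := by positivity
    simp
    field_simp
    ring
  · rw [hDiag_add, hDiag_const, hDiag_smul]

lemma lgContr_mem (hn : 0 < n) {k : ℤ} {A : SUn n} (hA : A ∈ logSet n k) (s : I) :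
    lgContr n k (A, s) ∈ logSet n k := sx_mem (lgContr_aux hn (lg_mem hA) s)

lemma continuousOn_lgContr (hn : 0 < n) (k : ℤ) :
    ContinuousOn (lgContr n k) (logSet n k ×ˢ univ) := by
  apply continuousOn_sx_comp
  · have h1 : ContinuousOn (fun p : SUn n × I => lg n k p.1) (logSet n k ×ˢ univ) :=
      (continuousOn_lg hn k).comp continuousOn_fst fun p hp => hp.1
    have h2 : Continuous fun p : SUn n × I => ((1 - p.2 : ℝ) : ℂ) := by fun_prop
    have h3 : Continuous fun p : SUn n × I => ((p.2 * (k / n) : ℝ) : ℂ) • (1 : CMat n) := by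
      fun_prop
    exact (h2.continuousOn.smul h1).add h3.continuousOn
  · exact fun p hp => exists_mat_ex_of_mem (lgContr_aux hn (lg_mem hp.1) p.2)

lemma lgContr_zero {k : ℤ} {A : SUn n} (hA : A ∈ logSet n k) : lgContr n k (A, 0) = A := by
  apply sx_eq; simp [ex_lg hA]

lemma lgContr_one {k : ℤ} (A : SUn n) :
    lgContr n k (A, 1) = sx (((k / n : ℝ) : ℂ) • (1 : CMat n)) := by
  simp [lgContr]

lemma lgContr_conjU (hn : 0 < n) {k : ℤ} (U : UGrp n) {A : SUn n} (hA : A ∈ logSet n k) (s : I) :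
    lgContr n k (conjU U A, s) = conjU U (lgContr n k (A, s)) := by
  rw [lgContr, lgContr, conjU_sx _ (exists_mat_ex_of_mem (lgContr_aux hn (lg_mem hA) s))]
  congr 1
  simp only [lg_conjU hn U hA, mul_add, add_mul, Matrix.mul_smul, Matrix.smul_mul, mul_one,
    UGrp.mul_star]

lemma sx_const_mem (hn : 0 < n) (k : ℤ) :
    (sx (((k / n : ℝ) : ℂ) • (1 : CMat n)) ∈ logSet n k) := by
  have : (((k / n : ℝ) : ℂ) • (1 : CMat n)) ∈ logDom n k := by
    refine ⟨1, fun _ => (k / n : ℝ), by simp, ?_, (hDiag_const _ _).symm⟩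
    have : (n : ℝ) ≠ 0 := by positivity
    simp; field_simp
  exact sx_mem this

lemma joined_one_UGrp (U : UGrp n) : Joined 1 U := by
  obtain ⟨V, h, he⟩ := exists_ex_hDiag_eq U
  refine joinedIn_univ.1 ?_
  refine joinedIn_of_continuous
    (fun t => ⟨ex (hDiag V fun j => t * h j), ex_hDiag_mem_unitary _ _⟩) ?_
    (fun _ => mem_univ _) ?_ ?_
  · refine Continuous.subtype_mk ?_ _
    refine continuous_ex.comp (continuous_hDiag.comp (Continuous.prodMk continuous_const ?_))
    fun_prop
  · apply Subtype.ext
    simp [ex_hDiag, circ_zero]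
  · apply Subtype.ext
    simp [he]

/-- The eigenvalues can be permuted, along with the eigenvectors. -/
lemma hDiag_perm (V : UGrp n) (h : Fin n → ℝ) (π : Equiv.Perm (Fin n)) :
    ∃ V' : UGrp n, hDiag V' (fun j => h (π j)) = hDiag V h := by
  have hu : (V : CMat n).submatrix id π ∈ Matrix.unitaryGroup (Fin n) ℂ := by
    rw [Matrix.mem_unitaryGroup_iff, Matrix.star_eq_conjTranspose, Matrix.conjTranspose_submatrix,
      Matrix.submatrix_mul_equiv, ← Matrix.star_eq_conjTranspose, UGrp.mul_star]
    simp
  refine ⟨⟨_, hu⟩, ?_⟩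
  have hd : Matrix.diagonal (fun j => ((h (π j) : ℝ) : ℂ))
      = (Matrix.diagonal (fun j => (h j : ℂ))).submatrix π π := by
    rw [Matrix.submatrix_diagonal_equiv]; rfl
  unfold hDiag
  rw [hd, Matrix.star_eq_conjTranspose, Matrix.conjTranspose_submatrix,
      Matrix.submatrix_mul_equiv, Matrix.submatrix_mul_equiv]
  simp [Matrix.star_eq_conjTranspose]

/-- As `U(n)` is path connected, conjugates are joined within any conjugation-invariant set. -/
lemma joinedIn_conjU {S : Set (SUn n)} (hS : ∀ U : UGrp n, ∀ A ∈ S, conjU U A ∈ S) (U : UGrp n)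
    {A : SUn n} (hA : A ∈ S) : JoinedIn S A (conjU U A) := by
  obtain ⟨γ⟩ := joined_one_UGrp U
  refine joinedIn_of_continuous (fun t => conjU (γ t) A)
    (continuous_conjU.comp (γ.continuous.prodMk continuous_const)) (fun t => hS (γ t) A hA) ?_ ?_
  · rw [γ.source, conjU_one]
  · rw [γ.target]

/-- The arithmetic progression with step `1/n` and sum `k`. -/
noncomputable def arith (n : ℕ) (k : ℤ) (j : Fin n) : ℝ :=
  j / n + (k - ((n : ℝ) - 1) / 2) / n

lemma sum_arith (hn : 0 < n) (k : ℤ) : ∑ j, arith n k j = k := by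
  have h1 : ∑ j : Fin n, (j : ℝ) = n * (n - 1) / 2 := by
    rw [Fin.sum_univ_eq_sum_range (fun j => (j : ℝ)) n]
    have := Finset.sum_range_id_mul_two n
    have h2 : ((∑ i ∈ Finset.range n, i : ℕ) : ℝ) * 2 = n * (n - 1 : ℕ) := by exact_mod_cast this
    rw [Nat.cast_sub (by omega)] at h2
    push_cast at h2
    linarith
  have : (n : ℝ) ≠ 0 := by positivity
  simp only [arith]
  rw [Finset.sum_add_distrib, ← Finset.sum_div, h1]
  simp
  field_simp
  ring

/-- The indicator of the first `m` indices. -/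
noncomputable def firstInd (n : ℕ) (m : ℤ) (j : Fin n) : ℝ := if (j : ℤ) < m then 1 else 0

lemma arith_add_firstInd (hn : 0 < n) (k : ℤ) (m : ℤ) (i j : Fin n) :
    (arith n k i + firstInd n m i) - (arith n k j + firstInd n m j) < 1 := by
  have hn' : (0 : ℝ) < n := by positivity
  have key : (i : ℝ) - j < n * (1 - (firstInd n m i - firstInd n m j)) := by
    unfold firstInd
    have hi := i.2
    have hj := j.2
    split_ifs with h1 h2 h2
    · have : (i : ℝ) + 1 ≤ n := by exact_mod_cast hi
      have : (0 : ℝ) ≤ j := by positivity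
      linarith
    · have : (i : ℤ) < j := by omega
      have : (i : ℝ) < j := by exact_mod_cast this
      linarith
    · have : (i : ℝ) + 1 ≤ n := by exact_mod_cast hi
      have : (0 : ℝ) ≤ j := by positivity
      linarith
    · have : (i : ℝ) + 1 ≤ n := by exact_mod_cast hi
      have : (0 : ℝ) ≤ j := by positivity
      linarith
  have : ((i : ℝ) - j) / n < 1 - (firstInd n m i - firstInd n m j) := by
    rw [div_lt_iff₀ hn']; linarith
  rw [sub_div] at this
  unfold arith
  linarith

lemma sum_firstInd {m : ℤ} (h0 : 0 ≤ m) (hm : m ≤ n) : ∑ j, firstInd n m j = m := by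
  lift m to ℕ using h0
  have hm' : m ≤ n := by exact_mod_cast hm
  have : ∀ j : Fin n, firstInd n m j = if (j : ℕ) < m then 1 else 0 := by
    intro j; simp [firstInd]
  simp only [this]
  rw [Fin.sum_univ_eq_sum_range (fun j => if j < m then (1 : ℝ) else 0) n]
  rw [← Finset.sum_filter]
  have : (Finset.range n).filter (· < m) = Finset.range m := by ext; simp; omega
  simp [this]

/-- A `0`-`1` vector which is `1` exactly on a set of strictly lowest places of a monotone
sequence is `firstInd`. -/
lemma eq_firstInd {h ε : Fin n → ℝ} (hmono : Monotone h) (hε : ∀ j, ε j = 0 ∨ ε j = 1)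
    (hw : ∀ i j, (h i + ε i) - (h j + ε j) < 1) {m : ℤ} (hm : ∑ j, ε j = m) :
    ε = firstInd n m := by
  have hdown : ∀ i j : Fin n, i ≤ j → ε j = 1 → ε i = 1 := by
    intro i j hij hj
    rcases hε i with h0 | h1
    · have := hw j i
      have := hmono hij
      linarith
    · exact h1
  have hlow : ∀ j, ε j = 1 → ((j : ℕ) : ℝ) + 1 ≤ m := by
    intro j hj
    rw [← hm]
    calc ((j : ℕ) : ℝ) + 1 = ∑ _i ∈ Finset.Iic j, (1 : ℝ) := by simp
      _ = ∑ i ∈ Finset.Iic j, ε i :=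
          Finset.sum_congr rfl fun i hi => (hdown i j (Finset.mem_Iic.1 hi) hj).symm
      _ ≤ _ := Finset.sum_le_sum_of_subset_of_nonneg (Finset.subset_univ _) fun i _ _ => by
          rcases hε i with h | h <;> simp [h]
  have hhigh : ∀ j, ε j = 0 → (m : ℝ) ≤ (j : ℕ) := by
    intro j hj
    rw [← hm]
    have h0 : ∀ i, j ≤ i → ε i = 0 := by
      intro i hi
      rcases hε i with h | h
      · exact h
      · have := hdown j i hi h
        linarith
    calc ∑ i, ε i = ∑ i ∈ Finset.Iio j, ε i := by
          symm
          apply Finset.sum_subset (Finset.subset_univ _)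
          intro i _ hi
          exact h0 i (by simpa using hi)
      _ ≤ ∑ _i ∈ Finset.Iio j, (1 : ℝ) := Finset.sum_le_sum fun i _ => by
          rcases hε i with h | h <;> simp [h]
      _ = _ := by simp
  funext j
  unfold firstInd
  rcases hε j with h | h
  · have : m ≤ (j : ℤ) := by exact_mod_cast hhigh j h
    rw [h, if_neg (by omega)]
  · have : (j : ℤ) + 1 ≤ m := by exact_mod_cast hlow j h
    rw [h, if_pos (by omega)]

lemma ex_add_int (V : UGrp n) {h ε : Fin n → ℝ} (hε : ∀ j, ε j = 0 ∨ ε j = 1) :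
    ex (hDiag V fun j => h j + ε j) = ex (hDiag V h) := by
  rw [ex_hDiag, ex_hDiag]
  congr 3
  funext j
  rw [circ_eq_circ_iff]
  rcases hε j with h | h
  · exact ⟨0, by simp [h]⟩
  · exact ⟨1, by simp [h]⟩

lemma firstInd_zero_or_one (m : ℤ) (j : Fin n) : firstInd n m j = 0 ∨ firstInd n m j = 1 := by
  unfold firstInd; split_ifs <;> simp

/-- The element with eigenvalues `exp (2πi (k - (n - 1) / 2 + j) / n)` lies in all of
`logSet n k`, …, `logSet n (k + n - 1)`: adding `1` to the `l - k` lowest eigenvalues of its logarithm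
still gives an arithmetic progression of step `1/n`, in another order. -/
lemma sx_arith_mem (hn : 0 < n) {k l : ℤ} (hkl : k ≤ l) (hln : l < k + n) (V : UGrp n) :
    sx (hDiag V (arith n k)) ∈ logSet n l := by
  refine ⟨hDiag V (fun j => arith n k j + firstInd n (l - k) j), ⟨V, _, ?_, ?_, rfl⟩, ?_⟩
  · exact arith_add_firstInd hn k _
  · rw [Finset.sum_add_distrib, sum_arith hn, sum_firstInd (by omega) (by omega)]
    push_cast; ring
  · rw [ex_add_int _ (firstInd_zero_or_one _), mat_sx (exists_mat_ex _ _ (sum_arith hn k))]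

/-- Every intersection of sets `logSet n l`, `0 ≤ l < n`, is path connected. -/
lemma isPathConnected_iInter_logSet (hn : 0 < n) (S : Set ℤ) (hS : S.Nonempty)
    (hS' : ∀ l ∈ S, 0 ≤ l ∧ l < n) : IsPathConnected {A : SUn n | ∀ l ∈ S, A ∈ logSet n l} := by
  obtain ⟨k, hkS, hk⟩ : ∃ k ∈ S, ∀ l ∈ S, k ≤ l := by
    obtain ⟨k, hk1, hk2⟩ := Int.exists_least_of_bdd (P := (· ∈ S)) ⟨0, fun z hz => (hS' z hz).1⟩ hS
    exact ⟨k, hk1, hk2⟩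
  have hkn : ∀ l ∈ S, l < k + n := fun l hl => by
    have := (hS' l hl).2; have := (hS' k hkS).1; omega
  set W : Set (SUn n) := {A : SUn n | ∀ l ∈ S, A ∈ logSet n l} with hW
  have hinv : ∀ U : UGrp n, ∀ A ∈ W, conjU U A ∈ W :=
    fun U A hA l hl => conjU_mem_logSet U (hA l hl)
  refine ⟨sx (hDiag 1 (arith n k)), fun l hl => sx_arith_mem hn (hk l hl) (hkn l hl) 1, ?_⟩
  intro A hA
  obtain ⟨H, ⟨V₀, h₀, hw₀, hs₀, rfl⟩, he₀⟩ := hA k hkS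
  obtain ⟨V, hV⟩ := hDiag_perm V₀ h₀ (Tuple.sort h₀)
  set h : Fin n → ℝ := fun j => h₀ (Tuple.sort h₀ j) with hh
  have hmono : Monotone h := Tuple.monotone_sort h₀
  have hw : ∀ i j, h i - h j < 1 := fun i j => hw₀ _ _
  have hs : ∑ j, h j = k := by rw [← hs₀]; exact Equiv.sum_comp _ _
  have he : ex (hDiag V h) = mat A := by rw [hV, he₀]
  have hlog : ∀ l ∈ S, ∀ i j, (h i + firstInd n (l - k) i) - (h j + firstInd n (l - k) j) < 1 := by
    intro l hl
    obtain ⟨ε, h1, h2, h3, -⟩ := logDom_pair (hk l hl) (hkn l hl) hw hs (lg_mem (hA l hl))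
      (he.trans (ex_lg (hA l hl)).symm)
    rw [← eq_firstInd hmono h1 h2 h3]
    exact h2
  -- The eigenvalues move along the segment to an arithmetic progression; the eigenbasis is
  -- moved afterwards.
  set g : I → Fin n → ℝ := fun t j => (1 - t) * h j + t * arith n k j with hg
  have hgs : ∀ t, ∑ j, g t j = k := by
    intro t
    rw [hg]
    simp only
    rw [Finset.sum_add_distrib, ← Finset.mul_sum, ← Finset.mul_sum, hs, sum_arith hn]
    ring
  have hj1 : JoinedIn W A (sx (hDiag V (arith n k))) := by
    refine joinedIn_of_continuous (fun t => sx (hDiag V (g t))) ?_ ?_ ?_ ?_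
    · rw [← continuousOn_univ]
      refine continuousOn_sx_comp ?_ fun t _ => exists_mat_ex V _ (hgs t)
      refine Continuous.continuousOn ?_
      exact continuous_hDiag.comp (Continuous.prodMk continuous_const (by fun_prop))
    · intro t l hl
      refine ⟨hDiag V (fun j => g t j + firstInd n (l - k) j), ⟨V, _, ?_, ?_, rfl⟩, ?_⟩
      · intro i j
        have h1 := hlog l hl i j
        have h2 := arith_add_firstInd hn k (l - k) i j
        have h3 := t.2.1
        have h4 := t.2.2
        set a := (h i + firstInd n (l - k) i) - (h j + firstInd n (l - k) j)
        set b := (arith n k i + firstInd n (l - k) i) - (arith n k j + firstInd n (l - k) j)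
        have : (g t i + firstInd n (l - k) i) - (g t j + firstInd n (l - k) j)
            = (1 - t) * a + t * b := by
          simp only [hg, a, b]; ring
        rw [this]
        by_cases h5 : (t : ℝ) = 0
        · rw [h5]; linarith
        · have : (0 : ℝ) < t := lt_of_le_of_ne h3 (Ne.symm h5)
          nlinarith
      · rw [Finset.sum_add_distrib, hgs, sum_firstInd (by have := hk l hl; omega)
          (by have := hkn l hl; omega)]
        push_cast; ring
      · rw [ex_add_int _ (firstInd_zero_or_one _), mat_sx (exists_mat_ex _ _ (hgs t))]
    · apply sx_eq; simp [hg, he]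
    · simp [hg]
  have hj2 : JoinedIn W (sx (hDiag 1 (arith n k))) (sx (hDiag V (arith n k))) := by
    have h1 := joinedIn_conjU hinv V
      (A := sx (hDiag 1 (arith n k))) (fun l hl => sx_arith_mem hn (hk l hl) (hkn l hl) 1)
    rwa [conjU_sx _ (exists_mat_ex _ _ (sum_arith hn k)), ← hDiag_conj, mul_one] at h1
  exact hj2.trans hj1.symm

end cover

/-! ### Grassmannians are simply connected -/

section Grass
variable {n m : ℕ}

lemma contractibleSpace_of_contraction {X : Type*} [TopologicalSpace X] {V : Set X} (F : X × I → X)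
    (hF : ContinuousOn F (V ×ˢ univ)) (h0 : ∀ x ∈ V, F (x, 0) = x) {b : X} (hb : b ∈ V)
    (h1 : ∀ x ∈ V, F (x, 1) = b) (hm : ∀ x ∈ V, ∀ s, F (x, s) ∈ V) : ContractibleSpace V := by
  rw [contractible_iff_id_nullhomotopic]
  refine ⟨⟨b, hb⟩, ⟨{ toFun := fun p => ⟨F (p.2, p.1), hm _ p.2.2 _⟩, continuous_toFun := ?_, map_zero_left := ?_, map_one_left := ?_ }⟩⟩
  · refine Continuous.subtype_mk ?_ _
    exact hF.comp_continuous (f := fun p : I × V => ((p.2 : X), p.1)) (by fun_prop)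
      fun p => ⟨p.2.2, mem_univ _⟩
  · intro x; exact Subtype.ext (h0 _ x.2)
  · intro x; exact Subtype.ext (h1 _ x.2)

lemma ContinuousOn.matrix_inv {T : Type*} [TopologicalSpace T] {S : Set T}
    {f : T → Matrix (Fin m) (Fin m) ℂ} (hf : ContinuousOn f S) (h : ∀ t ∈ S, (f t).det ≠ 0) :
    ContinuousOn (fun t => (f t)⁻¹) S := by
  simp only [Matrix.inv_def, Ring.inverse_eq_inv']
  refine ContinuousOn.smul (ContinuousOn.inv₀ ?_ h) ?_
  · exact (Continuous.matrix_det continuous_id).comp_continuousOn hf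
  · exact (Continuous.matrix_adjugate continuous_id).comp_continuousOn hf

/-- The Grassmannian of `m`-planes in `ℂⁿ`, as the space of orthogonal projections of rank `m`. -/
def Gr (n m : ℕ) : Set (CMat n) := {P | P.IsHermitian ∧ P * P = P ∧ P.trace = m}

lemma hDiag_mul (V : UGrp n) (h h' : Fin n → ℝ) :
    hDiag V h * hDiag V h' = hDiag V (fun j => h j * h' j) := by
  have e : ∀ A B : CMat n, (V : CMat n) * A * star (V : CMat n) * ((V : CMat n) * B * star (V : CMat n))
      = (V : CMat n) * (A * B) * star (V : CMat n) := by
    intro A B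
    calc _ = (V : CMat n) * A * (star (V : CMat n) * (V : CMat n)) * B * star (V : CMat n) := by
          simp only [mul_assoc]
      _ = _ := by rw [V.star_mul]; simp only [mul_assoc, one_mul]
  unfold hDiag
  rw [e, Matrix.diagonal_mul_diagonal]
  congr 3
  funext j
  push_cast; rfl

lemma hDiag_injective (V : UGrp n) : Function.Injective (hDiag V) := by
  intro h h' e
  have e' : ∀ A : CMat n, star (V : CMat n) * ((V : CMat n) * A * star (V : CMat n)) * (V : CMat n) = A := by
    intro A
    calc _ = (star (V : CMat n) * (V : CMat n)) * A * (star (V : CMat n) * (V : CMat n)) := by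
          simp only [mul_assoc]
      _ = _ := by rw [V.star_mul]; simp
  unfold hDiag at e
  have e2 := congrArg (fun X => star (V : CMat n) * X * (V : CMat n)) e
  simp only [e'] at e2
  have e3 := Matrix.diagonal_injective e2
  funext j
  exact_mod_cast congrFun e3 j

lemma hDiag_mem_Gr (V : UGrp n) {ε : Fin n → ℝ} (hε : ∀ j, ε j = 0 ∨ ε j = 1)
    (hs : ∑ j, ε j = (m : ℝ)) : hDiag V ε ∈ Gr n m := by
  refine ⟨isHermitian_hDiag V ε, ?_, ?_⟩
  · rw [hDiag_mul]
    congr 1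
    funext j
    rcases hε j with h | h <;> simp [h]
  · rw [trace_hDiag]; simp [hs]

lemma exists_hDiag_of_mem_Gr {P : CMat n} (hP : P ∈ Gr n m) :
    ∃ (V : UGrp n) (ε : Fin n → ℝ), (∀ j, ε j = 0 ∨ ε j = 1) ∧ ∑ j, ε j = (m : ℝ) ∧ P = hDiag V ε := by
  obtain ⟨h1, h2, h3⟩ := hP
  obtain ⟨V, ε, rfl⟩ := exists_hDiag h1
  refine ⟨V, ε, ?_, ?_, rfl⟩
  · intro j
    rw [hDiag_mul] at h2
    have := congrFun (hDiag_injective V h2) j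
    have h4 : ε j * (ε j - 1) = 0 := by linarith
    rcases mul_eq_zero.1 h4 with h | h
    · exact Or.inl h
    · exact Or.inr (by linarith)
  · rw [trace_hDiag] at h3
    exact_mod_cast h3

/-- Every `P ∈ Gr n m` has an orthonormal frame. -/
lemma exists_frame {P : CMat n} (hP : P ∈ Gr n m) :
    ∃ M : Matrix (Fin n) (Fin m) ℂ, M.conjTranspose * M = 1 ∧ M * M.conjTranspose = P := by
  classical
  obtain ⟨V, ε, hε, hs, rfl⟩ := exists_hDiag_of_mem_Gr hP
  have hc : Fintype.card {j // ε j = 1} = m := by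
    rw [Fintype.card_subtype]
    have : ∑ j, ε j = ∑ j, if ε j = 1 then (1 : ℝ) else 0 := by
      refine Finset.sum_congr rfl fun j _ => ?_
      rcases hε j with h | h <;> simp [h]
    rw [this, Finset.sum_boole] at hs
    exact_mod_cast hs
  let e : Fin m ≃ {j // ε j = 1} := (Fintype.equivFinOfCardEq hc).symm
  refine ⟨(V : CMat n).submatrix id (fun i => (e i : Fin n)), ?_, ?_⟩
  · ext a b
    have := congrFun (congrFun V.star_mul (e a)) (e b)
    simp only [Matrix.mul_apply, Matrix.star_apply, Matrix.conjTranspose_apply,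
      Matrix.submatrix_apply, id, Matrix.one_apply] at this ⊢
    rw [this]
    congr 1
    simp [Subtype.val_inj]
  · ext a b
    rw [hDiag, Matrix.mul_apply, Matrix.mul_apply]
    simp only [Matrix.conjTranspose_apply, Matrix.submatrix_apply, id, Matrix.mul_diagonal,
      Matrix.star_apply]
    rw [Equiv.sum_comp e (fun j => (V : CMat n) a j * star ((V : CMat n) b j))]
    rw [← Finset.sum_subtype (Finset.univ.filter fun j => ε j = 1) (by simp)
      (fun j => (V : CMat n) a j * star ((V : CMat n) b j)), Finset.sum_filter]
    refine Finset.sum_congr rfl fun j _ => ?_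
    rcases hε j with h | h <;> simp [h]

/-- The orthogonal projection onto the column space of a matrix of full rank. -/
noncomputable def proj (M : Matrix (Fin n) (Fin m) ℂ) : CMat n :=
  M * (M.conjTranspose * M)⁻¹ * M.conjTranspose

open scoped ComplexOrder in
lemma det_gram_ne_zero {M Q : Matrix (Fin n) (Fin m) ℂ} (h : (Q.conjTranspose * M).det ≠ 0) :
    (M.conjTranspose * M).det ≠ 0 := by
  intro h0
  obtain ⟨v, hv, hv0⟩ := Matrix.exists_mulVec_eq_zero_iff.2 h0
  have hM : M.mulVec v = 0 := (Matrix.conjTranspose_mul_self_mulVec_eq_zero M v).1 hv0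
  exact h (Matrix.exists_mulVec_eq_zero_iff.1 ⟨v, hv, by
    rw [← Matrix.mulVec_mulVec, hM, Matrix.mulVec_zero]⟩)

lemma proj_mem {M : Matrix (Fin n) (Fin m) ℂ} (h : (M.conjTranspose * M).det ≠ 0) :
    proj M ∈ Gr n m := by
  have hu : IsUnit (M.conjTranspose * M).det := isUnit_iff_ne_zero.2 h
  refine ⟨?_, ?_, ?_⟩
  · unfold proj
    rw [Matrix.IsHermitian, Matrix.conjTranspose_mul, Matrix.conjTranspose_mul,
      Matrix.conjTranspose_nonsing_inv]
    simp [Matrix.mul_assoc]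
  · unfold proj
    calc _ = M * ((M.conjTranspose * M)⁻¹ * (M.conjTranspose * M)) * (M.conjTranspose * M)⁻¹
            * M.conjTranspose := by simp only [Matrix.mul_assoc]
      _ = _ := by rw [Matrix.nonsing_inv_mul _ hu, Matrix.mul_one]
  · unfold proj
    rw [Matrix.mul_assoc, Matrix.trace_mul_comm, Matrix.mul_assoc, Matrix.nonsing_inv_mul _ hu]
    simp

lemma proj_frame {M : Matrix (Fin n) (Fin m) ℂ} (h : M.conjTranspose * M = 1) :
    proj M = M * M.conjTranspose := by
  unfold proj; rw [h]; simp

lemma proj_mul {M : Matrix (Fin n) (Fin m) ℂ} {G : Matrix (Fin m) (Fin m) ℂ} (hG : G.det ≠ 0) :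
    proj (M * G) = proj M := by
  have hu : IsUnit G.det := isUnit_iff_ne_zero.2 hG
  have hu' : IsUnit G.conjTranspose.det := by
    rw [Matrix.det_conjTranspose]; exact hu.star
  unfold proj
  have e : (M * G).conjTranspose * (M * G)
      = G.conjTranspose * ((M.conjTranspose * M) * G) := by
    rw [Matrix.conjTranspose_mul]; simp only [Matrix.mul_assoc]
  rw [e, Matrix.mul_inv_rev, Matrix.mul_inv_rev, Matrix.conjTranspose_mul]
  calc _ = M * (G * G⁻¹) * (M.conjTranspose * M)⁻¹ * (G.conjTranspose⁻¹ * G.conjTranspose)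
        * M.conjTranspose := by simp only [Matrix.mul_assoc]
    _ = _ := by rw [Matrix.mul_nonsing_inv _ hu, Matrix.nonsing_inv_mul _ hu']; simp

lemma continuousOn_proj {T : Type*} [TopologicalSpace T] {S : Set T}
    {f : T → Matrix (Fin n) (Fin m) ℂ} (hf : ContinuousOn f S)
    (h : ∀ t ∈ S, ((f t).conjTranspose * f t).det ≠ 0) : ContinuousOn (fun t => proj (f t)) S := by
  have h1 : ContinuousOn (fun t => (f t).conjTranspose) S :=
    (Continuous.matrix_conjTranspose continuous_id).comp_continuousOn hf
  have h2 : ContinuousOn (fun t => (f t).conjTranspose * f t) S := by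
    rw [continuousOn_iff_continuous_domRestrict] at hf h1 ⊢
    exact h1.matrix_mul hf
  have h3 := h2.matrix_inv h
  rw [continuousOn_iff_continuous_domRestrict] at hf h1 h3 ⊢
  exact (hf.matrix_mul h3).matrix_mul h1

/-- The open cell of the planes on which the orthogonal projection to the column space of `Q` is
injective. -/
def cell (Q : Matrix (Fin n) (Fin m) ℂ) : Set (Gr n m) :=
  {P | (Q.conjTranspose * P.1 * Q).det ≠ 0}

lemma isOpen_cell (Q : Matrix (Fin n) (Fin m) ℂ) : IsOpen (cell Q) := by
  refine isOpen_ne_fun ?_ continuous_const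
  refine Continuous.matrix_det ?_
  exact ((continuous_const.matrix_mul continuous_subtype_val).matrix_mul continuous_const)

/-- Membership in a cell through any frame `M` of the plane: the pairing of `Q` with `M` is nonsingular. -/
lemma mem_cell_iff {Q M : Matrix (Fin n) (Fin m) ℂ} {P : Gr n m}
    (h : M * M.conjTranspose = P.1) : P ∈ cell Q ↔ (Q.conjTranspose * M).det ≠ 0 := by
  have e : Q.conjTranspose * P.1 * Q
      = (Q.conjTranspose * M) * (Q.conjTranspose * M).conjTranspose := by
    rw [← h, Matrix.conjTranspose_mul, Matrix.conjTranspose_conjTranspose]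
    simp only [Matrix.mul_assoc]
  unfold cell
  rw [mem_ofPred_eq, e, Matrix.det_mul, Matrix.det_conjTranspose]
  simp

lemma proj_mem_cell {Q M : Matrix (Fin n) (Fin m) ℂ} (h : (Q.conjTranspose * M).det ≠ 0) :
    (⟨proj M, proj_mem (det_gram_ne_zero h)⟩ : Gr n m) ∈ cell Q := by
  have e : Q.conjTranspose * proj M * Q
      = (Q.conjTranspose * M) * (M.conjTranspose * M)⁻¹ * (Q.conjTranspose * M).conjTranspose := by
    rw [Matrix.conjTranspose_mul, Matrix.conjTranspose_conjTranspose]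
    unfold proj
    simp only [Matrix.mul_assoc]
  unfold cell
  rw [mem_ofPred_eq, e, Matrix.det_mul, Matrix.det_mul, Matrix.det_conjTranspose]
  refine mul_ne_zero (mul_ne_zero h ?_) (star_ne_zero.2 h)
  exact (Matrix.isUnit_nonsing_inv_det _ (isUnit_iff_ne_zero.2 (det_gram_ne_zero h))).ne_zero

/-- The frame of the plane `P ∈ cell Q` that is dual to `Q`. -/
noncomputable def cellFrame (Q : Matrix (Fin n) (Fin m) ℂ) (P : CMat n) : Matrix (Fin n) (Fin m) ℂ :=
  P * Q * (Q.conjTranspose * P * Q)⁻¹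

lemma mul_cellFrame {Q : Matrix (Fin n) (Fin m) ℂ} {P : Gr n m} (hP : P ∈ cell Q) :
    Q.conjTranspose * cellFrame Q P.1 = 1 := by
  unfold cellFrame
  rw [← Matrix.mul_assoc, ← Matrix.mul_assoc]
  exact Matrix.mul_nonsing_inv _ (isUnit_iff_ne_zero.2 hP)

lemma proj_cellFrame {Q : Matrix (Fin n) (Fin m) ℂ} {P : Gr n m} (hP : P ∈ cell Q) :
    proj (cellFrame Q P.1) = P.1 := by
  obtain ⟨M, hM, hMP⟩ := exists_frame P.2
  have e : cellFrame Q P.1 = M * ((Q.conjTranspose * M).conjTranspose * (Q.conjTranspose * P.1 * Q)⁻¹) := by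
    unfold cellFrame
    rw [Matrix.conjTranspose_mul, Matrix.conjTranspose_conjTranspose]
    nth_rw 1 [← hMP]
    simp only [Matrix.mul_assoc]
  rw [e, proj_mul, proj_frame hM, hMP]
  rw [Matrix.det_mul, Matrix.det_conjTranspose]
  refine mul_ne_zero (star_ne_zero.2 ((mem_cell_iff hMP).1 hP)) ?_
  exact (Matrix.isUnit_nonsing_inv_det _ (isUnit_iff_ne_zero.2 hP)).ne_zero

lemma continuousOn_cellFrame (Q : Matrix (Fin n) (Fin m) ℂ) :
    ContinuousOn (fun P : Gr n m => cellFrame Q P.1) (cell Q) := by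
  have h1 : Continuous fun P : Gr n m => P.1 * Q :=
    continuous_subtype_val.matrix_mul continuous_const
  have h2 : Continuous fun P : Gr n m => Q.conjTranspose * P.1 * Q :=
    ((continuous_const.matrix_mul continuous_subtype_val).matrix_mul continuous_const)
  have h3 := h2.continuousOn.matrix_inv (S := cell Q) fun t ht => ht
  have h4 := h1.continuousOn (s := cell Q)
  rw [continuousOn_iff_continuous_domRestrict] at h3 h4 ⊢
  exact h4.matrix_mul h3

open Classical in
/-- In terms of frames dual to `Q`, a cell is an affine space. -/
lemma contractibleSpace_cell {Q : Matrix (Fin n) (Fin m) ℂ} {b : Gr n m} (hb : b ∈ cell Q) :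
    ContractibleSpace (cell Q) := by
  set f : Gr n m × I → Matrix (Fin n) (Fin m) ℂ := fun p =>
    ((1 - p.2 : ℝ) : ℂ) • cellFrame Q p.1.1 + ((p.2 : ℝ) : ℂ) • cellFrame Q b.1 with hf
  have hQ : ∀ P ∈ cell Q, ∀ s, Q.conjTranspose * f (P, s) = 1 := by
    intro P hP s
    simp only [hf]
    rw [Matrix.mul_add, Matrix.mul_smul, Matrix.mul_smul, mul_cellFrame hP, mul_cellFrame hb,
      ← add_smul]
    simp
  have hd : ∀ P ∈ cell Q, ∀ s, (Q.conjTranspose * f (P, s)).det ≠ 0 := by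
    intro P hP s; rw [hQ P hP s]; simp
  set F : Gr n m × I → Gr n m := fun p =>
    if h : ((f p).conjTranspose * f p).det ≠ 0 then ⟨proj (f p), proj_mem h⟩ else b with hF
  have hFv : ∀ P (hP : P ∈ cell Q) s, F (P, s) =
      ⟨proj (f (P, s)), proj_mem (det_gram_ne_zero (hd P hP s))⟩ := by
    intro P hP s
    simp only [hF]
    rw [dif_pos (det_gram_ne_zero (hd P hP s))]
  refine contractibleSpace_of_contraction F ?_ ?_ hb ?_ ?_
  · rw [Topology.IsEmbedding.subtypeVal.continuousOn_iff]
    have h1 : ContinuousOn f (cell Q ×ˢ univ) := by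
      refine ContinuousOn.add (ContinuousOn.smul (f := fun p : Gr n m × I => ((1 - p.2 : ℝ) : ℂ)) (by fun_prop) ?_)
        (ContinuousOn.smul (f := fun p : Gr n m × I => ((p.2 : ℝ) : ℂ)) (by fun_prop) continuousOn_const)
      exact (continuousOn_cellFrame Q).comp continuousOn_fst fun p hp => hp.1
    refine (continuousOn_proj h1 fun p hp => det_gram_ne_zero (hd p.1 hp.1 p.2)).congr ?_
    intro p hp
    exact congrArg Subtype.val (hFv p.1 hp.1 p.2)
  · intro P hP
    rw [hFv P hP]
    apply Subtype.ext
    simp [hf, proj_cellFrame hP]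
  · intro P hP
    rw [hFv P hP]
    apply Subtype.ext
    simp [hf, proj_cellFrame hb]
  · intro P hP s
    rw [hFv P hP s]
    exact proj_mem_cell (hd P hP s)

lemma exists_poly_det (A B : Matrix (Fin m) (Fin m) ℂ) :
    ∃ p : Polynomial ℂ, ∀ z, p.eval z = ((1 - z) • A + z • B).det := by
  refine ⟨((1 - Polynomial.X : Polynomial ℂ) • A.map Polynomial.C
    + (Polynomial.X : Polynomial ℂ) • B.map Polynomial.C).det, fun z => ?_⟩
  have := RingHom.map_det (Polynomial.evalRingHom z) ((1 - Polynomial.X : Polynomial ℂ) • A.map Polynomial.C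
    + (Polynomial.X : Polynomial ℂ) • B.map Polynomial.C)
  rw [Polynomial.coe_evalRingHom] at this
  rw [this]
  congr 1
  ext i j
  simp
  ring

/-- A complex line through two points meets the zero set of a product of two determinants, if not
contained in it, in finitely many points. -/
lemma finite_zeros {A B A' B' : Matrix (Fin m) (Fin m) ℂ}
    (h : ∃ z : ℂ, ((1 - z) • A + z • B).det * ((1 - z) • A' + z • B').det ≠ 0) :
    {z : ℂ | ((1 - z) • A + z • B).det * ((1 - z) • A' + z • B').det = 0}.Finite := by
  obtain ⟨p, hp⟩ := exists_poly_det A B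
  obtain ⟨p', hp'⟩ := exists_poly_det A' B'
  have h0 : p * p' ≠ 0 := by
    rintro h0
    obtain ⟨z, hz⟩ := h
    rw [← hp, ← hp', ← Polynomial.eval_mul, h0] at hz
    simp at hz
  refine (Polynomial.finite_setOfPred_isRoot h0).subset ?_
  intro z hz
  show (p * p').eval z = 0
  rw [Polynomial.eval_mul, hp, hp']
  exact hz

lemma joined_avoiding_finite {S : Set ℂ} (hS : S.Finite) {z w : ℂ} (hz : z ∉ S) (hw : w ∉ S) :
    JoinedIn Sᶜ z w :=
  (hS.countable.isPathConnected_compl_of_one_lt_rank (by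
    rw [Complex.rank_real_complex]; exact Cardinal.one_lt_two)).joinedIn z hz w hw

lemma lin_conj (Q M M' : Matrix (Fin n) (Fin m) ℂ) (z : ℂ) :
    (1 - z) • (Q.conjTranspose * M) + z • (Q.conjTranspose * M')
      = Q.conjTranspose * ((1 - z) • M + z • M') := by
  rw [Matrix.mul_add, Matrix.mul_smul, Matrix.mul_smul]

/-- Frames of the two planes are joined by a complex affine line, on which the planes leave the
two cells at finitely many parameters only; these are avoided by a path in `ℂ`. -/
lemma joinedIn_cells (Q Q' : Matrix (Fin n) (Fin m) ℂ) {P P' : Gr n m}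
    (hP : P ∈ cell Q ∩ cell Q') (hP' : P' ∈ cell Q ∩ cell Q') : JoinedIn (cell Q ∩ cell Q') P P' := by
  obtain ⟨M, hM, hMP⟩ := exists_frame P.2
  obtain ⟨M', hM', hMP'⟩ := exists_frame P'.2
  have a1 := (mem_cell_iff hMP).1 hP.1
  have a2 := (mem_cell_iff hMP).1 hP.2
  have a3 := (mem_cell_iff hMP').1 hP'.1
  have a4 := (mem_cell_iff hMP').1 hP'.2
  set S := {z : ℂ | ((1 - z) • (Q.conjTranspose * M) + z • (Q.conjTranspose * M')).det *
    ((1 - z) • (Q'.conjTranspose * M) + z • (Q'.conjTranspose * M')).det = 0} with hS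
  have hfin : S.Finite := finite_zeros ⟨0, by simpa using ⟨a1, a2⟩⟩
  have hj : JoinedIn Sᶜ (0 : ℂ) 1 := joined_avoiding_finite hfin
    (by rw [hS]; simpa using ⟨a1, a2⟩) (by rw [hS]; simpa using ⟨a3, a4⟩)
  have hg : ∀ t, (Q.conjTranspose * ((1 - hj.somePath t) • M + hj.somePath t • M')).det ≠ 0 ∧
      (Q'.conjTranspose * ((1 - hj.somePath t) • M + hj.somePath t • M')).det ≠ 0 := by
    intro t
    have h1 := hj.somePath_mem t
    have h2 : ¬ (_ = (0 : ℂ)) := fun h => h1 h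
    rw [lin_conj, lin_conj] at h2
    exact mul_ne_zero_iff.1 h2
  refine joinedIn_of_continuous (fun t => ⟨proj ((1 - hj.somePath t) • M + hj.somePath t • M'),
    proj_mem (det_gram_ne_zero (hg t).1)⟩) ?_ ?_ ?_ ?_
  · refine Continuous.subtype_mk ?_ _
    rw [← continuousOn_univ]
    refine continuousOn_proj ?_ fun t _ => det_gram_ne_zero (hg t).1
    exact Continuous.continuousOn (by fun_prop)
  · intro t
    exact ⟨proj_mem_cell (hg t).1, proj_mem_cell (hg t).2⟩
  · apply Subtype.ext
    simp [proj_frame hM, hMP]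
  · apply Subtype.ext
    simp [proj_frame hM', hMP']

/-- As `Q`, almost every point of the line through frames of the two planes will do. -/
lemma exists_common_cell (P P' : Gr n m) : ∃ Q, P ∈ cell Q ∧ P' ∈ cell Q := by
  obtain ⟨M, hM, hMP⟩ := exists_frame P.2
  obtain ⟨M', hM', hMP'⟩ := exists_frame P'.2
  have f1 : {z : ℂ | ((1 - z) • (M.conjTranspose * M) + z • (M.conjTranspose * M')).det *
    ((1 - z) • (M.conjTranspose * M) + z • (M.conjTranspose * M')).det = 0}.Finite :=
    finite_zeros ⟨0, by simp [hM]⟩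
  have f2 : {z : ℂ | ((1 - z) • (M'.conjTranspose * M) + z • (M'.conjTranspose * M')).det *
    ((1 - z) • (M'.conjTranspose * M) + z • (M'.conjTranspose * M')).det = 0}.Finite :=
    finite_zeros ⟨1, by simp [hM']⟩
  obtain ⟨z, hz⟩ := (f1.union f2).infinite_compl.nonempty
  rw [mem_compl_iff, mem_union, not_or, mem_ofPred_eq, mem_ofPred_eq, lin_conj, lin_conj,
    mul_self_eq_zero, mul_self_eq_zero] at hz
  have hsym : ∀ A B : Matrix (Fin n) (Fin m) ℂ, (A.conjTranspose * B).det ≠ 0 →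
      (B.conjTranspose * A).det ≠ 0 := by
    intro A B h
    rw [← Matrix.conjTranspose_conjTranspose A, ← Matrix.conjTranspose_mul, Matrix.det_conjTranspose]
    exact star_ne_zero.2 h
  exact ⟨_, (mem_cell_iff hMP).2 (hsym _ _ hz.1), (mem_cell_iff hMP').2 (hsym _ _ hz.2)⟩

/-- Seifert–van Kampen for the contractible cells containing a fixed plane. -/
theorem simplyConnectedSpace_Gr (hne : (Gr n m).Nonempty) : SimplyConnectedSpace (Gr n m) := by
  obtain ⟨b, hb⟩ := hne
  refine simplyConnectedSpace_of_cover
    (fun Q : {Q : Matrix (Fin n) (Fin m) ℂ // (⟨b, hb⟩ : Gr n m) ∈ cell Q} => cell Q.1)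
    (fun Q => isOpen_cell Q.1) ?_ ⟨b, hb⟩ (fun Q => Q.2) ?_ ?_
  · intro P
    obtain ⟨Q, h1, h2⟩ := exists_common_cell ⟨b, hb⟩ P
    exact ⟨⟨Q, h1⟩, h2⟩
  · intro Q
    have := contractibleSpace_cell Q.2
    exact SimplyConnectedSpace.ofContractible _
  · intro Q Q'
    exact ⟨⟨b, hb⟩, ⟨Q.2, Q'.2⟩, fun {P} hP => joinedIn_cells _ _ ⟨Q.2, Q'.2⟩ hP⟩

end Grass

/-! ### Pairwise intersections -/

section pairwise
variable {n : ℕ}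

/-- The form in which two logarithms of one matrix are used: a common eigenbasis `V`, and a `0`-`1`
vector `ε` by which the eigenvalues differ. -/
lemma exists_pair {k l : ℤ} (hkl : k ≤ l) (hln : l < k + n) {A : SUn n} (hk : A ∈ logSet n k)
    (hl : A ∈ logSet n l) : ∃ (V : UGrp n) (h ε : Fin n → ℝ), (∀ j, ε j = 0 ∨ ε j = 1) ∧
      (∀ i j, h i - h j < 1) ∧ (∀ i j, (h i + ε i) - (h j + ε j) < 1) ∧ ∑ j, h j = k ∧
      ∑ j, ε j = ((l - k : ℤ) : ℝ) ∧ lg n k A = hDiag V h ∧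
      lg n l A = hDiag V (fun j => h j + ε j) := by
  obtain ⟨V, h, hw, hs, e⟩ := lg_mem hk
  obtain ⟨ε, h1, h2, h3, h4⟩ := logDom_pair hkl hln (V := V) hw hs (lg_mem hl)
    (by rw [← e, ex_lg hk, ex_lg hl])
  exact ⟨V, h, ε, h1, hw, h2, hs, h3, e, h4⟩

/-- Converse of `exists_pair`. -/
lemma pair_mk (hn : 0 < n) {k l : ℤ} {V : UGrp n} {g ε : Fin n → ℝ}
    (hε : ∀ j, ε j = 0 ∨ ε j = 1) (hg : ∀ i j, g i - g j < 1)
    (hg' : ∀ i j, (g i + ε i) - (g j + ε j) < 1) (hs : ∑ j, g j = k)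
    (hs' : ∑ j, ε j = ((l - k : ℤ) : ℝ)) :
    sx (hDiag V g) ∈ logSet n k ∩ logSet n l ∧ lg n k (sx (hDiag V g)) = hDiag V g ∧
      lg n l (sx (hDiag V g)) = hDiag V (fun j => g j + ε j) := by
  have h1 : hDiag V g ∈ logDom n k := ⟨V, g, hg, hs, rfl⟩
  have h2 : hDiag V (fun j => g j + ε j) ∈ logDom n l :=
    ⟨V, _, hg', by rw [Finset.sum_add_distrib, hs, hs']; push_cast; ring, rfl⟩
  have h3 := mat_sx (exists_mat_ex_of_mem h1)
  have h4 : ex (hDiag V (fun j => g j + ε j)) = mat (sx (hDiag V g)) := by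
    rw [ex_add_int V hε, h3]
  exact ⟨⟨⟨_, h1, h3.symm⟩, ⟨_, h2, h4⟩⟩, lg_eq hn h1 h3.symm, lg_eq hn h2 h4⟩

/-- For a projection `P` of rank `l - k`, the logarithm `α - P / 2` of trace `k`, where
`α = (k + l) / (2n)`. The corresponding logarithm of trace `l` is `α + P / 2`. -/
noncomputable def midLog (n : ℕ) (k l : ℤ) (P : CMat n) : CMat n :=
  (((k + l) / (2 * n) : ℝ) : ℂ) • (1 : CMat n) - ((1 / 2 : ℝ) : ℂ) • P

lemma midLog_hDiag (k l : ℤ) (V : UGrp n) (h ε : Fin n → ℝ) (s : ℝ) :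
    ((1 - s : ℝ) : ℂ) • hDiag V h + ((s : ℝ) : ℂ) • midLog n k l (hDiag V ε)
      = hDiag V (fun j => (1 - s) * h j + s * ((k + l) / (2 * n) - 1 / 2 * ε j)) := by
  rw [midLog, ← hDiag_const V, ← hDiag_smul, ← hDiag_smul, ← hDiag_sub,
    ← hDiag_smul, ← hDiag_add]

/-- Points of the segment from a logarithm of trace `k` to `midLog` stay in the intersection and
keep the same projection. -/
lemma midLog_aux (hn : 0 < n) {k l : ℤ} {V : UGrp n} {h ε : Fin n → ℝ} {s : ℝ} (hs0 : 0 ≤ s)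
    (hs1 : s ≤ 1) (hε : ∀ j, ε j = 0 ∨ ε j = 1) (hh : ∀ i j, h i - h j < 1)
    (hh' : ∀ i j, (h i + ε i) - (h j + ε j) < 1) (hs : ∑ j, h j = k)
    (hs' : ∑ j, ε j = ((l - k : ℤ) : ℝ)) {H : CMat n}
    (hH : ((1 - s : ℝ) : ℂ) • hDiag V h + ((s : ℝ) : ℂ) • midLog n k l (hDiag V ε) = H) :
    sx H ∈ logSet n k ∩ logSet n l ∧ lg n l (sx H) - lg n k (sx H) = hDiag V ε ∧
      ∃ A : SUn n, mat A = ex H := by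
  rw [midLog_hDiag] at hH
  have hconv : ∀ a b : ℝ, a < 1 → b < 1 → (1 - s) * a + s * b < 1 := by
    intro a b ha hb
    rcases hs0.eq_or_lt with h5 | h5
    · rw [← h5]; linarith
    · nlinarith
  have hb : ∀ i, 0 ≤ ε i ∧ ε i ≤ 1 := fun i => by rcases hε i with h | h <;> simp [h]
  have hsum : ∑ j, ((1 - s) * h j + s * ((k + l) / (2 * n) - 1 / 2 * ε j)) = k := by
    rw [Finset.sum_add_distrib, ← Finset.mul_sum, ← Finset.mul_sum, Finset.sum_sub_distrib,
      ← Finset.mul_sum, hs, hs']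
    have : (n : ℝ) ≠ 0 := by positivity
    simp
    field_simp
    ring
  obtain ⟨h1, h2, h3⟩ := pair_mk hn (V := V) (k := k) (l := l) (g := fun j => (1 - s) * h j + s * ((k + l) / (2 * n) - 1 / 2 * ε j)) hε (by
      intro i j
      have := hconv _ (1 / 2 * (ε j - ε i)) (hh i j) (by linarith [(hb i).1, (hb j).2])
      linarith) (by
      intro i j
      have := hconv _ (1 / 2 * (ε i - ε j)) (hh' i j) (by linarith [(hb j).1, (hb i).2])
      linarith) hsum hs'
  rw [hH] at h1 h2 h3
  refine ⟨h1, ?_, ?_⟩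
  · rw [h3, h2, ← hH, ← hDiag_sub]
    congr 1
    funext j; ring
  · rw [← hH]; exact exists_mat_ex V _ hsum

lemma continuous_midLog (k l : ℤ) : Continuous (midLog n k l) := by
  unfold midLog; fun_prop

/-- The intersection of two of the sets `logSet` is homotopy equivalent to a Grassmannian: the two
logarithms differ by a projection. -/
theorem isSimplyConnected_logSet_inter (hn : 0 < n) {k l : ℤ} (hkl : k ≤ l) (hln : l < k + n) :
    IsSimplyConnected (logSet n k ∩ logSet n l) := by
  obtain ⟨m, hm⟩ : ∃ m : ℕ, l - k = m := ⟨(l - k).toNat, by omega⟩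
  have hm' : ((l - k : ℤ) : ℝ) = m := by rw [hm]; simp
  have hne : (Gr n m).Nonempty := ⟨_, hDiag_mem_Gr 1 (firstInd_zero_or_one (m : ℤ))
    (by rw [sum_firstInd (by omega) (by omega)]; simp)⟩
  have hsc := simplyConnectedSpace_Gr hne
  have key : ∀ A ∈ logSet n k ∩ logSet n l, lg n l A - lg n k A ∈ Gr n m ∧
      ∀ s : I, ∀ H, ((1 - s : ℝ) : ℂ) • lg n k A + ((s : ℝ) : ℂ) • midLog n k l (lg n l A - lg n k A) = H →
        sx H ∈ logSet n k ∩ logSet n l ∧ ∃ A : SUn n, mat A = ex H := by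
    intro A hA
    obtain ⟨V, h, ε, h1, h2, h3, h4, h5, h6, h7⟩ := exists_pair hkl hln hA.1 hA.2
    have hd : lg n l A - lg n k A = hDiag V ε := by
      rw [h6, h7, ← hDiag_sub]; congr 1; funext j; ring
    rw [hd]
    refine ⟨hDiag_mem_Gr V h1 (by rw [h5, hm']), ?_⟩
    intro s H hH
    rw [h6] at hH
    have := midLog_aux hn s.2.1 s.2.2 h1 h2 h3 h4 h5 hH
    exact ⟨this.1, this.2.2⟩
  have key2 : ∀ P ∈ Gr n m, sx (midLog n k l P) ∈ logSet n k ∩ logSet n l ∧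
      lg n l (sx (midLog n k l P)) - lg n k (sx (midLog n k l P)) = P ∧
      ∃ A : SUn n, mat A = ex (midLog n k l P) := by
    intro P hP
    obtain ⟨V, ε, h1, h2, rfl⟩ := exists_hDiag_of_mem_Gr hP
    have hb : ∀ i, 0 ≤ ε i ∧ ε i ≤ 1 := fun i => by rcases h1 i with h | h <;> simp [h]
    have hn' : (n : ℝ) ≠ 0 := by positivity
    refine midLog_aux hn (V := V) (h := fun j => (k + l) / (2 * n) - 1 / 2 * ε j) (s := 1)
      zero_le_one le_rfl h1 ?_ ?_ ?_ (by rw [h2, hm']) (by simp)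
    · intro i j; linarith [(hb i).1, (hb j).2]
    · intro i j; linarith [(hb j).1, (hb i).2]
    · rw [Finset.sum_sub_distrib, ← Finset.mul_sum, h2, ← hm']
      simp; field_simp; ring
  have c1 : ContinuousOn (fun A => lg n l A - lg n k A) (logSet n k ∩ logSet n l) :=
    ((continuousOn_lg hn l).mono inter_subset_right).sub
      ((continuousOn_lg hn k).mono inter_subset_left)
  have c2 : ContinuousOn (fun P : CMat n => sx (midLog n k l P)) (Gr n m) :=
    continuousOn_sx_comp (continuous_midLog k l).continuousOn fun P hP => (key2 P hP).2.2
  have c3 : ContinuousOn (fun p : SUn n × I => sx (((1 - p.2 : ℝ) : ℂ) • lg n k p.1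
      + ((p.2 : ℝ) : ℂ) • midLog n k l (lg n l p.1 - lg n k p.1)))
      ((logSet n k ∩ logSet n l) ×ˢ univ) := by
    refine continuousOn_sx_comp ?_ fun p hp => ((key p.1 hp.1).2 p.2 _ rfl).2
    refine ContinuousOn.add
      (ContinuousOn.smul (f := fun p : SUn n × I => ((1 - p.2 : ℝ) : ℂ)) (by fun_prop) ?_)
      (ContinuousOn.smul (f := fun p : SUn n × I => ((p.2 : ℝ) : ℂ)) (by fun_prop) ?_)
    · exact (continuousOn_lg hn k).comp continuousOn_fst fun p hp => hp.1.1
    · exact (continuous_midLog k l).comp_continuousOn (c1.comp continuousOn_fst fun p hp => hp.1)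
  -- A matrix is sent to its spectral projection, with homotopy inverse a standard
  -- exponential attached to each plane.
  let e : ContinuousMap.HomotopyEquiv ↥(logSet n k ∩ logSet n l) (Gr n m) :=
    { toFun := ⟨fun A => ⟨lg n l A.1 - lg n k A.1, (key A.1 A.2).1⟩,
        Continuous.subtype_mk (continuousOn_iff_continuous_domRestrict.1 c1) _⟩
      invFun := ⟨fun P => ⟨sx (midLog n k l P.1), (key2 P.1 P.2).1⟩,
        Continuous.subtype_mk (continuousOn_iff_continuous_domRestrict.1 c2) _⟩
      left_inv := by
        refine ContinuousMap.Homotopic.symm ⟨{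
          toFun := fun p => ⟨sx (((1 - p.1 : ℝ) : ℂ) • lg n k p.2.1
              + ((p.1 : ℝ) : ℂ) • midLog n k l (lg n l p.2.1 - lg n k p.2.1)),
            ((key p.2.1 p.2.2).2 p.1 _ rfl).1⟩
          continuous_toFun := ?_
          map_zero_left := ?_
          map_one_left := ?_ }⟩
        · refine Continuous.subtype_mk ?_ _
          exact c3.comp_continuous
            (f := fun p : I × ↥(logSet n k ∩ logSet n l) => ((p.2 : SUn n), p.1))
            (by fun_prop) fun p => ⟨p.2.2, mem_univ _⟩
        · intro A
          apply Subtype.ext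
          apply sx_eq
          simp [ex_lg A.2.1]
        · intro A
          apply Subtype.ext
          show sx _ = sx _
          simp only [Icc.coe_one, sub_self, Complex.ofReal_zero, zero_smul, zero_add,
            Complex.ofReal_one, one_smul]
          rfl
      right_inv := by
        have : ∀ f : C(Gr n m, Gr n m), (∀ P, f P = P) → f.Homotopic (ContinuousMap.id _) := by
          intro f hf
          rw [show f = ContinuousMap.id _ from ContinuousMap.ext hf]
        exact this _ fun P => Subtype.ext (key2 P.1 P.2).2.1 }
  exact e.simplyConnectedSpace

lemma isSimplyConnected_logSet_pair (hn : 0 < n) (k l : Fin n) :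
    IsSimplyConnected (logSet n k ∩ logSet n l) := by
  have hk := k.2
  have hl := l.2
  rcases le_total k l with h | h
  · exact isSimplyConnected_logSet_inter hn (by exact_mod_cast h) (by omega)
  · rw [inter_comm]
    exact isSimplyConnected_logSet_inter hn (by exact_mod_cast h) (by omega)

end pairwise

/-! ### Nearest points on conjugation orbits -/

section estimate
variable {n r : ℕ}

/-- The distance of a vector to the kernel of a linear map is controlled by the size of its image. -/
lemma exists_linear_bound {E F : Type*} [NormedAddCommGroup E] [NormedSpace ℝ E]
    [FiniteDimensional ℝ E] [NormedAddCommGroup F] [NormedSpace ℝ F] [FiniteDimensional ℝ F]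
    (L : E →ₗ[ℝ] F) : ∃ C : ℝ, 0 < C ∧ ∀ h, ∃ T, L T = 0 ∧ ‖h - T‖ ≤ C * ‖L h‖ := by
  have := FiniteDimensional.complete ℝ E
  have := FiniteDimensional.complete ℝ (LinearMap.range L)
  obtain ⟨C, hC, h⟩ := ContinuousLinearMap.exists_preimage_norm_le
    (LinearMap.toContinuousLinearMap L.rangeRestrict) L.surjective_rangeRestrict
  refine ⟨C, hC, fun x => ?_⟩
  obtain ⟨y, hy, hyn⟩ := h (L.rangeRestrict x)
  have hy' : L y = L x := congrArg Subtype.val hy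
  exact ⟨x - y, by rw [map_sub, hy', sub_self], by simpa using hyn⟩

/-- The real part of the Hilbert–Schmidt inner product. -/
def ip (A B : CMat n) : ℝ := (A.conjTranspose * B).trace.re

lemma ip_add_right (A B C : CMat n) : ip A (B + C) = ip A B + ip A C := by
  simp [ip, Matrix.mul_add]

lemma ip_sub_right (A B C : CMat n) : ip A (B - C) = ip A B - ip A C := by
  simp [ip, Matrix.mul_sub]

lemma ip_sub_left (A B C : CMat n) : ip (A - B) C = ip A C - ip B C := by
  simp [ip, Matrix.sub_mul]

lemma ip_comm (A B : CMat n) : ip A B = ip B A := by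
  unfold ip
  rw [← Matrix.conjTranspose_conjTranspose B, ← Matrix.conjTranspose_mul,
    Matrix.trace_conjTranspose, Matrix.conjTranspose_conjTranspose]
  simp

lemma ip_eq_sum (A B : CMat n) : ip A B = ∑ i, ∑ j, inner ℝ (A i j) (B i j) := by
  unfold ip
  rw [Matrix.trace, Complex.re_sum, Finset.sum_comm]
  refine Finset.sum_congr rfl fun i _ => ?_
  rw [Matrix.diag_apply, Matrix.mul_apply, Complex.re_sum]
  refine Finset.sum_congr rfl fun j _ => ?_
  rw [Matrix.conjTranspose_apply, Complex.inner]
  simp [mul_comm]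

/-- Conjugation by unitary matrices preserves the inner product. -/
lemma ip_conj (U : UGrp n) (A B : CMat n) :
    ip ((U : CMat n) * A * star (U : CMat n)) ((U : CMat n) * B * star (U : CMat n)) = ip A B := by
  unfold ip
  have e : ((U : CMat n) * A * star (U : CMat n)).conjTranspose * ((U : CMat n) * B * star (U : CMat n))
      = (U : CMat n) * (A.conjTranspose * B * star (U : CMat n)) := by
    rw [Matrix.conjTranspose_mul, Matrix.conjTranspose_mul, ← Matrix.star_eq_conjTranspose,
      ← Matrix.star_eq_conjTranspose, ← Matrix.star_eq_conjTranspose, star_star]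
    calc _ = (U : CMat n) * star A * (star (U : CMat n) * (U : CMat n)) * B * star (U : CMat n) := by
          simp only [mul_assoc]
      _ = _ := by rw [U.star_mul]; simp only [mul_assoc, mul_one]
  rw [e, Matrix.trace_mul_comm, mul_assoc, U.star_mul, mul_one]

open scoped Matrix.Norms.Frobenius

lemma ip_self (A : CMat n) : ip A A = ‖A‖ ^ 2 := by
  rw [ip_eq_sum, Matrix.frobenius_norm_def]
  simp only [real_inner_self_eq_norm_sq]
  have h0 : 0 ≤ ∑ i, ∑ j, ‖A i j‖ ^ (2 : ℝ) := by positivity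
  rw [← Real.rpow_natCast, ← Real.rpow_mul h0]
  norm_num

lemma ip_le (A B : CMat n) : ip A B ≤ ‖A‖ * ‖B‖ := by
  rw [ip_eq_sum, Matrix.frobenius_norm_def, Matrix.frobenius_norm_def, ← Finset.univ.sum_product' Finset.univ (fun i j => inner ℝ (A i j) (B i j)), 
    ← Finset.univ.sum_product' Finset.univ (fun i j => ‖A i j‖ ^ (2:ℝ)),
    ← Finset.univ.sum_product' Finset.univ (fun i j => ‖B i j‖ ^ (2:ℝ)), ← Real.sqrt_eq_rpow, ← Real.sqrt_eq_rpow]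
  simp only [Real.rpow_two]
  refine le_trans (Finset.sum_le_sum fun p _ => real_inner_le_norm _ _) ?_
  exact Real.sum_mul_le_sqrt_mul_sqrt _ _ _

/-- Quadratic error of the tangent approximation at `A` of a conjugate `hAh*`: if `T` commutes
with `A` and `X = 1 - T h*` then `hAh* - A` is, up to terms quadratic in the size of `X` and
`hAh* - A`, the commutator of `A` with the skew-Hermitian part of `X`. -/
lemma commutator_expansion (h : UGrp n) (A B T X : CMat n) (hB : B = (h : CMat n) * A * star (h : CMat n))
    (hT : T * A = A * T) (hT' : star T * A = A * star T) (hX : X = 1 - T * star (h : CMat n)) :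
    B - A = (((1 / 2 : ℂ) • (X - star X)) * A - A * ((1 / 2 : ℂ) • (X - star X)))
      + ((1 / 2 : ℂ) • (X * star X * A - A * (X * star X)) + X * (B - A)) := by
  have e1 : X * B = B - A + A * X := by
    rw [hX, hB]
    have : T * star (h : CMat n) * ((h : CMat n) * A * star (h : CMat n)) = A * T * star (h : CMat n) := by
      calc _ = T * (star (h : CMat n) * (h : CMat n)) * A * star (h : CMat n) := by
            simp only [mul_assoc]
        _ = _ := by rw [h.star_mul, mul_one, hT]
    rw [sub_mul, one_mul, this]
    noncomm_ring
  have e2 : X * star X = X + star X - 1 + T * star T := by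
    have h1 : star X = 1 - (h : CMat n) * star T := by rw [hX]; simp
    have h2 : T * star (h : CMat n) * ((h : CMat n) * star T) = T * star T := by
      calc _ = T * (star (h : CMat n) * (h : CMat n)) * star T := by simp only [mul_assoc]
        _ = _ := by rw [h.star_mul, mul_one]
    rw [h1, hX, sub_mul, mul_sub, mul_sub, h2]
    noncomm_ring
  have e3 : T * star T * A = A * (T * star T) := by
    rw [mul_assoc, hT', ← mul_assoc, hT, mul_assoc]
  have e4 : X * star X * A - A * (X * star X) = (X * A - A * X) + (star X * A - A * star X) := by
    rw [e2]
    have : (X + star X - 1 + T * star T) * A - A * (X + star X - 1 + T * star T)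
      = (X * A - A * X) + (star X * A - A * star X) + (T * star T * A - A * (T * star T)) := by
      noncomm_ring
    rw [this, e3]; simp
  rw [e4]
  have e5 : B - A = (X * A - A * X) + X * (B - A) := by rw [mul_sub, e1]; noncomm_ring
  nth_rw 1 [e5]
  simp only [smul_mul_assoc, mul_smul_comm, sub_mul, mul_sub, smul_sub, smul_add]
  module

lemma norm_star_UGrp_le (h : UGrp n) : ‖star (h : CMat n)‖ ≤ n + 1 ∧ ‖(h : CMat n)‖ ≤ n + 1 := by
  have e : ‖(h : CMat n)‖ ^ 2 = n := by
    rw [← ip_self, ip, ← Matrix.star_eq_conjTranspose, h.star_mul]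
    simp
  have h1 : ‖(h : CMat n)‖ ≤ n + 1 := by
    have : (0 : ℝ) ≤ n := by positivity
    nlinarith [norm_nonneg (h : CMat n)]
  refine ⟨?_, h1⟩
  rw [Matrix.star_eq_conjTranspose, Matrix.frobenius_norm_conjTranspose]
  exact h1

/-- The tangent vectors of the conjugation orbit at a unitary matrix `A` are orthogonal to `A`. -/
lemma ip_commutator_self {A : CMat n} (hA : A ∈ Matrix.unitaryGroup (Fin n) ℂ) (X : CMat n) :
    ip A (X * A - A * X) = 0 := by
  have h1 : star A * A = 1 := Matrix.mem_unitaryGroup_iff'.1 hA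
  have h2 : A * star A = 1 := Matrix.mem_unitaryGroup_iff.1 hA
  unfold ip
  rw [← Matrix.star_eq_conjTranspose, mul_sub, ← mul_assoc (star A) A, h1, Matrix.trace_sub,
    Matrix.trace_mul_comm, mul_assoc, h2]
  simp

lemma norm_quadratic_error_le {X A D : CMat n} {C η a : ℝ} (hC : 0 ≤ C) (hη : 0 ≤ η)
    (hX : ‖X‖ ≤ C * η) (hD : ‖D‖ ≤ η) (hA : ‖A‖ ≤ a) :
    ‖(1 / 2 : ℂ) • (X * star X * A - A * (X * star X)) + X * D‖ ≤ (C ^ 2 * a + C) * η ^ 2 := by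
  have ha : 0 ≤ a := (norm_nonneg _).trans hA
  have hsX : ‖star X‖ = ‖X‖ := by
    rw [Matrix.star_eq_conjTranspose, Matrix.frobenius_norm_conjTranspose]
  have hXX : ‖X * star X‖ ≤ (C * η) ^ 2 := by
    refine (norm_mul_le _ _).trans ?_
    rw [hsX, sq]
    exact mul_le_mul hX hX (norm_nonneg _) (by positivity)
  have h1 : ‖X * star X * A‖ ≤ (C * η) ^ 2 * a :=
    (norm_mul_le _ _).trans (mul_le_mul hXX hA (norm_nonneg _) (by positivity))
  have h2 : ‖A * (X * star X)‖ ≤ (C * η) ^ 2 * a := by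
    rw [mul_comm ((C * η) ^ 2)]
    exact (norm_mul_le _ _).trans (mul_le_mul hA hXX (norm_nonneg _) ha)
  have h3 : ‖X * D‖ ≤ C * η * η :=
    (norm_mul_le _ _).trans (mul_le_mul hX hD (norm_nonneg _) (by positivity))
  have h4 : ‖(1 / 2 : ℂ)‖ = 1 / 2 := by norm_num
  have h5 := norm_add_le ((1 / 2 : ℂ) • (X * star X * A - A * (X * star X))) (X * D)
  rw [norm_smul, h4] at h5
  have h6 := norm_sub_le (X * star X * A) (A * (X * star X))
  nlinarith

/-- The conjugates of `A` near `A` are, up to a quadratic error, `A` plus a tangent vector. -/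
lemma orbit_expansion (A : Fin r → CMat n) (hA : ∀ i, A i ∈ Matrix.unitaryGroup (Fin n) ℂ) :
    ∃ K : ℝ, 0 < K ∧ ∀ h : UGrp n, ∃ X : CMat n, star X = -X ∧
      ∀ i, ‖((h : CMat n) * A i * star (h : CMat n) - A i) - (X * A i - A i * X)‖
        ≤ K * ∑ i, ‖(h : CMat n) * A i * star (h : CMat n) - A i‖ ^ 2 := by
  let L : CMat n →ₗ[ℝ] (Fin r → CMat n) :=
    { toFun := fun h i => h * A i - A i * h
      map_add' := fun x y => by
        funext i
        show (x + y) * A i - A i * (x + y) = (x * A i - A i * x) + (y * A i - A i * y)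
        noncomm_ring
      map_smul' := fun c x => by
        funext i
        show (c • x) * A i - A i * (c • x) = c • (x * A i - A i * x)
        rw [smul_mul_assoc, mul_smul_comm, smul_sub] }
  obtain ⟨C, hC, hL⟩ := exists_linear_bound L
  set C1 : ℝ := C * (n + 1) ^ 2 with hC1
  have hC1p : 0 < C1 := by positivity
  set K : ℝ := C1 ^ 2 * ‖A‖ + C1 with hK
  have hKp : 0 < K := by positivity
  refine ⟨K, hKp, fun h => ?_⟩
  obtain ⟨B, hB⟩ : ∃ B : Fin r → CMat n, ∀ i, B i = (h : CMat n) * A i * star (h : CMat n) :=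
    ⟨_, fun _ => rfl⟩
  simp only [← hB]
  set S : ℝ := ∑ i, ‖B i - A i‖ ^ 2 with hS
  have hS0 : 0 ≤ S := by positivity
  set η := √S with hη
  have hη2 : η ^ 2 = S := Real.sq_sqrt hS0
  have hη0 : 0 ≤ η := Real.sqrt_nonneg _
  have hηi : ∀ i, ‖B i - A i‖ ≤ η := fun i => Real.le_sqrt_of_sq_le
    (Finset.single_le_sum (f := fun i => ‖B i - A i‖ ^ 2) (fun _ _ => by positivity)
      (Finset.mem_univ i))
  obtain ⟨T, hT, hTn⟩ := hL (h : CMat n)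
  have hLh : ‖L (h : CMat n)‖ ≤ (n + 1) * η := by
    rw [pi_norm_le_iff_of_nonneg (by positivity)]
    intro i
    have e : L (h : CMat n) i = (B i - A i) * (h : CMat n) := by
      show (h : CMat n) * A i - A i * (h : CMat n) = _
      rw [hB, sub_mul, mul_assoc ((h : CMat n) * A i), h.star_mul, mul_one]
    rw [e, mul_comm]
    refine (norm_mul_le _ _).trans ?_
    exact mul_le_mul (hηi i) (norm_star_UGrp_le h).2 (norm_nonneg _) hη0
  obtain ⟨X, hX⟩ : ∃ X : CMat n, X = 1 - T * star (h : CMat n) := ⟨_, rfl⟩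
  have hXn : ‖X‖ ≤ C1 * η := by
    have e : X = ((h : CMat n) - T) * star (h : CMat n) := by rw [hX, sub_mul, h.mul_star]
    rw [e]
    calc _ ≤ ‖(h : CMat n) - T‖ * ‖star (h : CMat n)‖ := norm_mul_le _ _
      _ ≤ (C * ((n + 1) * η)) * (n + 1) :=
          mul_le_mul (hTn.trans (mul_le_mul_of_nonneg_left hLh hC.le)) (norm_star_UGrp_le h).1
            (norm_nonneg _) (by positivity)
      _ = C1 * η := by rw [hC1]; ring
  have hTA : ∀ i, T * A i = A i * T := fun i => sub_eq_zero.1 (congrFun hT i)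
  have hTA' : ∀ i, star T * A i = A i * star T := by
    intro i
    have h1 : star (A i) * A i = 1 := Matrix.mem_unitaryGroup_iff'.1 (hA i)
    have h2 : A i * star (A i) = 1 := Matrix.mem_unitaryGroup_iff.1 (hA i)
    have h3 := congrArg star (hTA i)
    rw [star_mul, star_mul] at h3
    calc star T * A i = A i * (star (A i) * star T) * A i := by
          rw [← mul_assoc, h2, one_mul]
      _ = A i * star T := by rw [h3, mul_assoc, mul_assoc, h1, mul_one]
  obtain ⟨Xa, hXa⟩ : ∃ Xa : CMat n, Xa = (1 / 2 : ℂ) • (X - star X) := ⟨_, rfl⟩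
  have hXas : star Xa = -Xa := by
    rw [hXa, star_smul, star_sub, star_star, ← smul_neg, neg_sub]
    congr 1
    simp
  obtain ⟨Q, hQ⟩ : ∃ Q : Fin r → CMat n, ∀ i, Q i =
      (1 / 2 : ℂ) • (X * star X * A i - A i * (X * star X)) + X * (B i - A i) :=
    ⟨_, fun _ => rfl⟩
  have hexp : ∀ i, B i - A i = (Xa * A i - A i * Xa) + Q i := fun i => by
    rw [hQ, hXa]
    exact commutator_expansion h (A i) (B i) T X (hB i) (hTA i) (hTA' i) hX
  have hQn : ∀ i, ‖Q i‖ ≤ K * η ^ 2 := by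
    intro i
    rw [hQ, hK]
    exact norm_quadratic_error_le hC1p.le hη0 hXn (hηi i) (norm_le_pi_norm A i)
  refine ⟨Xa, hXas, fun i => ?_⟩
  have e : B i - A i - (Xa * A i - A i * Xa) = Q i := by
    rw [hexp i]; abel
  have := hQn i
  rw [← e, hη2] at this
  exact this

/-- If `A` is a critical point, on its orbit under conjugation, of the distance to a tuple `Z`
close to `A`, then no other point of the orbit has the same distance to `Z`. -/
theorem unique_nearest (A : Fin r → CMat n) (hA : ∀ i, A i ∈ Matrix.unitaryGroup (Fin n) ℂ) :
    ∃ δ : ℝ, 0 < δ ∧ ∀ (Z : Fin r → CMat n) (h : UGrp n),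
      (∀ X : CMat n, star X = -X → ∑ i, ip (Z i) (X * A i - A i * X) = 0) →
      ∑ i, ip (Z i - A i) (Z i - A i) < δ →
      ∑ i, ip (Z i) ((h : CMat n) * A i * star (h : CMat n)) = ∑ i, ip (Z i) (A i) →
      ∀ i, (h : CMat n) * A i * star (h : CMat n) = A i := by
  obtain ⟨K, hKp, hK⟩ := orbit_expansion A hA
  set d : ℝ := 1 / (2 * (r * K + 1)) with hd
  have hdp : 0 < d := by positivity
  refine ⟨d ^ 2, by positivity, fun Z h hcrit hclose heq => ?_⟩
  obtain ⟨Xa, hXas, hQn⟩ := hK h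
  obtain ⟨B, hB⟩ : ∃ B : Fin r → CMat n, ∀ i, B i = (h : CMat n) * A i * star (h : CMat n) :=
    ⟨_, fun _ => rfl⟩
  simp only [← hB] at hQn heq ⊢
  set S : ℝ := ∑ i, ‖B i - A i‖ ^ 2 with hS
  have hS0 : 0 ≤ S := by positivity
  obtain ⟨Q, hQ⟩ : ∃ Q : Fin r → CMat n, ∀ i, Q i = (B i - A i) - (Xa * A i - A i * Xa) :=
    ⟨_, fun _ => rfl⟩
  simp only [← hQ] at hQn
  have hZd : ∀ i, ‖Z i - A i‖ ≤ d := by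
    intro i
    have h1 : ‖Z i - A i‖ ^ 2 ≤ d ^ 2 := by
      rw [← ip_self]
      refine le_trans (Finset.single_le_sum (f := fun i => ip (Z i - A i) (Z i - A i))
        (fun j _ => ?_) (Finset.mem_univ i)) hclose.le
      show 0 ≤ ip (Z j - A j) (Z j - A j)
      rw [ip_self]; positivity
    exact le_of_sq_le_sq h1 hdp.le
  -- both `A` and `B` being at the same distance from `Z`, the distance of `A` and `B` is a pairing
  -- to which the tangent direction does not contribute
  have hSQ : S = 2 * ∑ i, ip (Z i - A i) (Q i) := by
    have e1 : ∀ i, ‖B i - A i‖ ^ 2 = 2 * ip (A i) (A i) - 2 * ip (A i) (B i) := by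
      intro i
      have : ip (B i) (B i) = ip (A i) (A i) := by rw [hB]; exact ip_conj h (A i) (A i)
      rw [← ip_self, ip_sub_left, ip_sub_right, ip_sub_right, this, ip_comm (B i) (A i)]
      ring
    have e2 : ∀ i, ip (Z i - A i) (Q i) = (ip (Z i) (B i) - ip (Z i) (A i))
        - ip (Z i) (Xa * A i - A i * Xa) - ip (A i) (B i) + ip (A i) (A i) := by
      intro i
      rw [hQ, ip_sub_left, ip_sub_right (Z i) (B i - A i), ip_sub_right (Z i) (B i),
        ip_sub_right (A i) (B i - A i), ip_sub_right (A i) (B i), ip_commutator_self (hA i)]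
      ring
    rw [hS, Finset.sum_congr rfl fun i _ => e1 i, Finset.sum_congr rfl fun i _ => e2 i]
    rw [Finset.sum_add_distrib, Finset.sum_sub_distrib, Finset.sum_sub_distrib,
      Finset.sum_sub_distrib, Finset.sum_sub_distrib, heq, hcrit Xa hXas, ← Finset.mul_sum,
      ← Finset.mul_sum]
    ring
  have hle : S ≤ 2 * (r * (d * (K * S))) := by
    refine hSQ.le.trans (mul_le_mul_of_nonneg_left ?_ zero_le_two)
    calc ∑ i, ip (Z i - A i) (Q i) ≤ ∑ _i : Fin r, d * (K * S) :=
          Finset.sum_le_sum fun i _ => (ip_le _ _).trans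
            (mul_le_mul (hZd i) (hQn i) (norm_nonneg _) hdp.le)
      _ = _ := by simp
  have hS1 : S = 0 := by
    have h1 : 2 * (r * (d * (K * S))) = (r * K / (r * K + 1)) * S := by
      rw [hd]
      field_simp
    rw [h1] at hle
    have h2 : r * K / (r * K + 1) < 1 := by
      rw [div_lt_one (by positivity)]; linarith
    nlinarith
  intro i
  have h1 := (Finset.sum_eq_zero_iff_of_nonneg fun i _ => by positivity).1 hS1 i (Finset.mem_univ i)
  exact sub_eq_zero.1 (norm_eq_zero.1 (pow_eq_zero_iff two_ne_zero |>.1 h1))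

end estimate

/-! ### Nearest points are critical -/

section critical
variable {n r : ℕ}

/-- The functional `ip A` as a linear map. -/
def ipLin (A : CMat n) : CMat n →ₗ[ℝ] ℝ where
  toFun := ip A
  map_add' := ip_add_right A
  map_smul' c B := by simp [ip]

open scoped Matrix.Norms.L2Operator in
lemma hasDerivAt_ip_conj (Z A X : CMat n) (hX : star X = -X) :
    HasDerivAt (fun t : ℝ => ip Z (NormedSpace.exp (t • X) * A * star (NormedSpace.exp (t • X))))
      (ip Z (X * A - A * X)) 0 := by
  have e : ∀ t : ℝ, star (NormedSpace.exp (t • X)) = NormedSpace.exp (t • (-X)) := by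
    intro t
    rw [Matrix.star_eq_conjTranspose, ← Matrix.exp_conjTranspose, ← Matrix.star_eq_conjTranspose,
      star_smul, hX]
    simp
  simp only [e]
  have h1 : HasDerivAt (fun t : ℝ => NormedSpace.exp (t • X)) X 0 := by
    simpa using hasDerivAt_exp_smul_const (𝕂 := ℝ) X (0 : ℝ)
  have h2 : HasDerivAt (fun t : ℝ => NormedSpace.exp (t • (-X))) (-X) 0 := by
    simpa using hasDerivAt_exp_smul_const (𝕂 := ℝ) (-X) (0 : ℝ)
  have h3 := (h1.mul_const A).mul h2
  have h4 := ((ipLin Z).toContinuousLinearMap.hasFDerivAt).comp_hasDerivAt (0 : ℝ) h3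
  refine h4.congr_deriv ?_
  show ip Z _ = _
  congr 1
  simp [sub_eq_add_neg]

lemma exp_smul_skew_mem {X : CMat n} (hX : star X = -X) (t : ℝ) :
    NormedSpace.exp (t • X) ∈ Matrix.unitaryGroup (Fin n) ℂ := by
  have hc : (2 * Real.pi * Complex.I : ℂ) ≠ 0 := Complex.two_pi_I_ne_zero
  have hH : ((2 * Real.pi * Complex.I : ℂ)⁻¹ • X).IsHermitian := by
    show star _ = _
    rw [star_smul, hX, smul_neg, ← neg_smul]
    congr 1
    simp
  obtain ⟨V, h, hVh⟩ := exists_hDiag hH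
  have := ex_hDiag_mem_unitary V (fun j => t * h j)
  rw [hDiag_smul, ← hVh, ex] at this
  convert this using 2
  rw [smul_comm, smul_inv_smul₀ hc]
  ext; simp

/-- If `A` is the point of its orbit nearest to `Z`, then `Z` is orthogonal to the tangent space
of the orbit at `A`. -/
lemma critical_of_max (Z A : Fin r → CMat n)
    (hmax : ∀ h : UGrp n, ∑ i, ip (Z i) ((h : CMat n) * A i * star (h : CMat n))
      ≤ ∑ i, ip (Z i) (A i)) (X : CMat n) (hX : star X = -X) :
    ∑ i, ip (Z i) (X * A i - A i * X) = 0 := by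
  have h1 : HasDerivAt (fun t : ℝ => ∑ i, ip (Z i)
      (NormedSpace.exp (t • X) * A i * star (NormedSpace.exp (t • X))))
      (∑ i, ip (Z i) (X * A i - A i * X)) 0 :=
    HasDerivAt.fun_sum fun i _ => hasDerivAt_ip_conj (Z i) (A i) X hX
  refine IsLocalMax.hasDerivAt_eq_zero (Filter.Eventually.of_forall fun t => ?_) h1
  refine (hmax ⟨_, exp_smul_skew_mem hX t⟩).trans_eq ?_
  simp

end critical

/-! ### Tubes around conjugation orbits -/

section tube
variable {n r : ℕ}

/-- Simultaneous conjugation of a tuple by an element of `U(n)`. -/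
def cj (U : UGrp n) (z : Fin r → SUn n) : Fin r → SUn n := fun i => conjU U (z i)

lemma cj_apply (U : UGrp n) (z : Fin r → SUn n) (i : Fin r) : cj U z i = conjU U (z i) := rfl

lemma cj_mul (U V : UGrp n) (z : Fin r → SUn n) : cj (U * V) z = cj U (cj V z) :=
  funext fun i => conjU_mul U V (z i)

lemma cj_one (z : Fin r → SUn n) : cj 1 z = z := funext fun i => conjU_one (z i)

lemma cj_inv_cj (U : UGrp n) (z : Fin r → SUn n) : cj U⁻¹ (cj U z) = z := by
  rw [← cj_mul, inv_mul_cancel, cj_one]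

lemma cj_cj_inv (U : UGrp n) (z : Fin r → SUn n) : cj U (cj U⁻¹ z) = z := by
  rw [← cj_mul, mul_inv_cancel, cj_one]

lemma continuous_cj : Continuous (fun p : UGrp n × (Fin r → SUn n) => cj p.1 p.2) :=
  continuous_pi fun i =>
    continuous_conjU.comp (continuous_fst.prodMk ((continuous_apply i).comp continuous_snd))

attribute [irreducible] cj

/-- The inner product of two tuples of matrices. By `sum_ip_sub` the nearest points of an orbit are
the maxima of `phi`. -/
def phi (z w : Fin r → SUn n) : ℝ := ∑ i, ip (mat (z i)) (mat (w i))

lemma continuous_phi : Continuous (fun p : (Fin r → SUn n) × (Fin r → SUn n) => phi p.1 p.2) := by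
  unfold phi
  refine continuous_finsetSum _ fun i _ => ?_
  have h1 : Continuous fun p : (Fin r → SUn n) × (Fin r → SUn n) => mat (p.1 i) :=
    continuous_mat.comp ((continuous_apply i).comp continuous_fst)
  have h2 : Continuous fun p : (Fin r → SUn n) × (Fin r → SUn n) => mat (p.2 i) :=
    continuous_mat.comp ((continuous_apply i).comp continuous_snd)
  exact Complex.continuous_re.comp ((h1.matrix_conjTranspose.matrix_mul h2).matrix_trace)

lemma phi_cj (U : UGrp n) (z w : Fin r → SUn n) : phi (cj U z) (cj U w) = phi z w := by
  unfold phi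
  exact Finset.sum_congr rfl fun i _ => by rw [cj_apply, cj_apply, mat_conjU, mat_conjU, ip_conj]

lemma ip_mat_self (A : SUn n) : ip (mat A) (mat A) = n := by
  have h1 : star (mat A) * mat A = 1 := Matrix.mem_unitaryGroup_iff'.1 (mat_mem_unitary A)
  rw [ip, ← Matrix.star_eq_conjTranspose, h1]
  simp

lemma phi_self (z : Fin r → SUn n) : phi z z = r * n := by
  simp [phi, ip_mat_self]

/-- The squared distance of two tuples. -/
lemma sum_ip_sub (z w : Fin r → SUn n) :
    ∑ i, ip (mat (z i) - mat (w i)) (mat (z i) - mat (w i)) = 2 * (r * n - phi z w) := by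
  have : ∀ i, ip (mat (z i) - mat (w i)) (mat (z i) - mat (w i))
      = 2 * (n - ip (mat (z i)) (mat (w i))) := by
    intro i
    rw [ip_sub_left, ip_sub_right, ip_sub_right, ip_mat_self, ip_mat_self,
      ip_comm (mat (w i)) (mat (z i))]
    ring
  simp only [this]
  rw [← Finset.mul_sum, Finset.sum_sub_distrib]
  simp [phi]

open scoped Matrix.Norms.Frobenius in
lemma phi_le (z w : Fin r → SUn n) : phi z w ≤ r * n := by
  have h : 0 ≤ ∑ i, ip (mat (z i) - mat (w i)) (mat (z i) - mat (w i)) :=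
    Finset.sum_nonneg fun i _ => by rw [ip_self]; positivity
  rw [sum_ip_sub] at h
  linarith

attribute [irreducible] phi

/-- A point of `SU(n)^r` close to the orbit of `y` has only one nearest point on that orbit. -/
lemma unique_max (y : Fin r → SUn n) : ∃ δ : ℝ, 0 < δ ∧ ∀ (z : Fin r → SUn n) (g g' : UGrp n),
    (∀ v, phi z (cj v y) ≤ phi z (cj g y)) → phi z (cj g' y) = phi z (cj g y) →
      r * n - δ < phi z (cj g y) → cj g' y = cj g y := by
  obtain ⟨δ, hδ, H⟩ := unique_nearest (fun i => mat (y i)) fun i => mat_mem_unitary (y i)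
  refine ⟨δ / 2, by positivity, fun z g g' hmax heq hlt => ?_⟩
  have key : ∀ v : UGrp n, phi (cj g⁻¹ z) (cj v y) = phi z (cj (g * v) y) := by
    intro v
    rw [← phi_cj g, cj_cj_inv, cj_mul]
  have h1 := H (fun i => mat (cj g⁻¹ z i)) (g⁻¹ * g') ?_ ?_ ?_
  · have h2 : cj (g⁻¹ * g') y = y := funext fun i => by
      rw [cj_apply]; exact mat_injective ((mat_conjU _ _).trans (h1 i))
    rw [← cj_cj_inv g (cj g' y), ← cj_mul g⁻¹, h2]
  · refine critical_of_max _ _ fun h => ?_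
    have h2 : phi (cj g⁻¹ z) (cj h y) ≤ phi (cj g⁻¹ z) y := by
      have := hmax (g * h)
      rw [← key] at this
      refine this.trans_eq ?_
      conv_rhs => rw [← cj_one y, key, mul_one]
    simpa only [phi, cj_apply, mat_conjU] using h2
  · rw [sum_ip_sub]
    have : phi (cj g⁻¹ z) y = phi z (cj g y) := by
      conv_lhs => rw [← cj_one y, key, mul_one]
    rw [this]; linarith
  · have h2 : phi (cj g⁻¹ z) (cj (g⁻¹ * g') y) = phi (cj g⁻¹ z) y := by
      conv_rhs => rw [← cj_one y, key, mul_one]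
      rw [key, ← heq, mul_inv_cancel_left]
    simpa only [phi, cj_apply, mat_conjU] using h2

/-- Near the orbit of `y` there is a continuous equivariant retraction onto that orbit. -/
lemma exists_orbit_retraction (y : Fin r → SUn n) :
    ∃ (N : Set (Fin r → SUn n)) (p : (Fin r → SUn n) → (Fin r → SUn n)), IsOpen N ∧ y ∈ N ∧
      (∀ z ∈ N, ∀ U, cj U z ∈ N) ∧ ContinuousOn p N ∧ (∀ z, ∃ U, p z = cj U y) ∧
      (∀ z ∈ N, ∀ U, p (cj U z) = cj U (p z)) ∧ p y = y := by
  obtain ⟨δ, hδ, huniq⟩ := unique_max y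
  have hcy : Continuous fun U : UGrp n => cj U y :=
    continuous_cj.comp (continuous_id.prodMk continuous_const)
  have hex : ∀ z : Fin r → SUn n, ∃ g : UGrp n, ∀ v, phi z (cj v y) ≤ phi z (cj g y) := by
    intro z
    have hc : Continuous fun U : UGrp n => phi z (cj U y) :=
      continuous_phi.comp (continuous_const.prodMk hcy)
    obtain ⟨g, -, hg⟩ := isCompact_univ.exists_isMaxOn univ_nonempty hc.continuousOn
    exact ⟨g, fun v => isMaxOn_iff.1 hg v (mem_univ v)⟩
  choose g hg using hex
  have huniq' : ∀ z g', r * n - δ < phi z (cj (g z) y) → (∀ v, phi z (cj v y) ≤ phi z (cj g' y)) →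
      cj g' y = cj (g z) y := fun z g' hz hg' =>
    huniq z (g z) g' (hg z) (le_antisymm (hg z g') (hg' (g z))) hz
  have hNmem : ∀ z, r * n - δ < phi z (cj (g z) y) ↔ ∃ v, r * n - δ < phi z (cj v y) := fun z =>
    ⟨fun h => ⟨_, h⟩, fun ⟨v, hv⟩ => hv.trans_le (hg z v)⟩
  refine ⟨{z | r * n - δ < phi z (cj (g z) y)}, fun z => cj (g z) y, ?_, ?_, ?_, ?_,
    fun z => ⟨_, rfl⟩, ?_, ?_⟩
  · simp only [hNmem, ofPred_exists]
    refine isOpen_iUnion fun v => isOpen_lt continuous_const ?_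
    exact continuous_phi.comp (continuous_id.prodMk continuous_const)
  · rw [mem_ofPred_eq, hNmem]
    exact ⟨1, by rw [cj_one, phi_self]; linarith⟩
  · intro z hz U
    rw [mem_ofPred_eq, hNmem]
    exact ⟨U * g z, by rw [cj_mul, phi_cj]; exact hz⟩
  · intro z hz
    apply ContinuousAt.continuousWithinAt
    refine (isCompact_range hcy).le_nhds_of_unique_clusterPt
      (Filter.mem_map.2 (Filter.univ_mem' fun z => ⟨g z, rfl⟩)) ?_
    rintro _ ⟨g', rfl⟩ hcl
    refine huniq' z g' hz fun v => ?_
    by_contra! hlt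
    -- otherwise `cj v y` would stay better than all points near `cj g' y`
    have hopen : ∀ᶠ q : (Fin r → SUn n) × (Fin r → SUn n) in 𝓝 (z, cj g' y),
        phi q.1 q.2 < phi q.1 (cj v y) :=
      (continuous_phi.tendsto _).eventually_lt
        ((continuous_phi.comp (continuous_fst.prodMk continuous_const)).tendsto _) hlt
    rw [nhds_prod_eq] at hopen
    obtain ⟨P, hP, Q, hQ, hPQ⟩ := Filter.eventually_prod_iff.1 hopen
    have h1 := (mapClusterPt_iff_frequently.1 hcl) {w | Q w} hQ
    obtain ⟨z', hz', hz''⟩ := (h1.and_eventually hP).exists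
    exact (hPQ hz'' hz').not_ge (hg z' v)
  · intro z hz U
    rw [← cj_mul]
    symm
    refine huniq' _ _ ?_ fun v => ?_
    · rw [hNmem]
      exact ⟨U * g z, by rw [cj_mul, phi_cj]; exact hz⟩
    · rw [cj_mul, phi_cj, ← phi_cj U⁻¹, cj_inv_cj, ← cj_mul]
      exact hg z _
  · have := huniq' y 1 ?_ fun v => ?_
    · exact this.symm.trans (cj_one y)
    · rw [hNmem]
      exact ⟨1, by rw [cj_one, phi_self]; linarith⟩
    · rw [cj_one, phi_self]; exact phi_le _ _

/-- Every orbit has an invariant open neighbourhood with an equivariant deformation onto it. -/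
theorem exists_tube (hn : 0 < n) (y : Fin r → SUn n) :
    ∃ (D : Set (Fin r → SUn n)) (C : (Fin r → SUn n) × I → (Fin r → SUn n)), IsOpen D ∧ y ∈ D ∧
      (∀ z ∈ D, ∀ U, cj U z ∈ D) ∧ ContinuousOn C (D ×ˢ univ) ∧ (∀ z ∈ D, C (z, 0) = z) ∧
      (∀ z ∈ D, ∃ U, C (z, 1) = cj U y) ∧
      (∀ z ∈ D, ∀ U s, C (cj U z, s) = cj U (C (z, s))) ∧ ∀ s, C (y, s) = y := by
  obtain ⟨N, p, hNo, hyN, hNinv, hpc, hpO, hpe, hpy⟩ := exists_orbit_retraction y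
  have h1mem : (1 : SUn n) ∈ logSet n 0 := by
    have h := sx_const_mem hn 0
    rwa [sx_eq (A := 1) (by simp [ex, mat_one])] at h
  have hlg1 : ∀ A : SUn n, lgContr n 0 (A, 1) = 1 := by
    intro A
    rw [lgContr_one]
    exact sx_eq (by simp [ex, mat_one])
  have hlg : ∀ s : I, lgContr n 0 (1, s) = 1 := by
    intro s
    have : lg n 0 (1 : SUn n) = 0 := by
      refine lg_eq hn ⟨1, 0, by simp, by simp, ?_⟩ (by simp [ex, mat_one])
      have := hDiag_const (1 : UGrp n) 0
      rw [Complex.ofReal_zero, zero_smul] at this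
      exact this.symm
    refine sx_eq ?_
    simp [this, ex, mat_one]
  have hd : ∀ i, ContinuousOn (fun z : Fin r → SUn n => p z i * (z i)⁻¹) N := fun i =>
    ((continuous_apply i).comp_continuousOn hpc).mul (continuous_apply i).inv.continuousOn
  have hde : ∀ z ∈ N, ∀ U i, p (cj U z) i * (cj U z i)⁻¹ = conjU U (p z i * (z i)⁻¹) := by
    intro z hz U i
    rw [hpe z hz]
    apply mat_injective
    simp only [cj_apply, mat_mul, mat_inv, mat_conjU, star_mul, star_star]
    calc _ = (U : CMat n) * mat (p z i) * (star (U : CMat n) * (U : CMat n)) * star (mat (z i))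
          * star (U : CMat n) := by simp only [mul_assoc]
      _ = _ := by rw [U.star_mul, mul_one]; simp only [mul_assoc]
  refine ⟨{z | z ∈ N ∧ ∀ i, p z i * (z i)⁻¹ ∈ logSet n 0},
    fun q => fun i => lgContr n 0 (p q.1 i * (q.1 i)⁻¹, σ q.2) * q.1 i, ?_, ?_, ?_, ?_, ?_, ?_,
    ?_, ?_⟩
  · have : {z | z ∈ N ∧ ∀ i, p z i * (z i)⁻¹ ∈ logSet n 0}
        = N ∩ ⋂ i, (N ∩ (fun z => p z i * (z i)⁻¹) ⁻¹' logSet n 0) := by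
      ext z
      simp only [mem_ofPred_eq, mem_inter_iff, mem_iInter, mem_preimage]
      exact ⟨fun h => ⟨h.1, fun i => ⟨h.1, h.2 i⟩⟩, fun h => ⟨h.1, fun i => (h.2 i).2⟩⟩
    rw [this]
    exact hNo.inter (isOpen_iInter_of_finite fun i =>
      (hd i).isOpen_inter_preimage hNo (isOpen_logSet hn 0))
  · exact ⟨hyN, fun i => by rw [hpy, mul_inv_cancel]; exact h1mem⟩
  · exact fun z hz U => ⟨hNinv z hz.1 U, fun i => by
      rw [hde z hz.1]; exact conjU_mem_logSet U (hz.2 i)⟩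
  · refine continuousOn_pi.2 fun i => ?_
    refine ContinuousOn.mul ?_ ((continuous_apply i).comp continuous_fst).continuousOn
    refine (continuousOn_lgContr hn 0).comp (f := fun q : (Fin r → SUn n) × I =>
      (p q.1 i * (q.1 i)⁻¹, σ q.2)) (ContinuousOn.prodMk ?_ ?_) ?_
    · exact (hd i).comp continuousOn_fst fun q hq => hq.1.1
    · exact (continuous_symm.comp continuous_snd).continuousOn
    · exact fun q hq => ⟨hq.1.2 i, mem_univ _⟩
  · intro z hz
    funext i
    simp [hlg1]
  · intro z hz
    obtain ⟨U, hU⟩ := hpO z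
    refine ⟨U, ?_⟩
    funext i
    simp only [symm_one]
    rw [lgContr_zero (hz.2 i), inv_mul_cancel_right, hU]
  · intro z hz U s
    funext i
    simp only
    rw [hde z hz.1, lgContr_conjU hn U (hz.2 i)]
    apply mat_injective
    simp only [cj_apply, mat_mul, mat_conjU]
    calc _ = (U : CMat n) * mat (lgContr n 0 (p z i * (z i)⁻¹, σ s)) *
          (star (U : CMat n) * (U : CMat n)) * mat (z i) * star (U : CMat n) := by
            simp only [mul_assoc]
      _ = _ := by rw [U.star_mul, mul_one]; simp only [mul_assoc]
  · intro s
    funext i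
    simp [hpy, hlg]

end tube

/-! ### The quotient map onto the character variety -/

section quot
variable {n r : ℕ}

/-- A product of simply connected sets is simply connected. -/
lemma isSimplyConnected_univ_pi {ι : Type*} {X : ι → Type*} [∀ i, TopologicalSpace (X i)]
    {S : ∀ i, Set (X i)} (hS : ∀ i, IsSimplyConnected (S i)) :
    IsSimplyConnected (Set.univ.pi S) := by
  rw [isSimplyConnected_iff_exists_homotopy_refl_forall_mem]
  refine ⟨IsPathConnected.pi fun i => (hS i).isPathConnected, fun x p hp => ?_⟩
  have h : ∀ i, ∃ F : (p.map (continuous_apply i)).Homotopy (.refl (x i)), ∀ t, F t ∈ S i :=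
    fun i => (isSimplyConnected_iff_exists_homotopy_refl_forall_mem.1 (hS i)).2 _ _
      fun t => hp t i (mem_univ i)
  choose F hF using h
  exact ⟨ContinuousMap.HomotopyRel.pi F, fun t i _ => hF i t⟩

/-- The quotient map onto the character variety. -/
def qm (y : Fin r → SUn n) : CharVarSU n r := Quotient.mk _ y

lemma continuous_qm : Continuous (qm : (Fin r → SUn n) → CharVarSU n r) := continuous_quot_mk

lemma qm_surjective : (qm : (Fin r → SUn n) → CharVarSU n r).Surjective := Quotient.mk_surjective

lemma conjAct_smul_eq (g : ConjAct (SUn n)) (y : Fin r → SUn n) :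
    g • y = cj (ConjAct.ofConjAct g : SUn n).1 y := by
  funext i
  rw [cj_apply]
  apply mat_injective
  rw [mat_conjU]
  rfl

lemma isOpenMap_qm : IsOpenMap (qm : (Fin r → SUn n) → CharVarSU n r) := by
  have : ContinuousConstSMul (ConjAct (SUn n)) (Fin r → SUn n) := ⟨fun g => by
    simp only [conjAct_smul_eq]
    exact continuous_cj.comp (continuous_const.prodMk continuous_id)⟩
  exact isOpenMap_quotient_mk'_mul

/-- Conjugation by a unitary matrix is conjugation by a multiple of it of determinant `1`. -/
lemma exists_special (hn : 0 < n) (U : UGrp n) :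
    ∃ g : SUn n, ∀ A : SUn n, conjU g.1 A = conjU U A := by
  have hdet : ‖(U : CMat n).det‖ = 1 := by
    have h := congrArg Matrix.det U.mul_star
    rw [Matrix.det_mul, Matrix.star_eq_conjTranspose, Matrix.det_conjTranspose, Matrix.det_one] at h
    have h2 := congrArg norm h
    rw [norm_mul, norm_star, norm_one] at h2
    nlinarith [norm_nonneg (U : CMat n).det]
  obtain ⟨t, ht⟩ := exists_circ_eq hdet
  have hn' : (n : ℝ) ≠ 0 := by positivity
  have hpow : circ (-t / n) ^ n = circ (-t) := by
    unfold circ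
    rw [← Complex.exp_nat_mul]
    congr 1
    have : (n : ℂ) ≠ 0 := by exact_mod_cast hn'
    push_cast
    field_simp
  obtain ⟨w, hw⟩ : ∃ w, w = circ (-t / n) := ⟨_, rfl⟩
  have hww : w * star w = 1 := by rw [hw]; exact circ_mul_star _
  have h1 : w • (U : CMat n) ∈ Matrix.unitaryGroup (Fin n) ℂ := by
    rw [Matrix.mem_unitaryGroup_iff, star_smul, smul_mul_assoc, mul_smul_comm, smul_smul, hww,
      one_smul, U.mul_star]
  have h2 : (w • (U : CMat n)).det = 1 := by
    rw [Matrix.det_smul, Fintype.card_fin, hw, hpow, ← ht, ← circ_add]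
    simp [circ_zero]
  obtain ⟨g, hg⟩ := exists_mat_eq h1 h2
  refine ⟨g, fun A => mat_injective ?_⟩
  rw [mat_conjU, mat_conjU]
  have hg' : (g.1 : CMat n) = w • (U : CMat n) := hg
  rw [hg', star_smul, smul_mul_assoc, smul_mul_assoc, mul_smul_comm, smul_smul, hww, one_smul]

/-- Two tuples have the same class if and only if they are conjugate under `U(n)`: scalar matrices
act trivially, so `U(n)` and `SU(n)` have the same orbits. -/
lemma qm_eq_iff (hn : 0 < n) {y y' : Fin r → SUn n} : qm y = qm y' ↔ ∃ U : UGrp n, y = cj U y' := by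
  have h : qm y = qm y' ↔ ∃ g : ConjAct (SUn n), g • y' = y :=
    Quotient.eq.trans (MulAction.orbitRel_apply.trans MulAction.mem_orbit_iff)
  rw [h]
  constructor
  · rintro ⟨g, rfl⟩
    exact ⟨_, conjAct_smul_eq g y'⟩
  · rintro ⟨U, rfl⟩
    obtain ⟨g, hg⟩ := exists_special hn U
    refine ⟨ConjAct.toConjAct g, ?_⟩
    rw [conjAct_smul_eq]
    funext i
    rw [cj_apply, cj_apply]
    exact hg (y' i)

attribute [irreducible] qm

lemma qm_cj (hn : 0 < n) (U : UGrp n) (y : Fin r → SUn n) : qm (cj U y) = qm y :=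
  (qm_eq_iff hn).2 ⟨U, rfl⟩

instance : PathConnectedSpace (UGrp n) :=
  ⟨⟨1⟩, fun x y => (joined_one_UGrp x).symm.trans (joined_one_UGrp y)⟩

/-- The image in the character variety of an invariant open simply connected set of tuples is
simply connected: orbits are connected, and the tubes around them provide contractions of small
open sets of the quotient whose tracks lift. -/
theorem isSimplyConnected_image_qm (hn : 0 < n) {Z : Set (Fin r → SUn n)} (hZo : IsOpen Z)
    (hZ : IsSimplyConnected Z) (hinv : ∀ z ∈ Z, ∀ U, cj U z ∈ Z) :
    IsSimplyConnected (qm '' Z) := by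
  classical
  have := hZ.simplyConnectedSpace
  obtain ⟨q, hq⟩ : ∃ q : Z → qm '' Z, ∀ z, (q z : CharVarSU n r) = qm z :=
    ⟨fun z => ⟨qm z, z, z.2, rfl⟩, fun _ => rfl⟩
  have hqc : Continuous q := continuous_induced_rng.2
    ((continuous_qm.comp continuous_subtype_val).congr fun z => (hq z).symm)
  have hqs : q.Surjective := by
    rintro ⟨_, z, hz, rfl⟩
    exact ⟨⟨z, hz⟩, Subtype.ext (hq _)⟩
  have hqo : IsOpenMap q := by
    intro O hO
    have e : q '' O = Subtype.val ⁻¹' (qm '' (Subtype.val '' O)) := by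
      ext x
      constructor
      · rintro ⟨z, hz, rfl⟩
        exact ⟨z, ⟨z, hz, rfl⟩, (hq z).symm⟩
      · rintro ⟨_, ⟨z, hz, rfl⟩, hx⟩
        exact ⟨z, hz, Subtype.ext ((hq z).trans hx)⟩
    rw [e]
    exact (isOpenMap_qm _ (hZo.isOpenMap_subtype_val _ hO)).preimage continuous_subtype_val
  have hqe : ∀ z z' : Z, q z = q z' → ∃ U, z.1 = cj U z'.1 := by
    intro z z' h
    refine (qm_eq_iff hn).1 ?_
    rw [← hq, ← hq, h]
  refine simplyConnectedSpace_of_liftable_tracks hqc ?_ ?_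
  · intro x
    obtain ⟨z, rfl⟩ := hqs x
    have e : q ⁻¹' {q z} = range (fun U : UGrp n => (⟨cj U z, hinv z z.2 U⟩ : Z)) := by
      ext z'
      constructor
      · intro h
        obtain ⟨U, hU⟩ := hqe z' z h
        exact ⟨U, Subtype.ext hU.symm⟩
      · rintro ⟨U, rfl⟩
        refine Subtype.ext ?_
        rw [hq, hq]
        exact qm_cj hn U _
    rw [e]
    refine isPathConnected_range (Continuous.subtype_mk ?_ _)
    exact continuous_cj.comp (continuous_id.prodMk continuous_const)
  · intro v
    obtain ⟨y, rfl⟩ := hqs v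
    obtain ⟨D, C, hDo, hyD, hDinv, hCc, hC0, hC1, hCe, hCy⟩ := exists_tube hn y.1
    -- the part of the tube whose tracks stay in `Z`
    obtain ⟨G, hG⟩ : ∃ G : Set Z, ∀ z, z ∈ G ↔ z.1 ∈ D ∧ ∀ s, C (z.1, s) ∈ Z :=
      ⟨{z | z.1 ∈ D ∧ ∀ s, C (z.1, s) ∈ Z}, fun _ => Iff.rfl⟩
    have hGo : IsOpen G := by
      have h1 : IsOpen ((D ×ˢ (univ : Set I)) ∩ C ⁻¹' Z) :=
        hCc.isOpen_inter_preimage (hDo.prod isOpen_univ) hZo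
      have h2 : IsOpen {z : Fin r → SUn n | ∀ s : I, (z, s) ∈ (D ×ˢ (univ : Set I)) ∩ C ⁻¹' Z} := by
        rw [← isClosed_compl_iff]
        have h3 := isClosedMap_fst_of_compactSpace (X := Fin r → SUn n) (Y := I) _
          (isClosed_compl_iff.2 h1)
        convert h3 using 1
        ext z
        constructor
        · intro h
          obtain ⟨s, hs⟩ := not_forall.1 h
          exact ⟨(z, s), hs, rfl⟩
        · rintro ⟨⟨z, s⟩, hs, rfl⟩ h
          exact hs (h s)
      convert h2.preimage continuous_subtype_val using 1
      ext z
      rw [hG]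
      simp only [mem_preimage, mem_ofPred_eq, mem_inter_iff, mem_prod, mem_univ, and_true]
      exact ⟨fun h s => ⟨h.1, h.2 s⟩, fun h => ⟨(h 0).1, fun s => (h s).2⟩⟩
    have hyG : y ∈ G := (hG y).2 ⟨hyD, fun s => by rw [hCy]; exact y.2⟩
    obtain ⟨f, hf⟩ : ∃ f : Z × I → Z, ∀ z ∈ G, ∀ s, (f (z, s)).1 = C (z.1, s) :=
      ⟨fun p => if h : C (p.1.1, p.2) ∈ Z then ⟨_, h⟩ else p.1, fun z hz s => by
        simp only [dif_pos (((hG z).1 hz).2 s)]⟩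
    have hfc : ContinuousOn f (G ×ˢ univ) := by
      rw [IsEmbedding.subtypeVal.continuousOn_iff]
      have h1 : ContinuousOn (fun p : Z × I => C (p.1.1, p.2)) (G ×ˢ univ) :=
        hCc.comp (f := fun p : Z × I => ((p.1.1, p.2) : (Fin r → SUn n) × I))
          (Continuous.continuousOn (by fun_prop))
          fun p hp => ⟨((hG p.1).1 hp.1).1, mem_univ _⟩
      exact h1.congr fun p hp => hf p.1 hp.1 p.2
    obtain ⟨F, hFc, hF⟩ := exists_descend hqo hqs hGo (fun p => q (f p))
      (hqc.comp_continuousOn hfc) (by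
        intro z hz z' hz' h s
        obtain ⟨U, hU⟩ := hqe z z' h
        refine Subtype.ext ?_
        rw [hq, hq, hf z hz, hf z' hz', hU, hCe _ ((hG z').1 hz').1, qm_cj hn])
    refine ⟨q '' G, hqo _ hGo, ⟨y, hyG, rfl⟩, F, hFc, ?_, ?_, ?_⟩
    · rintro _ ⟨z, hz, rfl⟩
      rw [hF z hz]
      congr 1
      exact Subtype.ext ((hf z hz 0).trans (hC0 _ ((hG z).1 hz).1))
    · rintro _ ⟨z, hz, rfl⟩
      rw [hF z hz]
      refine Subtype.ext ?_
      rw [hq, hq, hf z hz]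
      obtain ⟨U, hU⟩ := hC1 _ ((hG z).1 hz).1
      rw [hU, qm_cj hn]
    · rintro _ ⟨z, hz, rfl⟩
      have h1 : Continuous fun s : I => f (z, s) := by
        rw [← continuousOn_univ]
        exact hfc.comp (f := fun s : I => ((z, s) : Z × I))
          (Continuous.continuousOn (by fun_prop)) fun s _ => ⟨hz, mem_univ _⟩
      exact ⟨⟨_, h1⟩, fun s => (hF z hz s).symm⟩

end quot

/-! ### The cover of the character variety -/

section final
variable {n r : ℕ}

/-- The open subset of the character variety of the classes of tuples whose `i`-th entry lies in
`logSet n (K i)`. -/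
def chart (K : Fin r → Fin n) : Set (CharVarSU n r) :=
  qm '' (Set.univ.pi fun i => logSet n (K i))

lemma cj_mem_pi {S : Fin r → Set (SUn n)} (hS : ∀ i, ∀ A ∈ S i, ∀ U, conjU U A ∈ S i) :
    ∀ z ∈ Set.univ.pi S, ∀ U, cj U z ∈ Set.univ.pi S := by
  intro z hz U i hi
  rw [cj_apply]
  exact hS i _ (hz i hi) U

/-- Taking images in the character variety commutes with intersecting products of
conjugation-invariant sets. -/
lemma image_qm_inter (hn : 0 < n) {S T : Fin r → Set (SUn n)}
    (hS : ∀ i, ∀ A ∈ S i, ∀ U, conjU U A ∈ S i) :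
    qm '' Set.univ.pi S ∩ qm '' Set.univ.pi T = qm '' Set.univ.pi fun i => S i ∩ T i := by
  rw [Set.pi_inter_distrib]
  apply Subset.antisymm
  · rintro _ ⟨⟨z, hz, rfl⟩, w, hw, e⟩
    obtain ⟨U, rfl⟩ := (qm_eq_iff hn).1 e
    exact ⟨_, ⟨cj_mem_pi hS z hz U, hw⟩, e⟩
  · exact image_inter_subset _ _ _

lemma conjU_mem_logSet' (k : ℤ) : ∀ A ∈ logSet n k, ∀ U, conjU U A ∈ logSet n k :=
  fun _ hA U => conjU_mem_logSet U hA

lemma conjU_mem_logSet_inter (k l : ℤ) :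
    ∀ A ∈ logSet n k ∩ logSet n l, ∀ U, conjU U A ∈ logSet n k ∩ logSet n l :=
  fun _ hA U => ⟨conjU_mem_logSet U hA.1, conjU_mem_logSet U hA.2⟩

lemma isOpen_pi_logSet (hn : 0 < n) (K : Fin r → Fin n) :
    IsOpen (Set.univ.pi fun i => logSet n (K i)) :=
  isOpen_set_pi finite_univ fun i _ => isOpen_logSet hn (K i)

lemma isOpen_chart (hn : 0 < n) (K : Fin r → Fin n) : IsOpen (chart K) :=
  isOpenMap_qm _ (isOpen_pi_logSet hn K)

lemma exists_mem_chart (hn : 0 < n) (x : CharVarSU n r) : ∃ K : Fin r → Fin n, x ∈ chart K := by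
  obtain ⟨z, rfl⟩ := qm_surjective x
  choose K hK using fun i => exists_mem_logSet hn (z i)
  exact ⟨K, z, fun i _ => hK i, rfl⟩

/-- Each chart is contractible, through the conjugation-equivariant linear contraction of
logarithms. -/
lemma contractibleSpace_chart (hn : 0 < n) (K : Fin r → Fin n) : ContractibleSpace (chart K) := by
  obtain ⟨g, hg⟩ : ∃ g : (Fin r → SUn n) × I → Fin r → SUn n,
      ∀ z s i, g (z, s) i = lgContr n (K i) (z i, s) := ⟨fun p i => lgContr n (K i) (p.1 i, p.2), fun _ _ _ => rfl⟩
  have hgm : ∀ z ∈ Set.univ.pi fun i => logSet n (K i), ∀ s,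
      g (z, s) ∈ Set.univ.pi fun i => logSet n (K i) := fun z hz s i hi => by
    rw [hg]
    exact lgContr_mem hn (hz i hi) s
  have hgc : ContinuousOn g ((Set.univ.pi fun i => logSet n (K i)) ×ˢ univ) := by
    refine continuousOn_pi.2 fun i => ?_
    refine ContinuousOn.congr ((continuousOn_lgContr hn (K i)).comp
      (f := fun p : (Fin r → SUn n) × I => (p.1 i, p.2)) (by fun_prop) ?_) fun p _ => hg p.1 p.2 i
    exact fun p hp => ⟨hp.1 i (mem_univ i), mem_univ _⟩
  obtain ⟨F, hFc, hF⟩ := exists_descend isOpenMap_qm qm_surjective (isOpen_pi_logSet hn K)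
    (fun p : (Fin r → SUn n) × I => (qm (g p) : CharVarSU n r))
    (continuous_qm.comp_continuousOn hgc) (by
      intro z hz z' hz' e t
      obtain ⟨U, rfl⟩ := (qm_eq_iff hn).1 e
      refine (qm_eq_iff hn).2 ⟨U, funext fun i => ?_⟩
      rw [cj_apply, hg, hg, cj_apply]
      exact lgContr_conjU hn U (hz' i (mem_univ i)) t)
  obtain ⟨b, hb⟩ : ∃ b : Fin r → SUn n, ∀ i, b i = sx ((((K i : ℤ) / n : ℝ) : ℂ) • (1 : CMat n)) :=
    ⟨fun i => _, fun _ => rfl⟩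
  have h1 : ∀ z, g (z, 1) = b := fun z => funext fun i => by rw [hg, hb, lgContr_one]
  refine contractibleSpace_of_contraction F hFc ?_ (b := qm b) ⟨b, fun i _ => ?_, rfl⟩ ?_ ?_
  · rintro _ ⟨z, hz, rfl⟩
    rw [hF z hz]
    exact congrArg qm (funext fun i => by rw [hg, lgContr_zero (hz i (mem_univ i))])
  · rw [hb]
    exact sx_const_mem hn _
  · rintro _ ⟨z, hz, rfl⟩
    rw [hF z hz]
    exact congrArg qm (h1 z)
  · rintro _ ⟨z, hz, rfl⟩ s
    rw [hF z hz]
    exact ⟨_, hgm z hz s, rfl⟩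

lemma isSimplyConnected_chart_inter (hn : 0 < n) (K L : Fin r → Fin n) :
    IsSimplyConnected (chart K ∩ chart L) := by
  unfold chart
  rw [image_qm_inter (T := fun i => logSet n (L i)) hn fun i => conjU_mem_logSet' (K i)]
  refine isSimplyConnected_image_qm hn ?_
    (isSimplyConnected_univ_pi fun i => isSimplyConnected_logSet_pair hn (K i) (L i))
    (cj_mem_pi fun i => conjU_mem_logSet_inter _ _)
  exact isOpen_set_pi finite_univ fun i _ =>
    (isOpen_logSet hn (K i)).inter (isOpen_logSet hn (L i))

lemma isPathConnected_chart_inter (hn : 0 < n) (K L M N : Fin r → Fin n) :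
    IsPathConnected ((chart K ∩ chart L) ∩ (chart M ∩ chart N)) := by
  unfold chart
  rw [image_qm_inter (T := fun i => logSet n (L i)) hn fun i => conjU_mem_logSet' (K i),
    image_qm_inter (T := fun i => logSet n (N i)) hn fun i => conjU_mem_logSet' (M i),
    image_qm_inter hn fun i => conjU_mem_logSet_inter (K i) (L i)]
  refine IsPathConnected.image (IsPathConnected.pi fun i => ?_) continuous_qm
  have h := isPathConnected_iInter_logSet hn {(K i : ℤ), (L i : ℤ), (M i : ℤ), (N i : ℤ)}
    ⟨_, Or.inl rfl⟩ (by
      rintro l (rfl | rfl | rfl | rfl) <;> constructor <;> grind)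
  convert h using 1
  ext A
  simp only [mem_inter_iff, mem_ofPred_eq, mem_insert_iff, mem_singleton_iff, forall_eq_or_imp, forall_eq]
  tauto

end final

/-- For every `n ≥ 1` and `r ≥ 1`, the second homotopy group of `X_r(SU(n))` is trivial. -/
theorem pi2_charVar_specialUnitary_trivial (n r : ℕ) (hn : 1 ≤ n) (hr : 1 ≤ r)
    (x : CharVarSU n r) :
    Subsingleton (HomotopyGroup (Fin 2) (CharVarSU n r) x) := by
  -- The class of the regular element with the `n`-th roots of unity as eigenvalues (up to a
  -- common factor) lies in every chart.
  have hy : ∀ K : Fin r → Fin n,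
      qm (fun _ => sx (hDiag (1 : UGrp n) (arith n 0))) ∈ chart (r := r) K := fun K =>
    ⟨_, fun i _ => sx_arith_mem hn (by positivity) (by have := (K i).2; omega) 1, rfl⟩
  have hc := fun K : Fin r → Fin n => contractibleSpace_chart hn K
  exact subsingleton_pi_two_of_cover chart (isOpen_chart hn) (exists_mem_chart hn) _ hy
    (fun K => fillsBall_of_contractible)
    (fun K L => fillsBall_plane_of_simplyConnected (isSimplyConnected_chart_inter hn K L))
    (fun K L M N => fillsBall_real_of_isPathConnected (isPathConnected_chart_inter hn K L M N))
    (fun K x hx => (isPathConnected_iff_pathConnectedSpace.2 inferInstance).joinedIn x hx _ (hy K)) x
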